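/- (Corollary 4.3, Porosity of the time-slices of the free boundary) There exists a constant δ ∈ (0,1], depending only on N, p, q, m and M, such that for every u ∈ 𝔍 and every t₀ ∈ (−(1/2)^θ, (1/2)^θ], the set E := {x ∈ ℝ^N : (x,t₀) ∈ ∂{u>0} ∩ closure(Q_{1/2})} is porous with porosity constant δ, i.e. there exists R > 0 such that for each x₀ ∈ E and each r ∈ (0,R) there is a point x′ ∈ ℝ^N with B_{δr}(x′) ⊆ B_r(x₀) \ E. -/

import Mathlib

noncomputable section

open Set Metric MeasureTheory

/-- Euclidean space `ℝ^N`. -/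
abbrev Euc (N : ℕ) := EuclideanSpace ℝ (Fin N)

/-- `s₊^q`: equals `(max s 0)^q` if `s > 0` and `0` otherwise. -/
def plusPowQ (q s : ℝ) : ℝ := if 0 < s then (max s 0) ^ q else 0

/-- The spatial gradient `∇u(x,t)`. -/
def spatialGrad (N : ℕ) (u : Euc N × ℝ → ℝ) (z : Euc N × ℝ) : Euc N :=
  gradient (fun y => u (y, z.2)) z.1

/-- The vector field `V(y,t) = ‖∇u(y,t)‖^(p-2) ∇u(y,t)`. -/
def pVF (N : ℕ) (p : ℝ) (u : Euc N × ℝ → ℝ) (z : Euc N × ℝ) : Euc N :=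
  ‖spatialGrad N u z‖ ^ (p - 2) • spatialGrad N u z

/-- The `p`-Laplacian `Δ_p u` realized as `trace (D_x V)` with `V = ‖∇u‖^(p-2)∇u`. -/
def pLap (N : ℕ) (p : ℝ) (u : Euc N × ℝ → ℝ) (z : Euc N × ℝ) : ℝ :=
  LinearMap.trace ℝ (Euc N) (fderiv ℝ (fun y => pVF N p u (y, z.2)) z.1).toLinearMap

/-- The time derivative `∂ₜ u`. -/
def timeDeriv (N : ℕ) (u : Euc N × ℝ → ℝ) (z : Euc N × ℝ) : ℝ :=
  deriv (fun t => u (z.1, t)) z.2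

/-- `u` is a classical solution of the dead-core equation `Δ_p u - ∂_t u = λ₀ u₊^q` on `D`:
`u` is continuous on `D` and at every point of `D` the spatial gradient and time derivative
exist, `V = ‖∇u‖^(p-2)∇u` is spatially differentiable, and the PDE holds. -/
def IsDCSol (N : ℕ) (p q : ℝ) (lam u : Euc N × ℝ → ℝ) (D : Set (Euc N × ℝ)) : Prop :=
  ContinuousOn u D ∧
  ∀ z ∈ D,
    DifferentiableAt ℝ (fun y => u (y, z.2)) z.1 ∧
    DifferentiableAt ℝ (fun t => u (z.1, t)) z.2 ∧
    DifferentiableAt ℝ (fun y => pVF N p u (y, z.2)) z.1 ∧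
    pLap N p u z - timeDeriv N u z = lam z * plusPowQ q (u z)

/-- The intrinsic scaling exponent `θ = p(1-q)/(p-1-q)`. -/
def thetaV (p q : ℝ) : ℝ := p * (1 - q) / (p - 1 - q)

/-- The intrinsic cylinder `Q_r(x₀,t₀) = B_r(x₀) × (t₀ - r^θ, t₀ + r^θ)`. -/
def cylQ (N : ℕ) (θ r : ℝ) (z0 : Euc N × ℝ) : Set (Euc N × ℝ) :=
  (ball z0.1 r) ×ˢ (Ioo (z0.2 - r ^ θ) (z0.2 + r ^ θ))

/-- The lower cylinder `Q_r⁻(x₀,t₀) = B_r(x₀) × (t₀ - r^θ, t₀]`. -/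
def cylQm (N : ℕ) (θ r : ℝ) (z0 : Euc N × ℝ) : Set (Euc N × ℝ) :=
  (ball z0.1 r) ×ˢ (Ioc (z0.2 - r ^ θ) z0.2)

/-- The upper cylinder `Q_r⁺(x₀,t₀) = B_r(x₀) × [t₀, t₀ + r^θ)`. -/
def cylQp (N : ℕ) (θ r : ℝ) (z0 : Euc N × ℝ) : Set (Euc N × ℝ) :=
  (ball z0.1 r) ×ˢ (Ico z0.2 (z0.2 + r ^ θ))

/-- The parabolic boundary of `Q_r⁻(x₀,t₀)`:
`(closure(B_r) × {t₀ - r^θ}) ∪ (∂B_r × (t₀ - r^θ, t₀])`. -/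
def parBdryQm (N : ℕ) (θ r : ℝ) (z0 : Euc N × ℝ) : Set (Euc N × ℝ) :=
  ((closedBall z0.1 r) ×ˢ ({z0.2 - r ^ θ} : Set ℝ)) ∪
    ((sphere z0.1 r) ×ˢ (Ioc (z0.2 - r ^ θ) z0.2))

/-- The class `𝔍 = 𝔍_p(λ₀,q)(Q₁)`: classical solutions `u` on `Q₁` (for some `λ₀` with
`m ≤ λ₀ ≤ M`) with `0 ≤ u ≤ 1`, `∂ₜ u ≥ 0` on `Q₁` and `u(0,0) = 0`. -/
def memJ (N : ℕ) (p q m M : ℝ) (u : Euc N × ℝ → ℝ) : Prop :=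
  ∃ lam : Euc N × ℝ → ℝ,
    (∀ z ∈ cylQ N (thetaV p q) 1 (0, 0), m ≤ lam z ∧ lam z ≤ M) ∧
    IsDCSol N p q lam u (cylQ N (thetaV p q) 1 (0, 0)) ∧
    (∀ z ∈ cylQ N (thetaV p q) 1 (0, 0), 0 ≤ u z ∧ u z ≤ 1) ∧
    (∀ z ∈ cylQ N (thetaV p q) 1 (0, 0), 0 ≤ timeDeriv N u z) ∧
    u (0, 0) = 0

/-- `S_r[u] = sup over Q_r⁻ of u` (cylinders centered at the origin). -/
def Sr (N : ℕ) (p q r : ℝ) (u : Euc N × ℝ → ℝ) : ℝ :=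
  sSup (u '' cylQm N (thetaV p q) r (0, 0))


open Filter Topology
open scoped RealInnerProductSpace

/-- first and second derivative data of a one-variable function at `0`. -/
def SecondData (g : ℝ → ℝ) (b c : ℝ) : Prop :=
  ∃ g' : ℝ → ℝ, (∀ᶠ s in 𝓝 (0 : ℝ), HasDerivAt g (g' s) s) ∧ g' 0 = b ∧ HasDerivAt g' c 0

theorem SecondData.hasDerivAt {g : ℝ → ℝ} {b c : ℝ} (h : SecondData g b c) :
    HasDerivAt g b 0 := by
  obtain ⟨g', h1, h2, h3⟩ := h
  have := h1.self_of_nhds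
  rwa [h2] at this

theorem SecondData.sub {g₁ g₂ : ℝ → ℝ} {b₁ c₁ b₂ c₂ : ℝ} (h₁ : SecondData g₁ b₁ c₁)
    (h₂ : SecondData g₂ b₂ c₂) : SecondData (fun s => g₁ s - g₂ s) (b₁ - b₂) (c₁ - c₂) := by
  obtain ⟨u, hu1, hu2, hu3⟩ := h₁
  obtain ⟨w, hw1, hw2, hw3⟩ := h₂
  refine ⟨fun s => u s - w s, ?_, by simp [hu2, hw2], hu3.sub hw3⟩
  filter_upwards [hu1, hw1] with s h1 h2 using h1.sub h2

theorem SecondData.neg {g₁ : ℝ → ℝ} {b₁ c₁ : ℝ} (h₁ : SecondData g₁ b₁ c₁) :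
    SecondData (fun s => - g₁ s) (- b₁) (- c₁) := by
  obtain ⟨u, hu1, hu2, hu3⟩ := h₁
  refine ⟨fun s => - u s, ?_, by simp [hu2], hu3.neg⟩
  filter_upwards [hu1] with s h1 using h1.neg

theorem SecondData.nonpos_of_max {g : ℝ → ℝ} {b c : ℝ} (h : SecondData g b c)
    (hm : IsLocalMax g 0) : b = 0 ∧ c ≤ 0 := by
  have hb : b = 0 := hm.hasDerivAt_eq_zero h.hasDerivAt
  refine ⟨hb, ?_⟩
  obtain ⟨g', h1, h2, h3⟩ := h
  by_contra hc
  push Not at hc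
  have e : deriv g =ᶠ[𝓝 0] g' := by
    filter_upwards [h1] with s hs using hs.deriv
  have hmin : IsLocalMin g 0 := by
    apply isLocalMin_of_deriv_deriv_pos
    · rw [e.deriv_eq, h3.deriv]; exact hc
    · rw [e.self_of_nhds, h2, hb]
    · exact h1.self_of_nhds.continuousAt
  have hconst : g =ᶠ[𝓝 0] fun _ => g 0 := by
    filter_upwards [hm, hmin] with s a b using le_antisymm a b
  have e2 : g' =ᶠ[𝓝 0] fun _ => 0 := by
    filter_upwards [e, hconst.eventuallyEq_nhds] with s hs hs2
    rw [← hs, hs2.deriv_eq]; simp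
  have := h3.congr_of_eventuallyEq e2.symm
  have := this.unique (hasDerivAt_const (0:ℝ) (0:ℝ))
  linarith

theorem SecondData.nonneg_of_min {g : ℝ → ℝ} {b c : ℝ} (h : SecondData g b c)
    (hm : IsLocalMin g 0) : b = 0 ∧ 0 ≤ c := by
  have := h.neg.nonpos_of_max hm.neg
  constructor <;> linarith [this.1, this.2]

/-- radial test functions along lines. -/
theorem SecondData.radial {E : Type*} [NormedAddCommGroup E] [InnerProductSpace ℝ E]
    (F F1 : ℝ → ℝ) (F2 : ℝ) (z ξ : E)
    (h1 : ∀ᶠ r in 𝓝 (‖z‖ ^ 2), HasDerivAt F (F1 r) r) (h2 : HasDerivAt F1 F2 (‖z‖ ^ 2)) :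
    SecondData (fun s : ℝ => F (‖z + s • ξ‖ ^ 2)) (2 * F1 (‖z‖ ^ 2) * ⟪z, ξ⟫)
      (4 * F2 * ⟪z, ξ⟫ ^ 2 + 2 * F1 (‖z‖ ^ 2) * ‖ξ‖ ^ 2) := by
  have hP : ∀ s : ℝ, ‖z + s • ξ‖ ^ 2 = ‖z‖ ^ 2 + 2 * s * ⟪z, ξ⟫ + s ^ 2 * ‖ξ‖ ^ 2 := by
    intro s
    rw [norm_add_sq_real, norm_smul, mul_pow, real_inner_smul_right, Real.norm_eq_abs, sq_abs]
    ring
  have hd : ∀ s : ℝ, HasDerivAt (fun s : ℝ => ‖z + s • ξ‖ ^ 2)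
      (2 * ⟪z, ξ⟫ + 2 * s * ‖ξ‖ ^ 2) s := by
    intro s
    simp_rw [hP]
    have a1 := ((hasDerivAt_id s).const_mul 2).mul_const ⟪z, ξ⟫
    have a2 := ((hasDerivAt_id s).pow 2).mul_const (‖ξ‖ ^ 2)
    have := (a1.const_add (‖z‖ ^ 2)).add a2
    refine (this.congr_deriv ?_).congr_of_eventuallyEq ?_
    · simp
    · exact Eventually.of_forall fun s => by simp
  have h0 : ‖z + (0:ℝ) • ξ‖ ^ 2 = ‖z‖ ^ 2 := by simp
  refine ⟨fun s => F1 (‖z + s • ξ‖ ^ 2) * (2 * ⟪z, ξ⟫ + 2 * s * ‖ξ‖ ^ 2), ?_, ?_, ?_⟩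
  · have hc : Tendsto (fun s : ℝ => ‖z + s • ξ‖ ^ 2) (𝓝 0) (𝓝 (‖z‖ ^ 2)) := by
      have := (hd 0).continuousAt.tendsto
      rwa [h0] at this
    filter_upwards [hc.eventually h1] with s hs
    exact hs.comp s (hd s)
  · simp; ring
  · have b1 : HasDerivAt (fun s : ℝ => F1 (‖z + s • ξ‖ ^ 2))
        (F2 * (2 * ⟪z, ξ⟫ + 2 * 0 * ‖ξ‖ ^ 2)) 0 := by
      rw [← h0] at h2
      exact h2.comp (0:ℝ) (hd 0)
    have b2 : HasDerivAt (fun s : ℝ => 2 * ⟪z, ξ⟫ + 2 * s * ‖ξ‖ ^ 2) (2 * ‖ξ‖ ^ 2) 0 := by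
      have := (((hasDerivAt_id (0:ℝ)).const_mul 2).mul_const (‖ξ‖ ^ 2)).const_add (2 * ⟪z, ξ⟫)
      simpa using this
    refine (b1.mul b2).congr_deriv ?_
    rw [h0]; ring

/-- Everything we need to know about a classical solution at one point. -/
structure GoodPt (N : ℕ) (p q m M : ℝ) (v : Euc N → ℝ → ℝ) (x : Euc N) (t : ℝ)
    (a : Euc N) (vt f : ℝ) : Prop where
  nonneg : 0 ≤ v x t
  vt_nonneg : 0 ≤ vt
  f_lo : m * plusPowQ q (v x t) ≤ f
  f_hi : f ≤ M * plusPowQ q (v x t)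
  ht : HasDerivAt (fun s => v x s) vt t
  hx : ∀ ξ : Euc N, HasDerivAt (fun s : ℝ => v (x + s • ξ) t) ⟪a, ξ⟫ 0
  nd : (a ≠ 0 ∨ p = 2) → ∃ X : Euc N →L[ℝ] Euc N,
    (∀ ξ : Euc N, SecondData (fun s : ℝ => v (x + s • ξ) t) ⟪a, ξ⟫ ⟪X ξ, ξ⟫) ∧
    ‖a‖ ^ (p - 2) * (LinearMap.trace ℝ (Euc N) X.toLinearMap +
      (p - 2) * ⟪X (‖a‖⁻¹ • a), ‖a‖⁻¹ • a⟫) = vt + f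
  dg : a = 0 → ∀ C κ : ℝ, p / (p - 1) < κ →
    (∀ᶠ y in 𝓝 x, v y t ≤ v x t + C * ‖y - x‖ ^ κ) → vt + f ≤ 0

theorem trace_le_of_quad {N : ℕ} (X : Euc N →L[ℝ] Euc N) (A B : ℝ) (z : Euc N)
    (h : ∀ ξ : Euc N, ⟪X ξ, ξ⟫ ≤ A * ⟪z, ξ⟫ ^ 2 + B * ‖ξ‖ ^ 2) :
    LinearMap.trace ℝ (Euc N) X.toLinearMap ≤ A * ‖z‖ ^ 2 + B * N := by
  have b := EuclideanSpace.basisFun (Fin N) ℝ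
  rw [LinearMap.trace_eq_sum_inner _ b]
  calc _ ≤ ∑ i, (A * ⟪z, b i⟫ ^ 2 + B * 1) := by
        refine Finset.sum_le_sum fun i _ => ?_
        have := h (b i)
        rw [b.norm_eq_one, one_pow] at this
        rw [real_inner_comm]
        exact this
    _ = _ := by
        rw [Finset.sum_add_distrib, ← Finset.mul_sum]
        have := b.sum_sq_norm_inner_left z
        simp only [Real.norm_eq_abs, sq_abs] at this
        rw [this]
        simp [mul_comm]

theorem touch_above {N : ℕ} {p q m M : ℝ} (hp : 2 ≤ p) {v : Euc N → ℝ → ℝ} {x : Euc N} {t : ℝ}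
    {a : Euc N} {vt f : ℝ} (hg : GoodPt N p q m M v x t a vt f) (c : Euc N)
    (F F1 : ℝ → ℝ) (F2 : ℝ)
    (h1 : ∀ᶠ r in 𝓝 (‖x - c‖ ^ 2), HasDerivAt F (F1 r) r) (h2 : HasDerivAt F1 F2 (‖x - c‖ ^ 2))
    (hmax : IsLocalMax (fun y => v y t - F (‖y - c‖ ^ 2)) x) :
    a = (2 * F1 (‖x - c‖ ^ 2)) • (x - c) ∧ ((a ≠ 0 ∨ p = 2) →
      vt + f ≤ ‖a‖ ^ (p - 2) * (4 * F2 * ‖x - c‖ ^ 2 * (p - 1)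
        + 2 * F1 (‖x - c‖ ^ 2) * (N + p - 2))) := by
  have hrad := fun ξ : Euc N => SecondData.radial F F1 F2 (x - c) ξ h1 h2
  have hmax1 : ∀ ξ : Euc N, IsLocalMax
      (fun s : ℝ => v (x + s • ξ) t - F (‖x - c + s • ξ‖ ^ 2)) 0 := by
    intro ξ
    have hc : Tendsto (fun s : ℝ => x + s • ξ) (𝓝 0) (𝓝 x) := by
      have : Continuous (fun s : ℝ => x + s • ξ) := by fun_prop
      simpa using this.tendsto 0
    have := hc.eventually hmax
    filter_upwards [this] with s hs
    simpa [add_sub_right_comm] using hs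
  have ha : a = (2 * F1 (‖x - c‖ ^ 2)) • (x - c) := by
    apply ext_inner_right ℝ
    intro ξ
    have := (hmax1 ξ).hasDerivAt_eq_zero ((hg.hx ξ).sub (hrad ξ).hasDerivAt)
    rw [real_inner_smul_left]; linarith
  refine ⟨ha, fun hnd => ?_⟩
  obtain ⟨X, hX, hE⟩ := hg.nd hnd
  rw [← hE]
  apply mul_le_mul_of_nonneg_left _ (Real.rpow_nonneg (norm_nonneg _) _)
  have hq : ∀ ξ : Euc N, ⟪X ξ, ξ⟫ ≤ (4 * F2) * ⟪x - c, ξ⟫ ^ 2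
      + (2 * F1 (‖x - c‖ ^ 2)) * ‖ξ‖ ^ 2 := by
    intro ξ
    have := (((hX ξ).sub (hrad ξ)).nonpos_of_max (hmax1 ξ)).2
    linarith
  have htr := trace_le_of_quad X _ _ _ hq
  have h3 : (p - 2) * ⟪X (‖a‖⁻¹ • a), ‖a‖⁻¹ • a⟫ ≤
      (p - 2) * (4 * F2 * ‖x - c‖ ^ 2 + 2 * F1 (‖x - c‖ ^ 2)) := by
    rcases hnd with h | h
    · apply mul_le_mul_of_nonneg_left _ (by linarith)
      have hh := hq (‖a‖⁻¹ • a)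
      have hn : ‖‖a‖⁻¹ • a‖ = 1 := by
        rw [norm_smul, norm_inv, norm_norm, inv_mul_cancel₀ (norm_ne_zero_iff.2 h)]
      rw [hn] at hh
      have hi : ⟪x - c, ‖a‖⁻¹ • a⟫ ^ 2 = ‖x - c‖ ^ 2 := by
        have hna : ‖a‖ ≠ 0 := norm_ne_zero_iff.2 h
        have e1 : ⟪x - c, a⟫ = 2 * F1 (‖x - c‖ ^ 2) * ‖x - c‖ ^ 2 := by
          conv_lhs => rw [ha]
          rw [real_inner_smul_right, real_inner_self_eq_norm_sq]
        have e2 : ‖a‖ ^ 2 = (2 * F1 (‖x - c‖ ^ 2)) ^ 2 * ‖x - c‖ ^ 2 := by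
          conv_lhs => rw [ha]
          rw [norm_smul, mul_pow, Real.norm_eq_abs, sq_abs]
        rw [real_inner_smul_right, mul_pow, inv_pow, e1]
        have : ‖a‖ ^ 2 ≠ 0 := pow_ne_zero _ hna
        field_simp
        rw [e2]; ring
      rw [hi] at hh
      linarith
    · rw [h]; simp
  linarith

theorem touch_below {N : ℕ} {p q m M : ℝ} (hp : 2 ≤ p) {v : Euc N → ℝ → ℝ} {x : Euc N} {t : ℝ}
    {a : Euc N} {vt f : ℝ} (hg : GoodPt N p q m M v x t a vt f) (c : Euc N)
    (F F1 : ℝ → ℝ) (F2 : ℝ)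
    (h1 : ∀ᶠ r in 𝓝 (‖x - c‖ ^ 2), HasDerivAt F (F1 r) r) (h2 : HasDerivAt F1 F2 (‖x - c‖ ^ 2))
    (hmin : IsLocalMin (fun y => v y t - F (‖y - c‖ ^ 2)) x) :
    a = (2 * F1 (‖x - c‖ ^ 2)) • (x - c) ∧ ((a ≠ 0 ∨ p = 2) →
      ‖a‖ ^ (p - 2) * (4 * F2 * ‖x - c‖ ^ 2 * (p - 1)
        + 2 * F1 (‖x - c‖ ^ 2) * (N + p - 2)) ≤ vt + f) := by
  have hrad := fun ξ : Euc N => SecondData.radial F F1 F2 (x - c) ξ h1 h2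
  have hmin1 : ∀ ξ : Euc N, IsLocalMin
      (fun s : ℝ => v (x + s • ξ) t - F (‖x - c + s • ξ‖ ^ 2)) 0 := by
    intro ξ
    have hc : Tendsto (fun s : ℝ => x + s • ξ) (𝓝 0) (𝓝 x) := by
      have : Continuous (fun s : ℝ => x + s • ξ) := by fun_prop
      simpa using this.tendsto 0
    have := hc.eventually hmin
    filter_upwards [this] with s hs
    simpa [add_sub_right_comm] using hs
  have ha : a = (2 * F1 (‖x - c‖ ^ 2)) • (x - c) := by
    apply ext_inner_right ℝ
    intro ξ
    have := (hmin1 ξ).hasDerivAt_eq_zero ((hg.hx ξ).sub (hrad ξ).hasDerivAt)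
    rw [real_inner_smul_left]; linarith
  refine ⟨ha, fun hnd => ?_⟩
  obtain ⟨X, hX, hE⟩ := hg.nd hnd
  rw [← hE]
  apply mul_le_mul_of_nonneg_left _ (Real.rpow_nonneg (norm_nonneg _) _)
  have hq : ∀ ξ : Euc N, (4 * F2) * ⟪x - c, ξ⟫ ^ 2
      + (2 * F1 (‖x - c‖ ^ 2)) * ‖ξ‖ ^ 2 ≤ ⟪X ξ, ξ⟫ := by
    intro ξ
    have := (((hX ξ).sub (hrad ξ)).nonneg_of_min (hmin1 ξ)).2
    linarith
  have htr := trace_le_of_quad (-X) (-(4 * F2)) (-(2 * F1 (‖x - c‖ ^ 2))) (x - c) (by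
    intro ξ
    have := hq ξ
    simp only [ContinuousLinearMap.neg_apply, inner_neg_left]
    linarith)
  have htr2 : LinearMap.trace ℝ (Euc N) (-X).toLinearMap
      = - LinearMap.trace ℝ (Euc N) X.toLinearMap := by
    rw [← map_neg]; rfl
  rw [htr2] at htr
  have h3 : (p - 2) * (4 * F2 * ‖x - c‖ ^ 2 + 2 * F1 (‖x - c‖ ^ 2)) ≤
      (p - 2) * ⟪X (‖a‖⁻¹ • a), ‖a‖⁻¹ • a⟫ := by
    rcases hnd with h | h
    · apply mul_le_mul_of_nonneg_left _ (by linarith)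
      have hh := hq (‖a‖⁻¹ • a)
      have hn : ‖‖a‖⁻¹ • a‖ = 1 := by
        rw [norm_smul, norm_inv, norm_norm, inv_mul_cancel₀ (norm_ne_zero_iff.2 h)]
      rw [hn] at hh
      have hi : ⟪x - c, ‖a‖⁻¹ • a⟫ ^ 2 = ‖x - c‖ ^ 2 := by
        have hna : ‖a‖ ≠ 0 := norm_ne_zero_iff.2 h
        have e1 : ⟪x - c, a⟫ = 2 * F1 (‖x - c‖ ^ 2) * ‖x - c‖ ^ 2 := by
          conv_lhs => rw [ha]
          rw [real_inner_smul_right, real_inner_self_eq_norm_sq]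
        have e2 : ‖a‖ ^ 2 = (2 * F1 (‖x - c‖ ^ 2)) ^ 2 * ‖x - c‖ ^ 2 := by
          conv_lhs => rw [ha]
          rw [norm_smul, mul_pow, Real.norm_eq_abs, sq_abs]
        rw [real_inner_smul_right, mul_pow, inv_pow, e1]
        have : ‖a‖ ^ 2 ≠ 0 := pow_ne_zero _ hna
        field_simp
        rw [e2]; ring
      rw [hi] at hh
      linarith
    · rw [h]; simp
  linarith

theorem deriv_nonneg_of_left_max {g : ℝ → ℝ} {c t s0 : ℝ} (h : HasDerivAt g c t) (hs : s0 < t)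
    (hm : ∀ s ∈ Ioo s0 t, g s ≤ g t) : 0 ≤ c := by
  have h1 := (hasDerivAt_iff_tendsto_slope_left_right.1 h).1
  refine ge_of_tendsto h1 ?_
  have : Ioo s0 t ∈ 𝓝[<] t := Ioo_mem_nhdsLT hs
  filter_upwards [this] with s hs2
  rw [slope_def_field]
  exact div_nonneg_of_nonpos (by linarith [hm s hs2]) (by linarith [hs2.2])

theorem plusPowQ_le {q s K : ℝ} (hq : 0 ≤ q) (hs : s ≤ K) (hK : 0 < K) : plusPowQ q s ≤ K ^ q := by
  unfold plusPowQ
  split_ifs with h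
  · rw [max_eq_left h.le]; exact Real.rpow_le_rpow h.le hs hq
  · exact Real.rpow_nonneg hK.le _

theorem plusPowQ_pos {q s : ℝ} (hs : 0 < s) : 0 < plusPowQ q s := by
  unfold plusPowQ
  rw [if_pos hs, max_eq_left hs.le]; exact Real.rpow_pos_of_pos hs _

theorem plusPowQ_eq {q s : ℝ} (hs : 0 < s) : plusPowQ q s = s ^ q := by
  unfold plusPowQ
  rw [if_pos hs, max_eq_left hs.le]

theorem plusPowQ_nonneg {q s : ℝ} : 0 ≤ plusPowQ q s := by
  unfold plusPowQ
  split_ifs with h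
  · rw [max_eq_left h.le]; exact Real.rpow_nonneg h.le _
  · exact le_rfl


theorem two_point_algebra {N : ℕ} {p : ℝ} (hp : 2 ≤ p) (X Y : Euc N →L[ℝ] Euc N) (n e : Euc N)
    (hn : ‖n‖ = 1) (he : ‖e‖ = 1) (Q κ : ℝ) (hQ : 0 < Q)
    (h : ∀ ξ ζ : Euc N, ⟪X ξ, ξ⟫ - ⟪Y ζ, ζ⟫ ≤
      Q * (‖ξ - ζ‖ ^ 2 - 3 / 2 * ⟪n, ξ - ζ⟫ ^ 2) + 2 * κ * ‖ξ‖ ^ 2)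
    (hc : 1 / 3 ≤ ⟪e, n⟫) :
    LinearMap.trace ℝ (Euc N) X.toLinearMap + (p - 2) * ⟪X e, e⟫ ≤
      LinearMap.trace ℝ (Euc N) Y.toLinearMap + (p - 2) * ⟪Y n, n⟫ - 2 * Q
        + 2 * κ * (N + p - 2) := by
  have h1 : ⟪X e, e⟫ - ⟪Y n, n⟫ ≤ 2 * κ := by
    have := h e (-n)
    have e1 : ‖e - -n‖ ^ 2 = 2 + 2 * ⟪e, n⟫ := by
      rw [sub_neg_eq_add, norm_add_sq_real, hn, he]; ring
    have e2 : ⟪n, e - -n⟫ = ⟪e, n⟫ + 1 := by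
      rw [sub_neg_eq_add, inner_add_right, real_inner_self_eq_norm_sq, hn, real_inner_comm]; ring
    rw [e1, e2, he, map_neg, inner_neg_neg] at this
    nlinarith [mul_nonneg hQ.le (mul_nonneg (by linarith : 0 ≤ 1 + ⟪e, n⟫)
      (by linarith : 0 ≤ 3 * ⟪e, n⟫ - 1))]
  have h2 : LinearMap.trace ℝ (Euc N) X.toLinearMap ≤
      LinearMap.trace ℝ (Euc N) Y.toLinearMap - 2 * Q + 2 * κ * N := by
    let b := EuclideanSpace.basisFun (Fin N) ℝ
    let R := (Submodule.span ℝ {n})ᗮ.reflection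
    let b' := b.map R
    rw [LinearMap.trace_eq_sum_inner X.toLinearMap b, LinearMap.trace_eq_sum_inner Y.toLinearMap b']
    have hR : ∀ i, b i - b' i = (2 * ⟪n, b i⟫) • n := by
      intro i
      change b i - R (b i) = _
      have : R (b i) = b i - (2 * ⟪n, b i⟫) • n := by
        simp only [R]
        rw [Submodule.reflection_orthogonal_apply, Submodule.reflection_singleton_apply, hn]
        simp only [RCLike.ofReal_real_eq_id, id]
        rw [one_pow, div_one, two_smul, two_mul, add_smul]
        abel
      rw [this]; abel
    have hs : ∑ i, ⟪n, b i⟫ ^ 2 = 1 := by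
      have := b.sum_sq_norm_inner_left n
      simp only [Real.norm_eq_abs, sq_abs] at this
      rw [this, hn]; norm_num
    calc _ ≤ ∑ i, (⟪b' i, Y (b' i)⟫ - 2 * Q * ⟪n, b i⟫ ^ 2 + 2 * κ * 1) := by
          refine Finset.sum_le_sum fun i _ => ?_
          have := h (b i) (b' i)
          rw [hR, norm_smul, inner_smul_right, real_inner_self_eq_norm_sq, hn, b.norm_eq_one,
            mul_one, Real.norm_eq_abs, sq_abs] at this
          simp only [ContinuousLinearMap.coe_coe]
          rw [real_inner_comm, real_inner_comm (Y (b' i))]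
          linarith
      _ = _ := by
          rw [Finset.sum_add_distrib, Finset.sum_sub_distrib, ← Finset.mul_sum, hs]
          simp
          ring
  nlinarith [mul_le_mul_of_nonneg_left h1 (by linarith : 0 ≤ p - 2)]

theorem two_point_max {N : ℕ} {p q m M : ℝ} (hp : 2 ≤ p) (hm : 0 ≤ m) {v : Euc N → ℝ → ℝ}
    {x y c : Euc N}
    {t1 t2 : ℝ} {a b : Euc N} {vt f wt g : ℝ} (hgx : GoodPt N p q m M v x t1 a vt f)
    (hgy : GoodPt N p q m M v y t2 b wt g) (A κ Q : ℝ) (hA : 0 < A) (hκ : 0 ≤ κ) (hxy : x ≠ y)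
    (hQ : Q = A / 2 * (‖x - y‖ ^ 2) ^ (-(3 / 4) : ℝ))
    (hsm : 2 * κ * ‖x - c‖ ≤ Q * ‖x - y‖ / 2)
    (hmax : ∀ ξ ζ : Euc N, IsLocalMax (fun s : ℝ => v (x + s • ξ) t1 - v (y + s • ζ) t2
      - A * (‖x - y + s • (ξ - ζ)‖ ^ 2) ^ (1 / 4 : ℝ) - κ * ‖x - c + s • ξ‖ ^ 2) 0) :
    2 * Q ≤ 2 * κ * (N + p - 2) + (Q * ‖x - y‖) ^ (2 - p) * (wt + g) := by
  set z := x - y with hz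
  have hz0 : z ≠ 0 := sub_ne_zero.2 hxy
  have hs : 0 < ‖z‖ := norm_pos_iff.2 hz0
  have hs2 : 0 < ‖z‖ ^ 2 := by positivity
  have hQ0 : 0 < Q := by rw [hQ]; positivity
  let F : ℝ → ℝ := fun r => A * r ^ (1 / 4 : ℝ)
  let F1 : ℝ → ℝ := fun r => A / 4 * r ^ (-(3 / 4) : ℝ)
  have hF : ∀ᶠ r in 𝓝 (‖z‖ ^ 2), HasDerivAt F (F1 r) r := by
    filter_upwards [lt_mem_nhds hs2] with r hr
    have := (Real.hasDerivAt_rpow_const (p := 1 / 4) (Or.inl hr.ne')).const_mul A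
    refine this.congr_deriv ?_
    simp only [F1]; norm_num; ring
  have hF1 : HasDerivAt F1 (-(3 / 8) * Q / ‖z‖ ^ 2) (‖z‖ ^ 2) := by
    have := (Real.hasDerivAt_rpow_const (p := -(3 / 4)) (Or.inl hs2.ne')).const_mul (A / 4)
    refine this.congr_deriv ?_
    rw [hQ, Real.rpow_sub_one hs2.ne']; field_simp; norm_num
  have hF1z : 2 * F1 (‖z‖ ^ 2) = Q := by simp only [F1]; rw [hQ]; ring
  let G : ℝ → ℝ := fun r => κ * r
  have hG : ∀ᶠ r in 𝓝 (‖x - c‖ ^ 2), HasDerivAt G ((fun _ => κ) r) r :=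
    Eventually.of_forall fun r => by simpa using (hasDerivAt_id r).const_mul κ
  have hG1 : HasDerivAt (fun _ : ℝ => κ) 0 (‖x - c‖ ^ 2) := hasDerivAt_const _ _
  have hrF := fun ξ : Euc N => SecondData.radial F F1 _ z ξ hF hF1
  have hrG := fun ξ : Euc N => SecondData.radial G (fun _ => κ) _ (x - c) ξ hG hG1
  have first : ∀ ξ ζ : Euc N, ⟪a, ξ⟫ - ⟪b, ζ⟫ - Q * ⟪z, ξ - ζ⟫ - 2 * κ * ⟪x - c, ξ⟫ = 0 := by
    intro ξ ζ
    have := (hmax ξ ζ).hasDerivAt_eq_zero ((((hgx.hx ξ).sub (hgy.hx ζ)).sub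
      (hrF (ξ - ζ)).hasDerivAt).sub (hrG ξ).hasDerivAt)
    rw [hF1z] at this; exact this
  have ha : a = Q • z + (2 * κ) • (x - c) := by
    apply ext_inner_right ℝ
    intro ξ
    have := first ξ 0
    simp only [inner_zero_right, sub_zero] at this
    rw [inner_add_left, real_inner_smul_left, real_inner_smul_left]; linarith
  have hb : b = Q • z := by
    apply ext_inner_right ℝ
    intro ξ
    have := first 0 ξ
    simp only [inner_zero_right, zero_sub, inner_neg_right] at this
    rw [real_inner_smul_left]; linarith
  set P := Q * ‖z‖ with hP
  have hP0 : 0 < P := by positivity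
  have hbn : ‖b‖ = P := by rw [hb, norm_smul, Real.norm_of_nonneg hQ0.le]
  have hb0 : b ≠ 0 := norm_pos_iff.1 (by rw [hbn]; exact hP0)
  set n : Euc N := ‖b‖⁻¹ • b with hn
  have hnn : ‖n‖ = 1 := by
    rw [hn, norm_smul, norm_inv, norm_norm, inv_mul_cancel₀ (norm_ne_zero_iff.2 hb0)]
  have hnz : z = ‖z‖ • n := by
    rw [hn, hbn, hb, smul_smul, smul_smul, hP]
    have : ‖z‖ * (Q * ‖z‖)⁻¹ * Q = 1 := by field_simp
    rw [this, one_smul]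
  have hbP : b = P • n := by rw [hn, hbn, smul_smul, mul_inv_cancel₀ hP0.ne', one_smul]
  have hw : ‖(2 * κ) • (x - c)‖ ≤ P / 2 := by
    rw [norm_smul, Real.norm_of_nonneg (by positivity)]; exact hsm
  have hab : a = P • n + (2 * κ) • (x - c) := by rw [ha, ← hb, hbP]
  have han : P / 2 ≤ ⟪a, n⟫ := by
    rw [hab, inner_add_left, real_inner_smul_left, real_inner_self_eq_norm_sq, hnn]
    have := abs_real_inner_le_norm ((2 * κ) • (x - c)) n
    rw [hnn] at this
    have := (abs_le.1 this).1
    linarith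
  have hanorm : ‖a‖ ≤ 3 / 2 * P := by
    rw [hab]
    refine (norm_add_le _ _).trans ?_
    rw [norm_smul, hnn, Real.norm_of_nonneg hP0.le]; linarith
  have ha0 : a ≠ 0 := by
    rintro h
    rw [h, inner_zero_left] at han
    linarith
  have hapos : 0 < ‖a‖ := norm_pos_iff.2 ha0
  obtain ⟨X, hX, hEX⟩ := hgx.nd (Or.inl ha0)
  obtain ⟨Y, hY, hEY⟩ := hgy.nd (Or.inl hb0)
  have hq : ∀ ξ ζ : Euc N, ⟪X ξ, ξ⟫ - ⟪Y ζ, ζ⟫ ≤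
      Q * (‖ξ - ζ‖ ^ 2 - 3 / 2 * ⟪n, ξ - ζ⟫ ^ 2) + 2 * κ * ‖ξ‖ ^ 2 := by
    intro ξ ζ
    have := (((((hX ξ).sub (hY ζ)).sub (hrF (ξ - ζ))).sub (hrG ξ)).nonpos_of_max (hmax ξ ζ)).2
    have e1 : ⟪z, ξ - ζ⟫ = ‖z‖ * ⟪n, ξ - ζ⟫ := by
      conv_lhs => rw [hnz]
      rw [real_inner_smul_left]
    rw [hF1z, e1] at this
    have e2 : 4 * (-(3 / 8) * Q / ‖z‖ ^ 2) * (‖z‖ * ⟪n, ξ - ζ⟫) ^ 2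
        = - (3 / 2) * Q * ⟪n, ξ - ζ⟫ ^ 2 := by
      field_simp; norm_num; ring
    rw [e2] at this
    linarith
  have hen : ‖‖a‖⁻¹ • a‖ = 1 := by
    rw [norm_smul, norm_inv, norm_norm, inv_mul_cancel₀ hapos.ne']
  have hc : 1 / 3 ≤ ⟪‖a‖⁻¹ • a, n⟫ := by
    rw [real_inner_smul_left, inv_mul_eq_div, le_div_iff₀ hapos]
    linarith
  have key := two_point_algebra hp X Y n _ hnn hen Q κ hQ0 hq hc
  have hf : 0 ≤ f := (mul_nonneg hm plusPowQ_nonneg).trans hgx.f_lo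
  have hGa : 0 ≤ LinearMap.trace ℝ (Euc N) X.toLinearMap +
      (p - 2) * ⟪X (‖a‖⁻¹ • a), ‖a‖⁻¹ • a⟫ := by
    have : 0 < ‖a‖ ^ (p - 2) := Real.rpow_pos_of_pos hapos _
    by_contra hneg
    push Not at hneg
    have := mul_neg_of_pos_of_neg this hneg
    linarith [hgx.vt_nonneg]
  have hGb : LinearMap.trace ℝ (Euc N) Y.toLinearMap + (p - 2) * ⟪Y n, n⟫
      = P ^ (2 - p) * (wt + g) := by
    rw [← hEY, hbn, ← mul_assoc, ← Real.rpow_add hP0, hn, hbn]; norm_num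
  rw [hGb] at key
  linarith


set_option maxHeartbeats 1000000 in
theorem phaseA_numeric {Λ ℓ K d h t' n σ A Q M p q κ wt g : ℝ} (hΛ : 1 ≤ Λ) (hℓ : 0 < ℓ)
    (hK : 0 < K) (hd : 0 < d) (hd1 : d ≤ 1) (hh : 0 < h) (ht : 0 < t') (hth : t' ≤ h)
    (hn : 3 ≤ n) (hσ : 0 < σ) (hA : A = ℓ * K * (h / t')) (hT : A * σ < Λ * K)
    (hQ : 2 * Q * σ ^ 3 = A) (c1 : (8 * Λ * n) ^ 2 ≤ ℓ ^ 2 * d)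
    (c2 : 4 * Λ ^ 4 ≤ ℓ ^ 4 * h * K ^ (p - 2)) (c3 : M * (Λ * K) ^ q ≤ K ^ (p - 1))
    (hp : 2 ≤ p) (hκ : κ = 4 * Λ * K / d ^ 2) :
    σ ^ 2 < d / 4 ∧ κ * d ≤ Q * σ ^ 2 / 2 ∧ (wt ≤ A * σ / t' → g ≤ M * (Λ * K) ^ q →
    2 * Q ≤ 2 * κ * (n - 2) + (Q * σ ^ 2) ^ (2 - p) * (wt + g) → False) := by
  have hht : 1 ≤ h / t' := by rw [le_div_iff₀ ht]; linarith
  have hAK : ℓ * K ≤ A := by rw [hA]; nlinarith [mul_pos hℓ hK]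
  have hA0 : 0 < A := by rw [hA]; positivity
  have hQ0 : 0 < Q := by
    by_contra hneg
    push Not at hneg
    have := mul_nonpos_of_nonpos_of_nonneg hneg (by positivity : 0 ≤ 2 * σ ^ 3)
    linarith
  have hls : ℓ * σ < Λ := by
    have : ℓ * K * σ < Λ * K := (mul_le_mul_of_nonneg_right hAK hσ.le).trans_lt hT
    nlinarith
  have hls' : ℓ * σ * h ≤ Λ * t' := by
    have e : A * σ = K * (ℓ * σ * h / t') := by rw [hA]; ring
    rw [e] at hT
    have : ℓ * σ * h / t' < Λ := by nlinarith
    rw [div_lt_iff₀ ht] at this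
    exact this.le
  have hls2 : (ℓ * σ) ^ 2 < Λ ^ 2 := by
    apply pow_lt_pow_left₀ hls (by positivity) (by norm_num)
  have hs2 : 64 * n ^ 2 * σ ^ 2 < d := by
    have h1 : (8 * Λ * n) ^ 2 * σ ^ 2 ≤ ℓ ^ 2 * d * σ ^ 2 :=
      mul_le_mul_of_nonneg_right c1 (by positivity)
    have h2 : ℓ ^ 2 * d * σ ^ 2 < Λ ^ 2 * d := by nlinarith
    have h3 : Λ ^ 2 * (64 * n ^ 2 * σ ^ 2) < Λ ^ 2 * d := by nlinarith
    exact lt_of_mul_lt_mul_left h3 (by positivity)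
  have hn2 : 9 ≤ n ^ 2 := by nlinarith
  have hs3 : 576 * σ ^ 2 < d := by nlinarith [sq_nonneg σ]
  have hs4 : σ < 1 / 2 := by nlinarith
  have hℓ24 : 576 * Λ ^ 2 ≤ ℓ ^ 2 * d := by nlinarith [sq_nonneg Λ]
  have hℓ1 : 1 ≤ ℓ := by
    by_contra hneg
    push Not at hneg
    have w1 : ℓ ^ 2 ≤ 1 := pow_le_one₀ hℓ.le hneg.le
    have w2 : ℓ ^ 2 * d ≤ 1 * 1 := mul_le_mul w1 hd1 hd.le (by norm_num)
    have w3 : 1 ≤ Λ ^ 2 := one_le_pow₀ hΛ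
    linarith
  have hP2 : 2 * (Q * σ ^ 2) * σ = A := by rw [← hQ]; ring
  set P := Q * σ ^ 2 with hP
  have hP0 : 0 < P := by positivity
  have hKP : K ≤ P := by
    have : K ≤ A := by nlinarith
    nlinarith
  refine ⟨by nlinarith [sq_nonneg σ], ?_, ?_⟩
  · have e : κ * d = 4 * Λ * K / d := by rw [hκ]; field_simp
    rw [e, div_le_iff₀ hd]
    have : 16 * Λ * σ ≤ ℓ * d := by nlinarith
    have h5 : (4 * Λ * K) * σ ≤ (P / 2 * d) * σ := by nlinarith
    exact le_of_mul_le_mul_right h5 hσ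
  · intro hwt hg hkey
    have i1 : 2 * κ * (n - 2) ≤ Q / 2 := by
      have e : 2 * κ * (n - 2) = 8 * Λ * K * (n - 2) / d ^ 2 := by rw [hκ]; field_simp; ring
      rw [e, div_le_iff₀ (by positivity)]
      have h1 : 32 * Λ * n * σ ^ 3 ≤ ℓ * d ^ 2 := by
        have a1 : 64 * n ^ 2 * σ ^ 2 * (ℓ * σ) ≤ d * Λ :=
          mul_le_mul hs2.le hls.le (by positivity) hd.le
        have a2 : Λ ^ 2 ≤ 2 * n * ℓ ^ 2 * d := by nlinarith
        have a3 : (2 * n * ℓ) * (32 * Λ * n * σ ^ 3) ≤ (2 * n * ℓ) * (ℓ * d ^ 2) := by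
          calc (2 * n * ℓ) * (32 * Λ * n * σ ^ 3) = Λ * (64 * n ^ 2 * σ ^ 2 * (ℓ * σ)) := by ring
            _ ≤ Λ * (d * Λ) := mul_le_mul_of_nonneg_left a1 (by linarith)
            _ = d * Λ ^ 2 := by ring
            _ ≤ d * (2 * n * ℓ ^ 2 * d) := mul_le_mul_of_nonneg_left a2 hd.le
            _ = _ := by ring
        exact le_of_mul_le_mul_left a3 (by positivity)
      have h2 : (8 * Λ * K * (n - 2)) * σ ^ 3 ≤ (Q / 2 * d ^ 2) * σ ^ 3 := by
        calc (8 * Λ * K * (n - 2)) * σ ^ 3 ≤ (8 * Λ * K * n) * σ ^ 3 := by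
              apply mul_le_mul_of_nonneg_right _ (by positivity)
              apply mul_le_mul_of_nonneg_left (by linarith) (by positivity)
          _ = K / 4 * (32 * Λ * n * σ ^ 3) := by ring
          _ ≤ K / 4 * (ℓ * d ^ 2) := mul_le_mul_of_nonneg_left h1 (by positivity)
          _ = (ℓ * K) * (d ^ 2 / 4) := by ring
          _ ≤ A * (d ^ 2 / 4) := mul_le_mul_of_nonneg_right hAK (by positivity)
          _ = _ := by rw [← hQ]; ring
      exact le_of_mul_le_mul_right h2 (by positivity)
    have hPp : 0 < P ^ (2 - p) := Real.rpow_pos_of_pos hP0 _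
    have hKPp : K ^ (p - 2) ≤ P ^ (p - 2) := Real.rpow_le_rpow hK.le hKP (by linarith)
    have hPP : P ^ (2 - p) * P ^ (p - 2) = 1 := by
      rw [← Real.rpow_add hP0]; norm_num
    have i2 : P ^ (2 - p) * (A * σ / t') ≤ Q / 2 := by
      have a1 : 4 * σ ^ 4 ≤ t' * K ^ (p - 2) := by
        have b1 : (ℓ * σ * h) ^ 4 ≤ (Λ * t') ^ 4 := pow_le_pow_left₀ (by positivity) hls' 4
        have b2 : t' ^ 3 ≤ h ^ 3 := pow_le_pow_left₀ ht.le hth 3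
        have b3 : (ℓ * σ) ^ 4 * h ≤ Λ ^ 4 * t' := by
          have : ((ℓ * σ) ^ 4 * h) * h ^ 3 ≤ (Λ ^ 4 * t') * h ^ 3 := by
            calc ((ℓ * σ) ^ 4 * h) * h ^ 3 = (ℓ * σ * h) ^ 4 := by ring
              _ ≤ (Λ * t') ^ 4 := b1
              _ = (Λ ^ 4 * t') * t' ^ 3 := by ring
              _ ≤ _ := mul_le_mul_of_nonneg_left b2 (by positivity)
          exact le_of_mul_le_mul_right this (by positivity)
        have b4 : (ℓ ^ 4 * h) * (4 * σ ^ 4) ≤ (ℓ ^ 4 * h) * (t' * K ^ (p - 2)) := by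
          calc (ℓ ^ 4 * h) * (4 * σ ^ 4) = 4 * ((ℓ * σ) ^ 4 * h) := by ring
            _ ≤ 4 * (Λ ^ 4 * t') := by linarith
            _ = (4 * Λ ^ 4) * t' := by ring
            _ ≤ (ℓ ^ 4 * h * K ^ (p - 2)) * t' := mul_le_mul_of_nonneg_right c2 ht.le
            _ = _ := by ring
        exact le_of_mul_le_mul_left b4 (by positivity)
      have a2 : 4 * σ ^ 4 ≤ t' * P ^ (p - 2) :=
        a1.trans (mul_le_mul_of_nonneg_left hKPp ht.le)
      have a3 : A * σ / t' ≤ Q / 2 * P ^ (p - 2) := by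
        rw [div_le_iff₀ ht, ← hQ]
        calc 2 * Q * σ ^ 3 * σ = Q / 2 * (4 * σ ^ 4) := by ring
          _ ≤ Q / 2 * (t' * P ^ (p - 2)) := mul_le_mul_of_nonneg_left a2 (by positivity)
          _ = _ := by ring
      calc P ^ (2 - p) * (A * σ / t') ≤ P ^ (2 - p) * (Q / 2 * P ^ (p - 2)) :=
            mul_le_mul_of_nonneg_left a3 hPp.le
        _ = Q / 2 * (P ^ (2 - p) * P ^ (p - 2)) := by ring
        _ = Q / 2 := by rw [hPP, mul_one]
    have i3 : P ^ (2 - p) * (M * (Λ * K) ^ q) ≤ Q / 2 := by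
      calc P ^ (2 - p) * (M * (Λ * K) ^ q) ≤ P ^ (2 - p) * P ^ (p - 1) := by
            apply mul_le_mul_of_nonneg_left _ hPp.le
            exact c3.trans (Real.rpow_le_rpow hK.le hKP (by linarith))
        _ = P := by rw [← Real.rpow_add hP0]; norm_num
        _ ≤ Q / 2 := by rw [hP]; nlinarith
    have i4 : P ^ (2 - p) * (wt + g) ≤ Q / 2 + Q / 2 := by
      rw [mul_add]
      exact add_le_add ((mul_le_mul_of_nonneg_left hwt hPp.le).trans i2)
        ((mul_le_mul_of_nonneg_left hg hPp.le).trans i3)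
    linarith


set_option maxHeartbeats 1000000 in
theorem phaseA {N : ℕ} (hN : 1 ≤ N) {p q m M : ℝ} (hp : 2 ≤ p) (hq : 0 ≤ q) (hm : 0 < m)
    (hmM : m ≤ M)
    {v : Euc N → ℝ → ℝ} {c : Euc N} {t0 d h K Λ ℓ : ℝ}
    (hgood : ∀ x ∈ closedBall c d, ∀ t ∈ Icc t0 (t0 + h),
      ∃ a vt f, GoodPt N p q m M v x t a vt f)
    (hcont : ContinuousOn (fun z : Euc N × ℝ => v z.1 z.2) (closedBall c d ×ˢ Icc t0 (t0 + h)))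
    (hmono : ∀ x ∈ closedBall c d, ∀ s ∈ Icc t0 (t0 + h), v x t0 ≤ v x s)
    (hΛ : 1 ≤ Λ) (hℓ : 0 < ℓ)
    (hK : 0 < K) (hd : 0 < d) (hd1 : d ≤ 1) (hh : 0 < h)
    (hKv : v c t0 = K) (hbd : ∀ x ∈ closedBall c (d / 2), v x t0 ≤ Λ * K)
    (c1 : (8 * Λ * (N + p)) ^ 2 ≤ ℓ ^ 2 * d)
    (c2 : 4 * Λ ^ 4 ≤ ℓ ^ 4 * h * K ^ (p - 2)) (c3 : M * (Λ * K) ^ q ≤ K ^ (p - 1)) :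
    ∀ y ∈ closedBall c d, K - v y (t0 + h) ≤ ℓ * K * (‖c - y‖ ^ 2) ^ (1 / 4 : ℝ) := by
  intro y0 hy0
  by_contra hneg
  push Not at hneg
  have hN' : (1 : ℝ) ≤ N := by exact_mod_cast hN
  set κ := 4 * Λ * K / d ^ 2 with hκ
  have hκ0 : 0 < κ := by positivity
  set σ1 := K - v y0 (t0 + h) - ℓ * K * (‖c - y0‖ ^ 2) ^ (1 / 4 : ℝ) with hσ1
  have hσ1p : 0 < σ1 := by rw [hσ1]; linarith
  have hnonneg : ∀ x ∈ closedBall c d, ∀ t ∈ Icc t0 (t0 + h), 0 ≤ v x t := by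
    intro x hx t ht
    obtain ⟨a, vt, f, hg⟩ := hgood x hx t ht
    exact hg.nonneg
  have hsub : closedBall c (d / 2) ⊆ closedBall c d := closedBall_subset_closedBall (by linarith)
  have hc0 : ContinuousOn (fun x => v x t0) (closedBall c d) := by
    have : ContinuousOn (fun x : Euc N => (x, t0)) (closedBall c d) := by fun_prop
    exact hcont.comp this (fun x hx => ⟨hx, by constructor <;> linarith⟩)
  have huc := (isCompact_closedBall c d).uniformContinuousOn_of_continuous hc0
  obtain ⟨ε, hε, huc⟩ := Metric.uniformContinuousOn_iff.1 huc σ1 hσ1p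
  set w : Euc N → Euc N → ℝ := fun x y => (‖x - y‖ ^ 2) ^ (1 / 4 : ℝ) with hw
  have hw0 : ∀ x y, 0 ≤ w x y := fun x y => by positivity
  set wε := (ε ^ 2) ^ (1 / 4 : ℝ) with hwε
  have hwεp : 0 < wε := by positivity
  set t1 := min (h / 2) (ℓ * h * wε / Λ) with ht1
  have ht1p : 0 < t1 := by
    rw [ht1]; apply lt_min <;> positivity
  have ht1h : t1 < h := (min_le_left _ _).trans_lt (by linarith)
  set Φ : Euc N × Euc N × ℝ → ℝ := fun z =>
    v z.1 t0 - v z.2.1 (t0 + z.2.2) - ℓ * K * (h / z.2.2) * w z.1 z.2.1 - κ * ‖z.1 - c‖ ^ 2 with hΦ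
  set D : Set (Euc N × Euc N × ℝ) := closedBall c (d / 2) ×ˢ (closedBall c d ×ˢ Icc t1 h) with hD
  have hDc : IsCompact D := (isCompact_closedBall _ _).prod ((isCompact_closedBall _ _).prod isCompact_Icc)
  have hcΦ : ContinuousOn Φ D := by
    apply ContinuousOn.sub
    · apply ContinuousOn.sub
      · apply ContinuousOn.sub
        · have : ContinuousOn (fun z : Euc N × Euc N × ℝ => z.1) D := by fun_prop
          exact hc0.comp this (fun z hz => hsub hz.1)
        · have : ContinuousOn (fun z : Euc N × Euc N × ℝ => (z.2.1, t0 + z.2.2)) D := by fun_prop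
          refine hcont.comp this (fun z hz => ⟨hz.2.1, ?_⟩)
          have := hz.2.2
          constructor <;> linarith [this.1, this.2]
      · apply ContinuousOn.mul
        · apply ContinuousOn.mul continuousOn_const
          apply ContinuousOn.div continuousOn_const (by fun_prop)
          intro z hz
          linarith [hz.2.2.1]
        · simp only [hw]
          apply ContinuousOn.rpow_const (by fun_prop)
          intro z _
          right; norm_num
    · fun_prop
  have hcD : (c, y0, h) ∈ D := ⟨mem_closedBall_self (by linarith), hy0, ht1h.le, le_rfl⟩
  obtain ⟨⟨x, y, t'⟩, hmem, hmax⟩ := hDc.exists_isMaxOn ⟨_, hcD⟩ hcΦ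
  have hmax' : ∀ z ∈ D, Φ z ≤ Φ (x, y, t') := hmax
  have hval : σ1 ≤ Φ (x, y, t') := by
    refine le_trans ?_ (hmax' _ hcD)
    simp only [hΦ, hw, hσ1, hKv, sub_self, norm_zero, div_self hh.ne']
    simp
  obtain ⟨hx, hy, ht't1, ht'h⟩ := hmem
  simp only at hx hy ht't1 ht'h
  have ht'p : 0 < t' := lt_of_lt_of_le ht1p ht't1
  have hmem' : t0 + t' ∈ Icc t0 (t0 + h) := ⟨by linarith, by linarith⟩
  have hΦv : Φ (x, y, t') = v x t0 - v y (t0 + t') - ℓ * K * (h / t') * w x y - κ * ‖x - c‖ ^ 2 := rfl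
  have hvx := hbd x hx
  have hvy := hnonneg y hy _ hmem'
  have hvyy := hmono y hy _ hmem'
  have hT0 : 0 ≤ ℓ * K * (h / t') * w x y := mul_nonneg (by positivity) (hw0 _ _)
  have hκ1 : 0 ≤ κ * ‖x - c‖ ^ 2 := by positivity
  have hTlt : ℓ * K * (h / t') * w x y < Λ * K := by linarith
  -- t' > t1
  have htt : t1 < t' := by
    refine lt_of_le_of_ne ht't1 ?_
    intro heq
    by_cases hd2 : dist x y < ε
    · have := huc x (hsub hx) y hy hd2
      rw [Real.dist_eq] at this
      have := (abs_lt.1 this).2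
      linarith
    · push Not at hd2
      have h1 : wε ≤ w x y := by
        simp only [hw, hwε]
        rw [dist_eq_norm] at hd2
        gcongr
      have h2 : Λ * t' ≤ ℓ * h * wε := by
        have := min_le_right (h / 2) (ℓ * h * wε / Λ)
        rw [← ht1, heq, le_div_iff₀ (by linarith)] at this
        linarith
      have h3 : Λ * K ≤ ℓ * K * (h / t') * wε := by
        have : ℓ * K * (h / t') * wε = K * (ℓ * h * wε) / t' := by ring
        rw [this, le_div_iff₀ ht'p]
        nlinarith
      have h4 : ℓ * K * (h / t') * wε ≤ ℓ * K * (h / t') * w x y :=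
        mul_le_mul_of_nonneg_left h1 (by positivity)
      linarith
  have hxy : x ≠ y := by
    rintro rfl
    linarith
  have hnz : 0 < ‖x - y‖ := norm_pos_iff.2 (sub_ne_zero.2 hxy)
  set σ := w x y with hσ
  have hσp : 0 < σ := by simp only [hσ, hw]; positivity
  have hσ2 : σ ^ 2 = ‖x - y‖ := by
    simp only [hσ, hw]
    rw [← Real.rpow_natCast, ← Real.rpow_mul (by positivity), ← Real.rpow_natCast, ← Real.rpow_mul (by positivity)]
    norm_num
  set A := ℓ * K * (h / t') with hA
  have hA0 : 0 < A := by positivity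
  set Q := A / 2 * (‖x - y‖ ^ 2) ^ (-(3 / 4) : ℝ) with hQ
  have hQσ : 2 * Q * σ ^ 3 = A := by
    simp only [hQ, hσ, hw]
    have : ((‖x - y‖ ^ 2) ^ (1 / 4 : ℝ)) ^ 3 = (‖x - y‖ ^ 2) ^ (3 / 4 : ℝ) := by
      rw [← Real.rpow_natCast, ← Real.rpow_mul (by positivity)]; norm_num
    rw [this]
    have h2 : (‖x - y‖ ^ 2) ^ (-(3 / 4) : ℝ) * (‖x - y‖ ^ 2) ^ (3 / 4 : ℝ) = 1 := by
      rw [← Real.rpow_add (by positivity)]; norm_num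
    linear_combination A * h2
  obtain ⟨a, vt, f, hgx⟩ := hgood x (hsub hx) t0 ⟨le_rfl, by linarith⟩
  obtain ⟨b, wt, g, hgy⟩ := hgood y hy _ hmem'
  obtain ⟨n1, n2, n3⟩ := phaseA_numeric (wt := wt) (g := g) hΛ hℓ hK hd hd1 hh ht'p ht'h
    (by linarith : (3:ℝ) ≤ N + p) hσp hA hTlt hQσ c1 c2 c3 hp hκ
  rw [hσ2] at n1 n2 n3
  have hxc : ‖x - c‖ < d / 2 := by
    have h1 : κ * ‖x - c‖ ^ 2 < Λ * K := by linarith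
    have h2 : ‖x - c‖ ^ 2 < (d / 2) ^ 2 := by
      have : Λ * K = κ * (d / 2) ^ 2 := by rw [hκ]; field_simp; ring
      rw [this] at h1
      exact lt_of_mul_lt_mul_left h1 hκ0.le
    exact lt_of_pow_lt_pow_left₀ 2 (by linarith) h2
  have hyc : ‖y - c‖ < d := by
    have : y - c = (x - c) - (x - y) := by abel
    rw [this]
    refine (norm_sub_le _ _).trans_lt ?_
    linarith
  have hloc : ∀ ξ ζ : Euc N, IsLocalMax (fun s : ℝ => v (x + s • ξ) t0 - v (y + s • ζ) (t0 + t')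
      - A * (‖x - y + s • (ξ - ζ)‖ ^ 2) ^ (1 / 4 : ℝ) - κ * ‖x - c + s • ξ‖ ^ 2) 0 := by
    intro ξ ζ
    have e1 : ∀ᶠ s : ℝ in 𝓝 0, ‖x + s • ξ - c‖ < d / 2 := by
      have : Continuous fun s : ℝ => ‖x + s • ξ - c‖ := by fun_prop
      exact (this.tendsto 0).eventually_lt_const (by simpa using hxc)
    have e2 : ∀ᶠ s : ℝ in 𝓝 0, ‖y + s • ζ - c‖ < d := by
      have : Continuous fun s : ℝ => ‖y + s • ζ - c‖ := by fun_prop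
      exact (this.tendsto 0).eventually_lt_const (by simpa using hyc)
    filter_upwards [e1, e2] with s h1 h2
    have := hmax' (x + s • ξ, y + s • ζ, t') ⟨by rw [mem_closedBall, dist_eq_norm]; exact h1.le,
      by rw [mem_closedBall, dist_eq_norm]; exact h2.le, ht't1, ht'h⟩
    simp only [hΦ, hw] at this
    have r1 : x + s • ξ - (y + s • ζ) = x - y + s • (ξ - ζ) := by rw [smul_sub]; abel
    have r2 : x + s • ξ - c = x - c + s • ξ := by abel
    rw [r1, r2] at this
    simpa using this
  have key := two_point_max (c := c) hp hm.le hgx hgy A κ Q hA0 hκ0.le hxy hQ (by nlinarith) hloc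
  refine n3 ?_ ?_ key
  · have hder : HasDerivAt (fun s => v x t0 - v y (t0 + s) - ℓ * K * (h / s) * w x y
        - κ * ‖x - c‖ ^ 2) (-wt + A * σ / t') t' := by
      have d1 : HasDerivAt (fun s => v y (t0 + s)) wt t' := by
        have := hgy.ht
        have h2 : HasDerivAt (fun s => t0 + s) 1 t' := by
          simpa using (hasDerivAt_id t').const_add t0
        exact (HasDerivAt.comp t' this h2).congr_deriv (mul_one _)
      have d2 : HasDerivAt (fun s => ℓ * K * (h / s) * w x y) (-(A * σ / t')) t' := by
        have := (((hasDerivAt_inv ht'p.ne').const_mul h).const_mul (ℓ * K)).mul_const (w x y)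
        refine this.congr_deriv ?_
        rw [hA]
        field_simp
        rw [hσ]
      have := ((d1.const_sub (v x t0)).sub d2).sub_const (κ * ‖x - c‖ ^ 2)
      refine this.congr_deriv ?_
      ring
    have := deriv_nonneg_of_left_max hder htt (by
      intro s hs
      exact hmax' (x, y, s) ⟨hx, hy, hs.1.le, hs.2.le.trans ht'h⟩)
    linarith
  · refine hgy.f_hi.trans ?_
    apply mul_le_mul_of_nonneg_left _ (by linarith)
    apply plusPowQ_le hq _ (by positivity)
    linarith

/-- conclusion of phase A in the form used later. -/
theorem phaseA' {N : ℕ} (hN : 1 ≤ N) {p q m M : ℝ} (hp : 2 ≤ p) (hq : 0 ≤ q) (hm : 0 < m)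
    (hmM : m ≤ M)
    {v : Euc N → ℝ → ℝ} {c : Euc N} {t0 d h K Λ ℓ : ℝ}
    (hgood : ∀ x ∈ closedBall c d, ∀ t ∈ Icc t0 (t0 + h),
      ∃ a vt f, GoodPt N p q m M v x t a vt f)
    (hcont : ContinuousOn (fun z : Euc N × ℝ => v z.1 z.2) (closedBall c d ×ˢ Icc t0 (t0 + h)))
    (hmono : ∀ x ∈ closedBall c d, ∀ s ∈ Icc t0 (t0 + h), v x t0 ≤ v x s)
    (hΛ : 1 ≤ Λ) (hℓ : 0 < ℓ)
    (hK : 0 < K) (hd : 0 < d) (hd1 : d ≤ 1) (hh : 0 < h)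
    (hKv : v c t0 = K) (hbd : ∀ x ∈ closedBall c (d / 2), v x t0 ≤ Λ * K)
    (c1 : (8 * Λ * (N + p)) ^ 2 ≤ ℓ ^ 2 * d)
    (c2 : 4 * Λ ^ 4 ≤ ℓ ^ 4 * h * K ^ (p - 2)) (c3 : M * (Λ * K) ^ q ≤ K ^ (p - 1)) :
    1 / (4 * ℓ ^ 2) ≤ d ∧ ∀ y ∈ closedBall c (1 / (4 * ℓ ^ 2)), K / 2 ≤ v y (t0 + h) := by
  have hN' : (1 : ℝ) ≤ N := by exact_mod_cast hN
  have hle : 1 / (4 * ℓ ^ 2) ≤ d := by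
    rw [div_le_iff₀ (by positivity)]
    have h1 : 1 * 3 ≤ Λ * (N + p) := mul_le_mul hΛ (by linarith) (by norm_num) (by linarith)
    nlinarith
  refine ⟨hle, fun y hy => ?_⟩
  have h1 := phaseA hN hp hq hm hmM hgood hcont hmono hΛ hℓ hK hd hd1 hh hKv hbd c1 c2 c3 y
    (closedBall_subset_closedBall hle hy)
  have h2 : (‖c - y‖ ^ 2) ^ (1 / 4 : ℝ) ≤ 1 / (2 * ℓ) := by
    have e : (((1 / (2 * ℓ)) ^ 4 : ℝ)) ^ (1 / 4 : ℝ) = 1 / (2 * ℓ) := by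
      rw [← Real.rpow_natCast, ← Real.rpow_mul (by positivity)]; norm_num
    rw [← e]
    apply Real.rpow_le_rpow (by positivity) _ (by norm_num)
    have : ‖c - y‖ ≤ 1 / (4 * ℓ ^ 2) := by
      rw [← dist_eq_norm, dist_comm]; exact hy
    calc ‖c - y‖ ^ 2 ≤ (1 / (4 * ℓ ^ 2)) ^ 2 := pow_le_pow_left₀ (norm_nonneg _) this 2
      _ = _ := by field_simp; norm_num
  have h3 : ℓ * K * (‖c - y‖ ^ 2) ^ (1 / 4 : ℝ) ≤ ℓ * K * (1 / (2 * ℓ)) :=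
    mul_le_mul_of_nonneg_left h2 (by positivity)
  have h4 : ℓ * K * (1 / (2 * ℓ)) = K / 2 := by field_simp
  linarith


/-- comparison from below on an annulus. -/
theorem compare_below {N : ℕ} {p q m M : ℝ} (hp : 2 ≤ p) {v : Euc N → ℝ → ℝ} {c : Euc N}
    {ρ R ta tb : ℝ} (W : ℝ → ℝ → ℝ)
    (hgood : ∀ x ∈ closedBall c R, ∀ t ∈ Icc ta tb, ∃ a vt f, GoodPt N p q m M v x t a vt f)
    (hcont : ContinuousOn (fun z : Euc N × ℝ => v z.1 z.2) (closedBall c R ×ˢ Icc ta tb))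
    (hρ : 0 < ρ)
    (hW : ContinuousOn (fun z : ℝ × ℝ => W z.1 z.2) (Ici (ρ ^ 2) ×ˢ Icc ta tb))
    (hinit : ∀ x, ρ ≤ ‖x - c‖ → ‖x - c‖ ≤ R → W (‖x - c‖ ^ 2) ta ≤ v x ta)
    (hinner : ∀ x, ‖x - c‖ = ρ → ∀ t ∈ Icc ta tb, W (‖x - c‖ ^ 2) t ≤ v x t)
    (houter : ∀ x, ‖x - c‖ = R → ∀ t ∈ Icc ta tb, W (‖x - c‖ ^ 2) t ≤ v x t)
    (hmid : ∀ x t, ρ < ‖x - c‖ → ‖x - c‖ < R → ta < t → t ≤ tb → v x t < W (‖x - c‖ ^ 2) t →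
      ∃ (F1 : ℝ → ℝ) (F2 Wt : ℝ), (∀ᶠ r in 𝓝 (‖x - c‖ ^ 2), HasDerivAt (fun r => W r t) (F1 r) r) ∧
        HasDerivAt F1 F2 (‖x - c‖ ^ 2) ∧ HasDerivAt (fun s => W (‖x - c‖ ^ 2) s) Wt t ∧
        (F1 (‖x - c‖ ^ 2) ≠ 0 ∨ p = 2) ∧
        Wt + M * plusPowQ q (v x t) < (2 * |F1 (‖x - c‖ ^ 2)| * ‖x - c‖) ^ (p - 2) *
          (4 * F2 * ‖x - c‖ ^ 2 * (p - 1) + 2 * F1 (‖x - c‖ ^ 2) * (N + p - 2))) :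
    ∀ x t, ρ ≤ ‖x - c‖ → ‖x - c‖ ≤ R → t ∈ Icc ta tb → W (‖x - c‖ ^ 2) t ≤ v x t := by
  intro x0 t0 hx0 hx0' ht0
  by_contra hneg
  push Not at hneg
  set S : Set (Euc N × ℝ) := (closedBall c R ∩ {x | ρ ≤ ‖x - c‖}) ×ˢ Icc ta tb with hS
  have hSc : IsCompact S := by
    refine IsCompact.prod ?_ isCompact_Icc
    apply (isCompact_closedBall c R).inter_right
    exact isClosed_le continuous_const (by fun_prop)
  have hcS : ContinuousOn (fun z : Euc N × ℝ => v z.1 z.2 - W (‖z.1 - c‖ ^ 2) z.2) S := by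
    apply ContinuousOn.sub
    · exact hcont.mono (fun z hz => ⟨hz.1.1, hz.2⟩)
    · have : ContinuousOn (fun z : Euc N × ℝ => (‖z.1 - c‖ ^ 2, z.2)) S := by fun_prop
      refine hW.comp this (fun z hz => ⟨?_, hz.2⟩)
      exact pow_le_pow_left₀ hρ.le hz.1.2 2
  have hmem0 : (x0, t0) ∈ S := ⟨⟨by rw [mem_closedBall, dist_eq_norm]; exact hx0', hx0⟩, ht0⟩
  obtain ⟨⟨x, t⟩, hmem, hmin⟩ := hSc.exists_isMinOn ⟨_, hmem0⟩ hcS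
  have hmin' : ∀ z ∈ S, v x t - W (‖x - c‖ ^ 2) t ≤ v z.1 z.2 - W (‖z.1 - c‖ ^ 2) z.2 := hmin
  have hlt : v x t < W (‖x - c‖ ^ 2) t := by
    have := hmin' _ hmem0
    simp only at this
    linarith
  obtain ⟨⟨hxR, hxρ⟩, htm⟩ := hmem
  simp only [mem_ofPred_eq] at hxR hxρ htm
  have hxR' : ‖x - c‖ ≤ R := by rw [← dist_eq_norm]; exact hxR
  have h1 : ρ < ‖x - c‖ := lt_of_le_of_ne hxρ (fun h => by linarith [hinner x h.symm t htm])
  have h2 : ‖x - c‖ < R := lt_of_le_of_ne hxR' (fun h => by linarith [houter x h t htm])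
  have h3 : ta < t := lt_of_le_of_ne htm.1 (fun h => by
    have := hinit x hxρ hxR'; rw [h] at this; linarith)
  obtain ⟨F1, F2, Wt, d1, d2, d3, hnd, hstrict⟩ := hmid x t h1 h2 h3 htm.2 hlt
  obtain ⟨a, vt, f, hg⟩ := hgood x hxR t htm
  have hloc : IsLocalMin (fun y => v y t - W (‖y - c‖ ^ 2) t) x := by
    have e1 : ∀ᶠ y in 𝓝 x, ρ < ‖y - c‖ := by
      have : Continuous fun y : Euc N => ‖y - c‖ := by fun_prop
      exact (this.tendsto x).eventually_const_lt h1
    have e2 : ∀ᶠ y in 𝓝 x, ‖y - c‖ < R := by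
      have : Continuous fun y : Euc N => ‖y - c‖ := by fun_prop
      exact (this.tendsto x).eventually_lt_const h2
    filter_upwards [e1, e2] with y g1 g2
    exact hmin' (y, t) ⟨⟨by rw [mem_closedBall, dist_eq_norm]; exact g2.le, g1.le⟩, htm⟩
  obtain ⟨ha, hE⟩ := touch_below hp hg c (fun r => W r t) F1 F2 d1 d2 hloc
  have hxc : x - c ≠ 0 := norm_pos_iff.1 (hρ.trans h1)
  have han : ‖a‖ = 2 * |F1 (‖x - c‖ ^ 2)| * ‖x - c‖ := by
    rw [ha, norm_smul, Real.norm_eq_abs, abs_mul, abs_two]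
  have hE' := hE (by
    rcases hnd with h | h
    · left; rw [ha]; simp [h, hxc]
    · exact Or.inr h)
  rw [han] at hE'
  have hder := deriv_nonneg_of_left_max (d3.sub hg.ht) h3 (by
    intro s hs
    have := hmin' (x, s) ⟨⟨hxR, hxρ⟩, hs.1.le, hs.2.le.trans htm.2⟩
    simp only at this
    simp only [Pi.sub_apply]
    linarith)
  linarith [hg.f_hi]

set_option maxHeartbeats 1000000 in
theorem phaseB_gt {N : ℕ} (hN : 1 ≤ N) {p q m M : ℝ} (hp : 2 < p) (hq : 0 ≤ q) (hm : 0 < m)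
    (hmM : m ≤ M) {v : Euc N → ℝ → ℝ} {c : Euc N} {ρ K τ : ℝ}
    (hgood : ∀ x ∈ closedBall c 2, ∀ t ∈ Icc (-τ/2) 0, ∃ a vt f, GoodPt N p q m M v x t a vt f)
    (hcont : ContinuousOn (fun z : Euc N × ℝ => v z.1 z.2) (closedBall c 2 ×ˢ Icc (-τ/2) 0))
    (hρ : 0 < ρ) (hρ1 : ρ ≤ 1) (hK : 0 < K) (hτ : 0 < τ)
    (hin : ∀ x ∈ closedBall c ρ, ∀ t ∈ Icc (-τ/2) 0, K / 2 ≤ v x t)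
    (hcond : K / τ + M * K ^ q < (K * ρ ^ N / 2 ^ (N + 2)) ^ (p - 1)) :
    ∀ y ∈ ball c 1, 0 < v y 0 := by
  have hN' : (1 : ℝ) ≤ N := by exact_mod_cast hN
  have hvn : ∀ x, ‖x - c‖ ≤ 2 → ∀ t ∈ Icc (-τ/2) 0, 0 ≤ v x t := by
    intro x hx t ht
    obtain ⟨a, vt, f, hg⟩ := hgood x (by rw [mem_closedBall, dist_eq_norm]; exact hx) t ht
    exact hg.nonneg
  set φ : ℝ → ℝ := fun t => (ρ / 2) ^ N + (1 - (ρ / 2) ^ N) * (-t / (τ / 2)) with hφ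
  set W : ℝ → ℝ → ℝ := fun r t => K / 2 * (ρ ^ N * r ^ (-(N / 2 : ℝ)) - φ t) with hW
  have hρN : (ρ / 2) ^ N ≤ 1 := pow_le_one₀ (by positivity) (by linarith)
  have hρN0 : 0 < (ρ / 2) ^ N := by positivity
  have hsq : ∀ s : ℝ, 0 < s → (s ^ 2) ^ (-(N / 2 : ℝ)) = (s ^ N)⁻¹ := by
    intro s hs
    rw [Real.rpow_neg (by positivity), ← Real.rpow_natCast s 2, ← Real.rpow_mul hs.le]
    congr 1
    rw [← Real.rpow_natCast]; congr 1; push_cast; ring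
  have hφ0 : ∀ t ∈ Icc (-τ/2) 0, (ρ / 2) ^ N ≤ φ t := by
    intro t ht
    simp only [hφ]
    have : 0 ≤ -t / (τ / 2) := div_nonneg (by linarith [ht.2]) (by positivity)
    nlinarith
  have hdec : ∀ s : ℝ, ρ ≤ s → ρ ^ N * (s ^ 2) ^ (-(N / 2 : ℝ)) ≤ 1 := by
    intro s hs
    have hs0 : 0 < s := by linarith
    rw [hsq s hs0, ← div_eq_mul_inv, div_le_one (by positivity)]
    exact pow_le_pow_left₀ hρ.le hs N
  have main := compare_below (ρ := ρ) (R := 2) (ta := -τ/2) (tb := 0) hp.le W hgood hcont hρ ?_ ?_ ?_ ?_ ?_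
  · intro y hy
    rw [mem_ball, dist_eq_norm] at hy
    rcases le_or_gt ‖y - c‖ ρ with h | h
    · have := hin y (by rw [mem_closedBall, dist_eq_norm]; exact h) 0 ⟨by linarith, le_rfl⟩
      linarith
    · have h1 := main y 0 h.le (by linarith) ⟨by linarith, le_rfl⟩
      refine lt_of_lt_of_le ?_ h1
      have hs : 0 < ‖y - c‖ := by linarith
      simp only [hW, hφ]
      rw [hsq _ hs]
      have : (ρ / 2) ^ N < ρ ^ N * (‖y - c‖ ^ N)⁻¹ := by
        rw [div_pow, div_eq_mul_inv]
        apply mul_lt_mul_of_pos_left _ (by positivity)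
        apply inv_strictAnti₀ (by positivity)
        exact pow_lt_pow_left₀ (by linarith) hs.le (by omega)
      have h2 : 0 < ρ ^ N * (‖y - c‖ ^ N)⁻¹ - (ρ / 2) ^ N := by linarith
      simp only [neg_zero, zero_div, mul_zero, add_zero]
      positivity
  · simp only [hW, hφ]
    apply ContinuousOn.mul continuousOn_const
    apply ContinuousOn.sub
    · apply ContinuousOn.mul continuousOn_const
      apply ContinuousOn.rpow_const (by fun_prop)
      intro z hz
      left
      have : ρ ^ 2 ≤ z.1 := hz.1
      have : 0 < ρ ^ 2 := by positivity
      linarith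
    · fun_prop
  · intro x hx hx2
    have h1 : W (‖x - c‖ ^ 2) (-τ / 2) ≤ 0 := by
      simp only [hW, hφ]
      have e : - (-τ / 2) / (τ / 2) = 1 := by field_simp
      rw [e]
      have := hdec _ hx
      apply mul_nonpos_of_nonneg_of_nonpos (by positivity)
      linarith
    exact h1.trans (hvn x hx2 _ ⟨le_rfl, by linarith⟩)
  · intro x hx t ht
    refine le_trans ?_ (hin x (by rw [mem_closedBall, dist_eq_norm, hx]) t ht)
    simp only [hW]
    have := hdec _ hx.ge
    have := hφ0 t ht
    nlinarith
  · intro x hx t ht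
    refine le_trans ?_ (hvn x hx.le t ht)
    simp only [hW]
    apply mul_nonpos_of_nonneg_of_nonpos (by positivity)
    rw [hx, hsq 2 (by norm_num), ← div_eq_mul_inv, ← div_pow]
    linarith [hφ0 t ht]
  · intro x t h1 h2 h3 h4 hlt
    set s := ‖x - c‖ with hs
    have hs0 : 0 < s := by linarith
    have hr : 0 < s ^ 2 := by positivity
    set B := K / 2 * ρ ^ N with hB
    have hB0 : 0 < B := by positivity
    have ht : t ∈ Icc (-τ / 2) 0 := ⟨h3.le, h4⟩
    refine ⟨fun r => B * (-(N / 2 : ℝ)) * r ^ (-(N / 2 : ℝ) - 1),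
      B * (N / 2 : ℝ) * (N / 2 + 1) * (s ^ 2) ^ (-(N / 2 : ℝ) - 2),
      K / 2 * ((1 - (ρ / 2) ^ N) / (τ / 2)), ?_, ?_, ?_, ?_, ?_⟩
    · filter_upwards [lt_mem_nhds hr] with r hr
      have := ((((Real.hasDerivAt_rpow_const (p := -(N / 2 : ℝ)) (Or.inl hr.ne')).const_mul
        (ρ ^ N)).sub_const (φ t)).const_mul (K / 2))
      refine this.congr_deriv ?_
      rw [hB]; ring
    · have := ((Real.hasDerivAt_rpow_const (p := -(N / 2 : ℝ) - 1) (Or.inl hr.ne')).const_mul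
        (B * (-(N / 2 : ℝ))))
      refine this.congr_deriv ?_
      have e : (-(N / 2 : ℝ) - 1 - 1) = (-(N / 2 : ℝ) - 2) := by ring
      rw [e]; ring
    · have d1 : HasDerivAt φ ((1 - (ρ / 2) ^ N) * (-1 / (τ / 2))) t := by
        simp only [hφ]
        exact ((((hasDerivAt_id t).neg).div_const (τ / 2)).const_mul _).const_add _
      have := (d1.const_sub (ρ ^ N * (s ^ 2) ^ (-(N / 2 : ℝ)))).const_mul (K / 2)
      refine this.congr_deriv ?_
      ring
    · left
      have : 0 < (s ^ 2) ^ (-(N / 2 : ℝ) - 1) := by positivity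
      have : 0 < B * (N / 2 : ℝ) * (s ^ 2) ^ (-(N / 2 : ℝ) - 1) := by positivity
      intro h0
      simp only at h0
      linarith
    · simp only
      set Y := (s ^ 2) ^ (-(N / 2 : ℝ) - 1) with hY
      have hY0 : 0 < Y := by positivity
      have hYY : (s ^ 2) ^ (-(N / 2 : ℝ) - 2) * s ^ 2 = Y := by
        have e : (-(N / 2 : ℝ) - 1) = (-(N / 2 : ℝ) - 2) + 1 := by ring
        rw [hY, e, Real.rpow_add_one hr.ne']
      have eY : Y = (s ^ (N + 2))⁻¹ := by
        rw [hY, Real.rpow_sub_one hr.ne', hsq s hs0, pow_add]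
        field_simp
      have hYs : (2 : ℝ)⁻¹ ^ (N + 2) ≤ Y := by
        rw [eY, inv_pow]
        apply inv_anti₀ (by positivity)
        exact pow_le_pow_left₀ hs0.le h2.le _
      have hYs1 : (2 : ℝ)⁻¹ ^ (N + 1) ≤ Y * s := by
        have : Y * s = (s ^ (N + 1))⁻¹ := by rw [eY]; field_simp; ring
        rw [this, inv_pow]
        apply inv_anti₀ (by positivity)
        exact pow_le_pow_left₀ hs0.le h2.le _
      have e1 : 4 * (B * (N / 2 : ℝ) * (N / 2 + 1) * (s ^ 2) ^ (-(N / 2 : ℝ) - 2)) * s ^ 2 * (p - 1)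
          + 2 * (B * (-(N / 2 : ℝ)) * Y) * (N + p - 2) = B * Y * (N * (N * (p - 2) + p)) := by
        linear_combination (4 * (B * (N / 2 : ℝ) * (N / 2 + 1)) * (p - 1)) * hYY
      have e2 : 2 * |B * (-(N / 2 : ℝ)) * Y| * s = B * N * (Y * s) := by
        have : B * (-(N / 2 : ℝ)) * Y = -(B * (N / 2 : ℝ) * Y) := by ring
        rw [this, abs_neg, abs_of_pos (by positivity)]; ring
      rw [e1, e2]
      set Z := K * ρ ^ N / 2 ^ (N + 2) with hZ
      have hZ0 : 0 < Z := by positivity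
      have hZ' : Z = 2 * B * (2 : ℝ)⁻¹ ^ (N + 2) := by
        rw [hZ, hB, inv_pow]; ring
      have i1 : Z ≤ B * Y * (N * (N * (p - 2) + p)) := by
        have w1 : 0 ≤ N * (p - 2) := mul_nonneg (by linarith) (by linarith)
        have : 2 ≤ N * (N * (p - 2) + p) := by
          calc (2:ℝ) = 1 * 2 := by norm_num
            _ ≤ N * (N * (p - 2) + p) := mul_le_mul hN' (by linarith) (by norm_num) (by linarith)
        calc Z = B * (2 : ℝ)⁻¹ ^ (N + 2) * 2 := by rw [hZ']; ring
          _ ≤ B * Y * (N * (N * (p - 2) + p)) := by gcongr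
      have i2 : Z ≤ B * N * (Y * s) := by
        calc Z = B * 1 * (2 : ℝ)⁻¹ ^ (N + 1) := by rw [hZ', pow_succ _ (N + 1)]; ring
          _ ≤ _ := by gcongr
      have i3 : Z ^ (p - 2) ≤ (B * N * (Y * s)) ^ (p - 2) :=
        Real.rpow_le_rpow hZ0.le i2 (by linarith)
      have i4 : Z ^ (p - 1) = Z ^ (p - 2) * Z := by
        rw [← Real.rpow_add_one hZ0.ne']; congr 1; ring
      have i5 : Z ^ (p - 1) ≤ (B * N * (Y * s)) ^ (p - 2) * (B * Y * (N * (N * (p - 2) + p))) := by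
        rw [i4]; exact mul_le_mul i3 i1 hZ0.le (by positivity)
      have i6 : K / 2 * ((1 - (ρ / 2) ^ N) / (τ / 2)) ≤ K / τ := by
        have : K / 2 * ((1 - (ρ / 2) ^ N) / (τ / 2)) = K / τ * (1 - (ρ / 2) ^ N) := by
          field_simp
        rw [this]
        have : 0 < K / τ := by positivity
        exact mul_le_of_le_one_right this.le (by linarith)
      have i7 : M * plusPowQ q (v x t) ≤ M * K ^ q := by
        apply mul_le_mul_of_nonneg_left _ (by linarith)
        apply plusPowQ_le hq _ hK
        have : W (s ^ 2) t ≤ K / 2 * 1 := by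
          simp only [hW]
          apply mul_le_mul_of_nonneg_left _ (by positivity)
          have := hdec s h1.le
          have := hφ0 t ht
          linarith
        linarith
      linarith


theorem pow_mul_exp_neg_le (n : ℕ) {x : ℝ} (hx : 0 ≤ x) :
    x ^ n * Real.exp (-x) ≤ n.factorial := by
  have h := Real.pow_div_factorial_le_exp x hx n
  rw [div_le_iff₀ (by positivity)] at h
  rw [Real.exp_neg, ← div_eq_mul_inv, div_le_iff₀ (Real.exp_pos x)]
  linarith

set_option maxHeartbeats 1000000 in
theorem phaseB_two {N : ℕ} {q m M : ℝ} (hq : 0 ≤ q) (hq1 : q < 1) (hm : 0 < m)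
    (hmM : m ≤ M) {v : Euc N → ℝ → ℝ} {c : Euc N} {ρ K τ F : ℝ}
    (hgood : ∀ x ∈ closedBall c 2, ∀ t ∈ Icc (-τ/2) 0, ∃ a vt f, GoodPt N 2 q m M v x t a vt f)
    (hcont : ContinuousOn (fun z : Euc N × ℝ => v z.1 z.2) (closedBall c 2 ×ˢ Icc (-τ/2) 0))
    (hρ : 0 < ρ) (hρ1 : ρ ≤ 1) (hK : 0 < K) (hτ : 0 < τ) (hτ1 : τ ≤ 1 / (N + 1))
    (hin : ∀ x ∈ closedBall c ρ, ∀ t ∈ Icc (-τ/2) 0, K / 2 ≤ v x t)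
    (hF : F = K * ρ ^ (2 * (N + 1)) * Real.exp (-2 / τ) / 2 ^ (N + 2)) (hcond : M ≤ F ^ (1 - q)) :
    ∀ y ∈ ball c 1, 0 < v y 0 := by
  set ν := N + 1 with hν
  have hτle : τ ≤ 1 := by
    refine hτ1.trans ?_
    rw [div_le_one (by positivity)]
    have : (0:ℝ) ≤ N := by positivity
    linarith
  have hvn : ∀ x, ‖x - c‖ ≤ 2 → ∀ t ∈ Icc (-τ/2) 0, 0 ≤ v x t := by
    intro x hx t ht
    obtain ⟨a, vt, f, hg⟩ := hgood x (by rw [mem_closedBall, dist_eq_norm]; exact hx) t ht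
    exact hg.nonneg
  have hF0 : 0 < F := by rw [hF]; positivity
  set B := K / (2 ^ (ν + 1) * ν.factorial) with hB
  have hB0 : 0 < B := by positivity
  have hFB : F = B * ρ ^ (2 * ν) * ν.factorial * Real.exp (-2 / τ) := by
    rw [hF, hB]; field_simp; rw [hν]
  set E : ℝ → ℝ → ℝ := fun r s => B * ((ρ ^ 2) ^ ν * (s⁻¹) ^ ν) * Real.exp (-r * s⁻¹ / 2) with hE
  have hE0 : ∀ r s, 0 < s → 0 < E r s := by intro r s hs; simp only [hE]; positivity
  -- bound at the inner boundary
  have hEin : ∀ r s, ρ ^ 2 ≤ r → 0 < s → E r s ≤ K / 2 := by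
    intro r s hr hs
    have h1 := pow_mul_exp_neg_le ν (x := ρ ^ 2 * s⁻¹ / 2) (by positivity)
    have h2 : Real.exp (-r * s⁻¹ / 2) ≤ Real.exp (-(ρ ^ 2 * s⁻¹ / 2)) := by
      apply Real.exp_le_exp.2
      have : ρ ^ 2 * s⁻¹ ≤ r * s⁻¹ := mul_le_mul_of_nonneg_right hr (by positivity)
      linarith
    simp only [hE]
    calc B * ((ρ ^ 2) ^ ν * (s⁻¹) ^ ν) * Real.exp (-r * s⁻¹ / 2)
        ≤ B * ((ρ ^ 2) ^ ν * (s⁻¹) ^ ν) * Real.exp (-(ρ ^ 2 * s⁻¹ / 2)) := by gcongr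
      _ = B * 2 ^ ν * ((ρ ^ 2 * s⁻¹ / 2) ^ ν * Real.exp (-(ρ ^ 2 * s⁻¹ / 2))) := by
          rw [div_pow, mul_pow]; field_simp
      _ ≤ B * 2 ^ ν * ν.factorial := by gcongr
      _ = K / 2 := by rw [hB, pow_succ]; field_simp
  -- small for small times
  have hEsm : ∀ r s, ρ ^ 2 ≤ r → 0 < s → E r s ≤ (B * 2 ^ (ν + 1) * (ν + 1).factorial / ρ ^ 2) * s := by
    intro r s hr hs
    have h1 := pow_mul_exp_neg_le (ν + 1) (x := ρ ^ 2 * s⁻¹ / 2) (by positivity)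
    have h2 : Real.exp (-r * s⁻¹ / 2) ≤ Real.exp (-(ρ ^ 2 * s⁻¹ / 2)) := by
      apply Real.exp_le_exp.2
      have : ρ ^ 2 * s⁻¹ ≤ r * s⁻¹ := mul_le_mul_of_nonneg_right hr (by positivity)
      linarith
    simp only [hE]
    calc B * ((ρ ^ 2) ^ ν * (s⁻¹) ^ ν) * Real.exp (-r * s⁻¹ / 2)
        ≤ B * ((ρ ^ 2) ^ ν * (s⁻¹) ^ ν) * Real.exp (-(ρ ^ 2 * s⁻¹ / 2)) := by gcongr
      _ = (B * 2 ^ (ν + 1) * s / ρ ^ 2) * ((ρ ^ 2 * s⁻¹ / 2) ^ (ν + 1) * Real.exp (-(ρ ^ 2 * s⁻¹ / 2))) := by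
          rw [div_pow, mul_pow]; field_simp
          rw [pow_succ (ρ ^ 2) ν, pow_succ (1 / s) ν]; field_simp
      _ ≤ (B * 2 ^ (ν + 1) * s / ρ ^ 2) * (ν + 1).factorial := by gcongr
      _ = _ := by ring
  -- outer boundary
  have hEout : ∀ s, 0 < s → s ≤ τ / 2 → E 4 s ≤ F := by
    intro s hs hsτ
    have h1 := pow_mul_exp_neg_le ν (x := s⁻¹) (by positivity)
    have h2 : Real.exp (-4 * s⁻¹ / 2) = Real.exp (-s⁻¹) * Real.exp (-s⁻¹) := by
      rw [← Real.exp_add]; congr 1; ring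
    have h3 : Real.exp (-s⁻¹) ≤ Real.exp (-2 / τ) := by
      apply Real.exp_le_exp.2
      have : (τ / 2)⁻¹ ≤ s⁻¹ := inv_anti₀ hs hsτ
      have e : (τ / 2)⁻¹ = 2 / τ := by rw [inv_div]
      rw [e] at this
      rw [neg_div]; linarith
    simp only [hE]
    rw [h2, hFB]
    calc B * ((ρ ^ 2) ^ ν * (s⁻¹) ^ ν) * (Real.exp (-s⁻¹) * Real.exp (-s⁻¹))
        = B * (ρ ^ 2) ^ ν * ((s⁻¹) ^ ν * Real.exp (-s⁻¹)) * Real.exp (-s⁻¹) := by ring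
      _ ≤ B * (ρ ^ 2) ^ ν * ν.factorial * Real.exp (-2 / τ) := by gcongr
      _ = _ := by rw [pow_mul]
  -- starting time
  set ε := min (τ / 4) (F / (B * 2 ^ (ν + 1) * (ν + 1).factorial / ρ ^ 2)) with hε
  have hε0 : 0 < ε := by rw [hε]; apply lt_min <;> positivity
  have hετ : ε ≤ τ / 4 := min_le_left _ _
  have hεF : (B * 2 ^ (ν + 1) * (ν + 1).factorial / ρ ^ 2) * ε ≤ F := by
    have h : ε ≤ F / (B * 2 ^ (ν + 1) * (ν + 1).factorial / ρ ^ 2) := min_le_right _ _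
    rw [le_div_iff₀ (by positivity)] at h
    linarith
  set W : ℝ → ℝ → ℝ := fun r t => E r (t + τ / 2) - F with hW
  have hsub : Icc (-τ / 2 + ε) 0 ⊆ Icc (-τ / 2) 0 := Icc_subset_Icc_left (by linarith)
  have main := compare_below (N := N) (ρ := ρ) (R := 2) (ta := -τ/2 + ε) (tb := 0) (le_refl (2:ℝ)) W
    (fun x hx t ht => hgood x hx t (hsub ht)) (hcont.mono (prod_mono_right hsub)) hρ ?_ ?_ ?_ ?_ ?_
  · intro y hy
    rw [mem_ball, dist_eq_norm] at hy
    rcases le_or_gt ‖y - c‖ ρ with h | h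
    · have := hin y (by rw [mem_closedBall, dist_eq_norm]; exact h) 0 ⟨by linarith, le_rfl⟩
      linarith
    · have h1 := main y 0 h.le (by linarith) ⟨by linarith, le_rfl⟩
      refine lt_of_lt_of_le ?_ h1
      have hs : 0 < ‖y - c‖ := by linarith
      simp only [hW, hE]
      rw [hFB, zero_add]
      have e1 : (ν.factorial : ℝ) < ((τ / 2)⁻¹) ^ ν := by
        have h1 : (ν : ℝ) < (τ / 2)⁻¹ := by
          rw [lt_inv_comm₀ (by positivity) (by positivity)]
          have : τ ≤ (ν:ℝ)⁻¹ := by rw [hν]; push_cast; simpa using hτ1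
          linarith
        calc (ν.factorial : ℝ) ≤ (ν:ℝ) ^ ν := by exact_mod_cast Nat.factorial_le_pow ν
          _ < _ := pow_lt_pow_left₀ h1 (by positivity) (by omega)
      have e2 : Real.exp (-2 / τ) ≤ Real.exp (-‖y - c‖ ^ 2 * (τ / 2)⁻¹ / 2) := by
        apply Real.exp_le_exp.2
        have : ‖y - c‖ ^ 2 ≤ 1 := pow_le_one₀ hs.le hy.le
        rw [inv_div, neg_mul, neg_div, neg_div, neg_le_neg_iff]
        have e : ‖y - c‖ ^ 2 * (2 / τ) / 2 = ‖y - c‖ ^ 2 / τ := by ring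
        rw [e]
        gcongr
        linarith
      have : B * ρ ^ (2 * ν) * ν.factorial * Real.exp (-2 / τ)
          < B * ((ρ ^ 2) ^ ν * ((τ / 2)⁻¹) ^ ν) * Real.exp (-‖y - c‖ ^ 2 * (τ / 2)⁻¹ / 2) := by
        rw [pow_mul, ← mul_assoc]
        calc B * (ρ ^ 2) ^ ν * ν.factorial * Real.exp (-2 / τ)
            < B * (ρ ^ 2) ^ ν * ((τ / 2)⁻¹) ^ ν * Real.exp (-2 / τ) := by
              gcongr
          _ ≤ _ := by gcongr
      linarith
  · simp only [hW, hE]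
    have hne : ∀ z ∈ Ici (ρ ^ 2) ×ˢ Icc (-τ / 2 + ε) 0, z.2 + τ / 2 ≠ 0 := by
      intro z hz
      have := hz.2.1
      have h2 : 0 < z.2 + τ / 2 := by linarith
      exact h2.ne'
    have hi : ContinuousOn (fun z : ℝ × ℝ => (z.2 + τ / 2)⁻¹) (Ici (ρ ^ 2) ×ˢ Icc (-τ / 2 + ε) 0) :=
      ContinuousOn.inv₀ (by fun_prop) hne
    fun_prop
  · intro x hx hx2
    refine le_trans ?_ (hvn x hx2 _ ⟨by linarith, by linarith⟩)
    simp only [hW]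
    have e : -τ / 2 + ε + τ / 2 = ε := by ring
    rw [e]
    have := hEsm (‖x - c‖ ^ 2) ε (pow_le_pow_left₀ hρ.le hx 2) hε0
    linarith
  · intro x hx t ht
    refine le_trans ?_ (hin x (by rw [mem_closedBall, dist_eq_norm, hx]) t (hsub ht))
    simp only [hW]
    have := hEin (‖x - c‖ ^ 2) (t + τ / 2) (by rw [hx]) (by linarith [ht.1])
    linarith
  · intro x hx t ht
    refine le_trans ?_ (hvn x hx.le t (hsub ht))
    simp only [hW]
    rw [hx]
    have := hEout (t + τ / 2) (by linarith [ht.1]) (by linarith [ht.2])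
    have e : (2:ℝ) ^ 2 = 4 := by norm_num
    rw [e]; linarith
  · intro x t h1 h2 h3 h4 hlt
    set r := ‖x - c‖ ^ 2 with hr
    have hr0 : 0 < r := by have : 0 < ‖x - c‖ := by linarith
                           positivity
    set s := t + τ / 2 with hs
    have hs0 : 0 < s := by linarith
    have hs1 : s ≤ 1 := by linarith
    have hv0 := hvn x h2.le t ⟨by linarith, h4⟩
    have hEF : F < E r s := by
      have : v x t < E r s - F := hlt
      linarith
    refine ⟨fun r => E r s * (-s⁻¹ / 2), E r s * (-s⁻¹ / 2) * (-s⁻¹ / 2),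
      E r s * (-ν * s⁻¹ + r * s⁻¹ ^ 2 / 2), ?_, ?_, ?_, Or.inr rfl, ?_⟩
    · refine Eventually.of_forall fun r => ?_
      have d1 : HasDerivAt (fun r : ℝ => -r * s⁻¹ / 2) (-s⁻¹ / 2) r := by
        have := (((hasDerivAt_id r).neg).mul_const s⁻¹).div_const 2
        simpa using this
      have := (d1.exp.const_mul (B * ((ρ ^ 2) ^ ν * (s⁻¹) ^ ν))).sub_const F
      refine this.congr_deriv ?_
      simp only [hE]; ring
    · have d1 : HasDerivAt (fun r : ℝ => -r * s⁻¹ / 2) (-s⁻¹ / 2) r := by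
        have := (((hasDerivAt_id r).neg).mul_const s⁻¹).div_const 2
        simpa using this
      have := (d1.exp.const_mul (B * ((ρ ^ 2) ^ ν * (s⁻¹) ^ ν))).mul_const (-s⁻¹ / 2)
      refine this.congr_deriv ?_
      simp only [hE]; ring
    · have d0 : HasDerivAt (fun t : ℝ => t + τ / 2) 1 t := (hasDerivAt_id t).add_const _
      have d1 : HasDerivAt (fun t : ℝ => (t + τ / 2)⁻¹) (-s⁻¹ ^ 2) t := by
        have := d0.inv hs0.ne'
        refine this.congr_deriv ?_
        rw [← hs]; field_simp
      have d2 := d1.pow ν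
      have d3 := ((d1.const_mul (-r)).div_const 2).exp
      have := (((d2.const_mul ((ρ ^ 2) ^ ν)).const_mul B).mul d3).sub_const F
      refine this.congr_deriv ?_
      simp only [hE]
      rw [← hs]
      have : (s⁻¹) ^ ν = (s⁻¹) ^ (ν - 1) * s⁻¹ := by rw [← pow_succ, hν]; simp
      rw [this]
      simp only [Pi.pow_apply, ← hs, this]
      ring
    · have hM : M * plusPowQ q (v x t) < E r s := by
        have hE1 := hE0 r s hs0
        have w1 : plusPowQ q (v x t) ≤ (E r s) ^ q := by
          apply plusPowQ_le hq _ hE1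
          have : v x t < E r s - F := hlt
          linarith
        calc M * plusPowQ q (v x t) ≤ F ^ (1 - q) * (E r s) ^ q := by
              apply mul_le_mul hcond w1 plusPowQ_nonneg (by positivity)
          _ < (E r s) ^ (1 - q) * (E r s) ^ q := by
              apply mul_lt_mul_of_pos_right _ (by positivity)
              exact Real.rpow_lt_rpow hF0.le hEF (by linarith)
          _ = E r s := by rw [← Real.rpow_add hE1]; norm_num
      have hsinv : 1 ≤ s⁻¹ := (one_le_inv₀ hs0).2 hs1
      rw [sub_self, Real.rpow_zero, one_mul]
      have hE1 := hE0 r s hs0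
      have e : 4 * (E r s * (-s⁻¹ / 2) * (-s⁻¹ / 2)) * r * (2 - 1) + 2 * (E r s * (-s⁻¹ / 2)) * (N + 2 - 2)
          = E r s * (-ν * s⁻¹ + r * s⁻¹ ^ 2 / 2) + E r s * (s⁻¹ + r * s⁻¹ ^ 2 / 2) := by
        rw [hν]; push_cast; ring
      rw [e]
      have : E r s * 1 ≤ E r s * (s⁻¹ + r * s⁻¹ ^ 2 / 2) := by
        apply mul_le_mul_of_nonneg_left _ hE1.le
        have : 0 < r * s⁻¹ ^ 2 / 2 := by positivity
        linarith
      linarith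


structure Reg (N : ℕ) (p q m M : ℝ) (v : Euc N → ℝ → ℝ) (S : Set (Euc N)) : Prop where
  good : ∀ x ∈ S, ∀ t ∈ Icc (-1 : ℝ) 0, ∃ a vt f, GoodPt N p q m M v x t a vt f
  cont : ContinuousOn (fun z : Euc N × ℝ => v z.1 z.2) (S ×ˢ Icc (-1 : ℝ) 0)
  mono : ∀ x ∈ S, ∀ s ∈ Icc (-1 : ℝ) 0, ∀ t ∈ Icc (-1 : ℝ) 0, s ≤ t → v x s ≤ v x t

theorem Reg.subset {N : ℕ} {p q m M : ℝ} {v : Euc N → ℝ → ℝ} {S T : Set (Euc N)}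
    (h : Reg N p q m M v S) (hT : T ⊆ S) : Reg N p q m M v T :=
  ⟨fun x hx => h.good x (hT hx), h.cont.mono (prod_mono_left hT), fun x hx => h.mono x (hT hx)⟩

theorem weighted_max {N : ℕ} {g : Euc N → ℝ} {x0 : Euc N} (k : ℕ)
    (hg : ContinuousOn g (closedBall x0 1)) (hk : 1 ≤ k) (h0 : 0 < g x0)
    (hnn : ∀ x ∈ closedBall x0 1, 0 ≤ g x) :
    ∃ c d, 0 < d ∧ d ≤ 1 ∧ c ∈ closedBall x0 1 ∧ closedBall c d ⊆ closedBall x0 1 ∧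
      g x0 ≤ g c * d ^ k ∧ ∀ x ∈ closedBall c (d / 2), g x ≤ 2 ^ k * g c := by
  obtain ⟨c, hc, hmax⟩ := (isCompact_closedBall x0 (1:ℝ)).exists_isMaxOn
    ⟨x0, mem_closedBall_self (by norm_num)⟩
    (f := fun x => g x * (1 - ‖x - x0‖) ^ k) (hg.mul (by fun_prop))
  have hmax' : ∀ x ∈ closedBall x0 1, g x * (1 - ‖x - x0‖) ^ k ≤ g c * (1 - ‖c - x0‖) ^ k := hmax
  have h1 : g x0 ≤ g c * (1 - ‖c - x0‖) ^ k := by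
    have := hmax' x0 (mem_closedBall_self (by norm_num))
    simpa using this
  have hc1 : ‖c - x0‖ ≤ 1 := by rw [← dist_eq_norm]; exact hc
  have hd : 0 < 1 - ‖c - x0‖ := by
    rcases lt_or_eq_of_le hc1 with h | h
    · linarith
    · rw [h, sub_self, zero_pow (by omega), mul_zero] at h1
      linarith
  refine ⟨c, 1 - ‖c - x0‖, hd, by linarith [norm_nonneg (c - x0)], hc, ?_, h1, ?_⟩
  · apply closedBall_subset_closedBall'
    rw [dist_eq_norm]; linarith
  · intro x hx
    have hxc : ‖x - c‖ ≤ (1 - ‖c - x0‖) / 2 := by rw [← dist_eq_norm]; exact hx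
    have e : ‖x - x0‖ ≤ ‖x - c‖ + ‖c - x0‖ := by
      have : x - x0 = (x - c) + (c - x0) := by abel
      rw [this]; exact norm_add_le _ _
    have hx1 : x ∈ closedBall x0 1 := by rw [mem_closedBall, dist_eq_norm]; linarith
    have h2 := hmax' x hx1
    have h3 : ((1 - ‖c - x0‖) / 2) ^ k ≤ (1 - ‖x - x0‖) ^ k :=
      pow_le_pow_left₀ (by positivity) (by linarith) k
    have h4 : g x * ((1 - ‖c - x0‖) / 2) ^ k ≤ g c * (1 - ‖c - x0‖) ^ k :=
      (mul_le_mul_of_nonneg_left h3 (hnn x hx1)).trans h2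
    rw [div_pow, mul_div_assoc', div_le_iff₀ (by positivity)] at h4
    have hdk : 0 < (1 - ‖c - x0‖) ^ k := by positivity
    have h5 : g x * (1 - ‖c - x0‖) ^ k ≤ (2 ^ k * g c) * (1 - ‖c - x0‖) ^ k := by linarith
    exact le_of_mul_le_mul_right h5 hdk

theorem exists_large {a b : ℝ} (ha : 0 < a) : ∃ C : ℝ, ∀ x, C ≤ x → b ≤ x ^ a := by
  have := tendsto_rpow_atTop ha
  obtain ⟨C, hC⟩ := Filter.eventually_atTop.1 (this.eventually_ge_atTop b)
  exact ⟨C, hC⟩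

/-- combination of the steps up to the end of phase A. -/
theorem S1_common {N : ℕ} (hN : 1 ≤ N) {p q m M : ℝ} (hp : 2 ≤ p) (hq : 0 ≤ q) (hm : 0 < m)
    (hmM : m ≤ M) {v : Euc N → ℝ → ℝ} {x0 : Euc N} (hreg : Reg N p q m M v (closedBall x0 3))
    {τ : ℝ} (hτ : 0 < τ) (hτ1 : τ ≤ 1) (k : ℕ) (hk : 1 ≤ k) (h0 : 0 < v x0 (-τ)) :
    ∃ c d K, c ∈ closedBall x0 1 ∧ 0 < d ∧ d ≤ 1 ∧ 0 < K ∧ v x0 (-τ) ≤ K * d ^ k ∧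
      ∀ ℓ, 0 < ℓ → (8 * 2 ^ k * (N + p)) ^ 2 ≤ ℓ ^ 2 * d →
        4 * (2 ^ k) ^ 4 ≤ ℓ ^ 4 * (τ / 2) * K ^ (p - 2) → M * (2 ^ k * K) ^ q ≤ K ^ (p - 1) →
        1 / (4 * ℓ ^ 2) ≤ d ∧
        ∀ y ∈ closedBall c (1 / (4 * ℓ ^ 2)), ∀ t ∈ Icc (-τ / 2) 0, K / 2 ≤ v y t := by
  have hτm : -τ ∈ Icc (-1 : ℝ) 0 := ⟨by linarith, by linarith⟩
  have hs13 : closedBall x0 1 ⊆ closedBall x0 3 := closedBall_subset_closedBall (by norm_num)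
  have hg : ContinuousOn (fun x => v x (-τ)) (closedBall x0 1) := by
    have : ContinuousOn (fun x : Euc N => (x, -τ)) (closedBall x0 1) := by fun_prop
    exact hreg.cont.comp this (fun x hx => ⟨hs13 hx, hτm⟩)
  obtain ⟨c, d, hd, hd1, hc, hcs, h1, h2⟩ := weighted_max k hg hk h0 (by
    intro x hx
    obtain ⟨a, vt, f, hgd⟩ := hreg.good x (hs13 hx) _ hτm
    exact hgd.nonneg)
  have hK : 0 < v c (-τ) := by
    by_contra hneg
    push Not at hneg
    have := mul_nonpos_of_nonpos_of_nonneg hneg (by positivity : 0 ≤ d ^ k)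
    linarith
  refine ⟨c, d, v c (-τ), hc, hd, hd1, hK, h1, ?_⟩
  intro ℓ hℓ c1 c2 c3
  have hsub : closedBall c d ⊆ closedBall x0 3 := hcs.trans hs13
  have hI : Icc (-τ) (-τ + τ / 2) ⊆ Icc (-1 : ℝ) 0 := Icc_subset_Icc (by linarith) (by linarith)
  obtain ⟨r1, r2⟩ := phaseA' hN hp hq hm hmM (v := v) (c := c) (t0 := -τ) (d := d) (h := τ / 2)
    (K := v c (-τ)) (Λ := 2 ^ k) (ℓ := ℓ)
    (fun x hx t ht => hreg.good x (hsub hx) t (hI ht)) (hreg.cont.mono (prod_mono hsub hI))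
    (fun x hx s hs => hreg.mono x (hsub hx) _ hτm _ (hI hs) hs.1) (one_le_pow₀ (by norm_num)) hℓ hK hd hd1
    (by positivity) rfl h2 c1 c2 c3
  refine ⟨r1, fun y hy t ht => (r2 y hy).trans ?_⟩
  have hyS := hsub (closedBall_subset_closedBall r1 hy)
  exact hreg.mono y hyS _ ⟨by linarith, by linarith⟩ _ ⟨by linarith [ht.1], ht.2⟩ (by linarith [ht.1])

theorem S1_gt {N : ℕ} (hN : 1 ≤ N) {p q m M : ℝ} (hp : 2 < p) (hq : 0 ≤ q) (hq1 : q < 1) (hm : 0 < m)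
    (hmM : m ≤ M) : ∃ C : ℝ, 1 ≤ C ∧ ∀ (v : Euc N → ℝ → ℝ) (x0 : Euc N),
      Reg N p q m M v (closedBall x0 3) →
      (∀ x ∈ closedBall x0 1, ∃ y ∈ ball x 1, v y 0 = 0) →
      ∀ τ ∈ Ioc (0:ℝ) 1, v x0 (-τ) ≤ C * τ ^ (-1 / (p - 2)) := by
  have hN' : (1 : ℝ) ≤ N := by exact_mod_cast hN
  obtain ⟨k, hk⟩ := exists_nat_ge (max 1 (N * (p - 1) / (p - 2)))
  have hk1 : 1 ≤ k := by exact_mod_cast (le_max_left _ _).trans hk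
  have hk2 : N * (p - 1) ≤ k * (p - 2) := by
    have := (le_max_right _ _).trans hk
    rwa [div_le_iff₀ (by linarith)] at this
  set Λ : ℝ := 2 ^ k with hΛ
  have hΛ1 : 1 ≤ Λ := one_le_pow₀ (by norm_num)
  set c' : ℝ := 1 / (4 * (8 * Λ * (N + p)) ^ 2) with hc'
  have hc'0 : 0 < c' := by positivity
  set c'' : ℝ := (c' ^ N / 2 ^ (N + 2)) ^ (p - 1) with hc''
  have hc''0 : 0 < c'' := by positivity
  obtain ⟨C1, hC1⟩ := exists_large (b := (2 + M) / c'') (by linarith : 0 < p - 2)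
  obtain ⟨C2, hC2⟩ := exists_large (b := M * Λ ^ q) (by linarith : 0 < p - 1 - q)
  set C := max 1 (max C1 C2) with hC
  have hCge1 : 1 ≤ C := le_max_left _ _
  have hCC1 : C1 ≤ C := (le_max_left _ _).trans (le_max_right _ _)
  have hCC2 : C2 ≤ C := (le_max_right _ _).trans (le_max_right _ _)
  refine ⟨C, hCge1, ?_⟩
  intro v x0 hreg hholes τ hτ
  by_contra hneg
  push Not at hneg
  obtain ⟨hτ0, hτ1⟩ := hτ
  have hpow0 : 0 < τ ^ (-1 / (p - 2)) := Real.rpow_pos_of_pos hτ0 _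
  set K0 := v x0 (-τ) with hK0
  have hK00 : 0 < K0 := lt_trans (by positivity) hneg
  have hK0p : C ^ (p - 2) / τ ≤ K0 ^ (p - 2) := by
    have h1 : (C * τ ^ (-1 / (p - 2))) ^ (p - 2) ≤ K0 ^ (p - 2) :=
      Real.rpow_le_rpow (by positivity) hneg.le (by linarith)
    have h2 : (C * τ ^ (-1 / (p - 2))) ^ (p - 2) = C ^ (p - 2) / τ := by
      rw [Real.mul_rpow (by positivity) hpow0.le, ← Real.rpow_mul hτ0.le,
        div_mul_cancel₀ _ (by linarith : p - 2 ≠ 0), Real.rpow_neg_one, div_eq_mul_inv]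
    rwa [h2] at h1
  have hCK0 : C ≤ K0 := by
    have h1 : 1 ≤ τ ^ (-1 / (p - 2)) := Real.one_le_rpow_of_pos_of_le_one_of_nonpos hτ0 hτ1
      (div_nonpos_of_nonpos_of_nonneg (by norm_num) (by linarith))
    nlinarith
  obtain ⟨c, d, K, hc, hd, hd1, hK, hKd, H⟩ := S1_common hN hp.le hq hm hmM hreg hτ0 hτ1 k hk1 hK00
  have hK0K : K0 ≤ K := by
    have : d ^ k ≤ 1 := pow_le_one₀ hd.le hd1
    nlinarith
  have hCK : C ≤ K := hCK0.trans hK0K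
  have hK1 : 1 ≤ K := hCge1.trans hCK
  set ℓ := 8 * Λ * (N + p) / √d with hℓ
  have hsd : 0 < √d := Real.sqrt_pos.2 hd
  have hℓ0 : 0 < ℓ := by positivity
  have hℓ2 : ℓ ^ 2 * d = (8 * Λ * (N + p)) ^ 2 := by
    rw [hℓ, div_pow, Real.sq_sqrt hd.le]; field_simp
  have hCp : 1 ≤ C ^ (p - 2) := Real.one_le_rpow hCge1 (by linarith)
  have hKp : 1 ≤ τ * K ^ (p - 2) := by
    have h1 : K0 ^ (p - 2) ≤ K ^ (p - 2) := Real.rpow_le_rpow hK00.le hK0K (by linarith)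
    have h2 := hK0p.trans h1
    rw [div_le_iff₀ hτ0] at h2
    linarith
  have c2 : 4 * Λ ^ 4 ≤ ℓ ^ 4 * (τ / 2) * K ^ (p - 2) := by
    have h1 : (8 * Λ * 3) ^ 2 ≤ ℓ ^ 2 := by
      calc (8 * Λ * 3) ^ 2 ≤ (8 * Λ * (N + p)) ^ 2 := by
            apply pow_le_pow_left₀ (by positivity)
            apply mul_le_mul_of_nonneg_left (by linarith) (by positivity)
        _ = ℓ ^ 2 * d := hℓ2.symm
        _ ≤ ℓ ^ 2 := mul_le_of_le_one_right (by positivity) hd1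
    have h2 : ((8 * Λ * 3) ^ 2) ^ 2 ≤ (ℓ ^ 2) ^ 2 := pow_le_pow_left₀ (by positivity) h1 2
    have h3 : ℓ ^ 4 * 1 ≤ ℓ ^ 4 * (τ * K ^ (p - 2)) := mul_le_mul_of_nonneg_left hKp (by positivity)
    have h4 : 0 < Λ ^ 4 := by positivity
    nlinarith
  have c3 : M * (Λ * K) ^ q ≤ K ^ (p - 1) := by
    have h1 := hC2 K (hCC2.trans hCK)
    have h2 : K ^ (p - 1) = K ^ (p - 1 - q) * K ^ q := by
      rw [← Real.rpow_add hK]; congr 1; ring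
    rw [h2, Real.mul_rpow (by positivity) hK.le, ← mul_assoc]
    exact mul_le_mul_of_nonneg_right h1 (by positivity)
  obtain ⟨r1, r2⟩ := H ℓ hℓ0 hℓ2.ge c2 c3
  set ρ := 1 / (4 * ℓ ^ 2) with hρ
  have hρ0 : 0 < ρ := by positivity
  have hρd : ρ = c' * d := by
    rw [hρ, hc', ← hℓ2]; field_simp
  have hsub : closedBall c 2 ⊆ closedBall x0 3 := by
    apply closedBall_subset_closedBall'
    rw [mem_closedBall] at hc; linarith
  have hI : Icc (-τ / 2) 0 ⊆ Icc (-1 : ℝ) 0 := Icc_subset_Icc_left (by linarith)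
  have hB := phaseB_gt hN hp hq hm hmM (v := v) (c := c) (ρ := ρ) (K := K) (τ := τ)
    (fun x hx t ht => hreg.good x (hsub hx) t (hI ht)) (hreg.cont.mono (prod_mono hsub hI))
    hρ0 (r1.trans hd1) hK hτ0 r2 (by
      have e1 : (K * ρ ^ N / 2 ^ (N + 2)) ^ (p - 1) = c'' * (K ^ (p - 1) * d ^ (N * (p - 1))) := by
        have : K * ρ ^ N / 2 ^ (N + 2) = (c' ^ N / 2 ^ (N + 2)) * (K * d ^ N) := by
          rw [hρd, mul_pow]; ring
        rw [this, Real.mul_rpow (by positivity) (by positivity), Real.mul_rpow hK.le (by positivity),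
          ← Real.rpow_natCast d N, ← Real.rpow_mul hd.le]
      have e2 : K * K0 ^ (p - 2) ≤ K ^ (p - 1) * d ^ (N * (p - 1)) := by
        have a1 : K0 ^ (p - 2) ≤ K ^ (p - 2) * d ^ (k * (p - 2)) := by
          calc K0 ^ (p - 2) ≤ (K * d ^ k) ^ (p - 2) :=
                Real.rpow_le_rpow hK00.le hKd (by linarith)
            _ = _ := by
                rw [Real.mul_rpow hK.le (by positivity), ← Real.rpow_natCast d k, ← Real.rpow_mul hd.le]
        have a2 : d ^ (k * (p - 2)) ≤ d ^ (N * (p - 1)) :=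
          Real.rpow_le_rpow_of_exponent_ge hd hd1 hk2
        have a3 : K ^ (p - 1) = K * K ^ (p - 2) := by
          rw [mul_comm, ← Real.rpow_add_one hK.ne']; congr 1; ring
        rw [a3, mul_assoc]
        apply mul_le_mul_of_nonneg_left _ hK.le
        exact a1.trans (mul_le_mul_of_nonneg_left a2 (by positivity))
      rw [e1]
      have e3 : 2 + M ≤ c'' * C ^ (p - 2) := by
        have := hC1 C hCC1
        rw [div_le_iff₀ hc''0] at this
        linarith
      have e4 : K * (2 + M) / τ ≤ c'' * (K * K0 ^ (p - 2)) := by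
        calc K * (2 + M) / τ ≤ K * (c'' * C ^ (p - 2)) / τ := by gcongr
          _ = c'' * (K * (C ^ (p - 2) / τ)) := by ring
          _ ≤ _ := by gcongr
      have e5 : M * K ^ q ≤ M * K / τ := by
        have a1 : K ^ q ≤ K := by
          calc K ^ q ≤ K ^ (1:ℝ) := Real.rpow_le_rpow_of_exponent_le hK1 hq1.le
            _ = K := Real.rpow_one K
        have hM0 : 0 ≤ M := by linarith
        rw [le_div_iff₀ hτ0]
        calc M * K ^ q * τ ≤ M * K ^ q * 1 := by gcongr
          _ ≤ M * K := by rw [mul_one]; gcongr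
      calc K / τ + M * K ^ q ≤ K / τ + M * K / τ := by linarith
        _ < K * (2 + M) / τ := by
            rw [← add_div]
            apply div_lt_div_of_pos_right _ hτ0
            linarith
        _ ≤ _ := e4.trans (mul_le_mul_of_nonneg_left e2 hc''0.le))
  obtain ⟨y, hy, hy0⟩ := hholes c hc
  have := hB y hy
  linarith


set_option maxHeartbeats 1000000 in
theorem S1_two {N : ℕ} (hN : 1 ≤ N) {q m M : ℝ} (hq : 0 ≤ q) (hq1 : q < 1) (hm : 0 < m)
    (hmM : m ≤ M) : ∃ C : ℝ, 1 ≤ C ∧ ∀ (v : Euc N → ℝ → ℝ) (x0 : Euc N),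
      Reg N 2 q m M v (closedBall x0 3) →
      (∀ x ∈ closedBall x0 1, ∃ y ∈ ball x 1, v y 0 = 0) →
      ∀ τ ∈ Ioc (0:ℝ) (1 / (N + 1)), v x0 (-τ) ≤ C * Real.exp (3 / τ) := by
  have hN' : (1 : ℝ) ≤ N := by exact_mod_cast hN
  set k := 2 * (N + 1) with hk
  have hk1 : 1 ≤ k := by omega
  set Λ : ℝ := 2 ^ k with hΛ
  have hΛ1 : 1 ≤ Λ := one_le_pow₀ (by norm_num)
  set c' : ℝ := 1 / (4 * (8 * Λ * (N + 2)) ^ 2) with hc'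
  have hc'0 : 0 < c' := by positivity
  set c'' : ℝ := c' ^ k / (k.factorial * 2 ^ (N + 2)) with hc''
  have hc''0 : 0 < c'' := by positivity
  obtain ⟨C1, hC1⟩ := exists_large (b := M / c'' ^ (1 - q)) (by linarith : 0 < 1 - q)
  obtain ⟨C2, hC2⟩ := exists_large (b := M * Λ ^ q) (by linarith : 0 < 1 - q)
  set C := max 1 (max C1 C2) with hC
  have hCge1 : 1 ≤ C := le_max_left _ _
  have hCC1 : C1 ≤ C := (le_max_left _ _).trans (le_max_right _ _)
  have hCC2 : C2 ≤ C := (le_max_right _ _).trans (le_max_right _ _)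
  refine ⟨C, hCge1, ?_⟩
  intro v x0 hreg hholes τ hτ
  by_contra hneg
  push Not at hneg
  obtain ⟨hτ0, hτN⟩ := hτ
  have hτ1 : τ ≤ 1 := by
    refine hτN.trans ?_
    rw [div_le_one (by positivity)]
    linarith
  set K0 := v x0 (-τ) with hK0
  have hK00 : 0 < K0 := lt_trans (by positivity) hneg
  have hCK0 : C ≤ K0 := by
    have h1 : 1 ≤ Real.exp (3 / τ) := Real.one_le_exp (by positivity)
    nlinarith
  obtain ⟨c, d, K, hc, hd, hd1, hK, hKd, H⟩ := S1_common hN le_rfl hq hm hmM hreg hτ0 hτ1 k hk1 hK00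
  have hK0K : K0 ≤ K := by
    have : d ^ k ≤ 1 := pow_le_one₀ hd.le hd1
    nlinarith
  have hCK : C ≤ K := hCK0.trans hK0K
  have hdτ : 0 < d * τ := by positivity
  have hdτ1 : d * τ ≤ 1 := mul_le_one₀ hd1 hτ0.le hτ1
  set ℓ := 8 * Λ * (N + 2) / √(d * τ) with hℓ
  have hsd : 0 < √(d * τ) := Real.sqrt_pos.2 hdτ
  have hℓ0 : 0 < ℓ := by positivity
  have hℓ2 : ℓ ^ 2 * (d * τ) = (8 * Λ * (N + 2)) ^ 2 := by
    rw [hℓ, div_pow, Real.sq_sqrt hdτ.le]; field_simp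
  have c1 : (8 * Λ * (N + 2)) ^ 2 ≤ ℓ ^ 2 * d := by
    rw [← hℓ2]
    apply mul_le_mul_of_nonneg_left _ (by positivity)
    exact mul_le_of_le_one_right hd.le hτ1
  have hA : (8 * Λ * 3) ^ 2 ≤ (8 * Λ * (N + 2)) ^ 2 := by
    apply pow_le_pow_left₀ (by positivity)
    apply mul_le_mul_of_nonneg_left (by linarith) (by positivity)
  have c2 : 4 * Λ ^ 4 ≤ ℓ ^ 4 * (τ / 2) * K ^ ((2:ℝ) - 2) := by
    rw [sub_self, Real.rpow_zero, mul_one]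
    have h1 : (8 * Λ * 3) ^ 2 ≤ ℓ ^ 2 * τ := by
      calc (8 * Λ * 3) ^ 2 ≤ ℓ ^ 2 * (d * τ) := hA.trans hℓ2.ge
        _ ≤ ℓ ^ 2 * τ := mul_le_mul_of_nonneg_left (mul_le_of_le_one_left hτ0.le hd1) (by positivity)
    have h1' : (8 * Λ * 3) ^ 2 ≤ ℓ ^ 2 := h1.trans (mul_le_of_le_one_right (by positivity) hτ1)
    have h2 : (8 * Λ * 3) ^ 2 * (8 * Λ * 3) ^ 2 ≤ (ℓ ^ 2 * τ) * ℓ ^ 2 :=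
      mul_le_mul h1 h1' (by positivity) (by positivity)
    have h4 : 0 < Λ ^ 4 := by positivity
    nlinarith
  have c3 : M * (Λ * K) ^ q ≤ K ^ ((2:ℝ) - 1) := by
    have h1 := hC2 K (hCC2.trans hCK)
    have h2 : K ^ ((2:ℝ) - 1) = K ^ (1 - q) * K ^ q := by
      rw [← Real.rpow_add hK]; congr 1; ring
    rw [h2, Real.mul_rpow (by positivity) hK.le, ← mul_assoc]
    exact mul_le_mul_of_nonneg_right h1 (by positivity)
  obtain ⟨r1, r2⟩ := H ℓ hℓ0 c1 c2 c3
  set ρ := 1 / (4 * ℓ ^ 2) with hρ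
  have hρ0 : 0 < ρ := by positivity
  have hρd : ρ = c' * (d * τ) := by
    rw [hρ, hc', ← hℓ2]; field_simp
  have hsub : closedBall c 2 ⊆ closedBall x0 3 := by
    apply closedBall_subset_closedBall'
    rw [mem_closedBall] at hc; linarith
  have hI : Icc (-τ / 2) 0 ⊆ Icc (-1 : ℝ) 0 := Icc_subset_Icc_left (by linarith)
  have hB := phaseB_two hq hq1 hm hmM (v := v) (c := c) (ρ := ρ) (K := K) (τ := τ)
    (fun x hx t ht => hreg.good x (hsub hx) t (hI ht)) (hreg.cont.mono (prod_mono hsub hI))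
    hρ0 (r1.trans hd1) hK hτ0 hτN r2 rfl (by
      have e0 : Real.exp (-(1/τ)) ≤ k.factorial * τ ^ k := by
        have := pow_mul_exp_neg_le k (x := 1 / τ) (by positivity)
        rw [one_div, inv_pow, ← one_div τ, inv_mul_le_iff₀ (by positivity)] at this
        linarith
      have e1 : c'' * C ≤ K * ρ ^ k * Real.exp (-2 / τ) / 2 ^ (N + 2) := by
        have a1 : K * ρ ^ k = (K * d ^ k) * (c' ^ k * τ ^ k) := by
          rw [hρd, mul_pow, mul_pow]; ring
        have a2 : C * Real.exp (3 / τ) * (c' ^ k * (Real.exp (-(1/τ)) / k.factorial)) ≤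
            (K * d ^ k) * (c' ^ k * τ ^ k) := by
          apply mul_le_mul (hneg.le.trans hKd) _ (by positivity) (by positivity)
          apply mul_le_mul_of_nonneg_left _ (by positivity)
          rw [div_le_iff₀ (by positivity)]; linarith
        rw [a1, le_div_iff₀ (by positivity)]
        refine le_trans (le_of_eq ?_) (mul_le_mul_of_nonneg_right a2 (Real.exp_pos _).le)
        have a3 : Real.exp (3 / τ) * Real.exp (-(1/τ)) * Real.exp (-2/τ) = 1 := by
          rw [← Real.exp_add, ← Real.exp_add]
          have : 3 / τ + -(1/τ) + -2/τ = 0 := by ring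
          rw [this, Real.exp_zero]
        rw [hc'']
        calc c' ^ k / (↑k.factorial * 2 ^ (N + 2)) * C * 2 ^ (N + 2)
            = C * (c' ^ k / k.factorial) * (Real.exp (3 / τ) * Real.exp (-(1/τ)) * Real.exp (-2/τ)) := by
              rw [a3]; field_simp
          _ = _ := by ring
      calc M ≤ c'' ^ (1 - q) * C ^ (1 - q) := by
            have := hC1 C hCC1
            rw [div_le_iff₀ (by positivity)] at this
            linarith
        _ = (c'' * C) ^ (1 - q) := by rw [Real.mul_rpow hc''0.le (by linarith)]
        _ ≤ _ := Real.rpow_le_rpow (by positivity) e1 (by linarith))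
  obtain ⟨y, hy, hy0⟩ := hholes c hc
  have := hB y hy
  linarith


/-- comparison from above on a ball. -/
theorem compare_above {N : ℕ} {p q m M : ℝ} (hp : 2 ≤ p) (hm : 0 < m) {v : Euc N → ℝ → ℝ} {c : Euc N}
    {R ta tb : ℝ} (W : ℝ → ℝ → ℝ)
    (hgood : ∀ x ∈ closedBall c R, ∀ t ∈ Icc ta tb, ∃ a vt f, GoodPt N p q m M v x t a vt f)
    (hcont : ContinuousOn (fun z : Euc N × ℝ => v z.1 z.2) (closedBall c R ×ˢ Icc ta tb))
    (hW : ContinuousOn (fun z : ℝ × ℝ => W z.1 z.2) (univ ×ˢ Icc ta tb))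
    (hW0 : ∀ x, ∀ t ∈ Icc ta tb, 0 ≤ W (‖x - c‖ ^ 2) t)
    (hinit : ∀ x, ‖x - c‖ ≤ R → v x ta ≤ W (‖x - c‖ ^ 2) ta)
    (houter : ∀ x, ‖x - c‖ = R → ∀ t ∈ Icc ta tb, v x t ≤ W (‖x - c‖ ^ 2) t)
    (hmid : ∀ x t, ‖x - c‖ < R → ta < t → t ≤ tb →
      ∃ (F1 : ℝ → ℝ) (F2 Wt : ℝ), (∀ᶠ r in 𝓝 (‖x - c‖ ^ 2), HasDerivAt (fun r => W r t) (F1 r) r) ∧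
        HasDerivAt F1 F2 (‖x - c‖ ^ 2) ∧ HasDerivAt (fun s => W (‖x - c‖ ^ 2) s) Wt t ∧
        ((2 * |F1 (‖x - c‖ ^ 2)| * ‖x - c‖) ^ (p - 2) *
          (4 * F2 * ‖x - c‖ ^ 2 * (p - 1) + 2 * F1 (‖x - c‖ ^ 2) * (N + p - 2)) ≤ Wt) ∧
        (p = 2 ∨ (x ≠ c ∧ F1 (‖x - c‖ ^ 2) ≠ 0) ∨ ∃ C κ : ℝ, p / (p - 1) < κ ∧
          ∀ᶠ y in 𝓝 x, W (‖y - c‖ ^ 2) t ≤ W (‖x - c‖ ^ 2) t + C * ‖y - x‖ ^ κ)) :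
    ∀ x t, ‖x - c‖ ≤ R → t ∈ Icc ta tb → v x t ≤ W (‖x - c‖ ^ 2) t := by
  intro x0 t0 hx0' ht0
  by_contra hneg
  push Not at hneg
  set S : Set (Euc N × ℝ) := closedBall c R ×ˢ Icc ta tb with hS
  have hSc : IsCompact S := (isCompact_closedBall c R).prod isCompact_Icc
  have hcS : ContinuousOn (fun z : Euc N × ℝ => v z.1 z.2 - W (‖z.1 - c‖ ^ 2) z.2) S := by
    apply ContinuousOn.sub hcont
    have : ContinuousOn (fun z : Euc N × ℝ => (‖z.1 - c‖ ^ 2, z.2)) S := by fun_prop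
    exact hW.comp this (fun z hz => ⟨mem_univ _, hz.2⟩)
  have hmem0 : (x0, t0) ∈ S := ⟨by rw [mem_closedBall, dist_eq_norm]; exact hx0', ht0⟩
  obtain ⟨⟨x, t⟩, hmem, hmax⟩ := hSc.exists_isMaxOn ⟨_, hmem0⟩ hcS
  have hmax' : ∀ z ∈ S, v z.1 z.2 - W (‖z.1 - c‖ ^ 2) z.2 ≤ v x t - W (‖x - c‖ ^ 2) t := hmax
  have hlt : W (‖x - c‖ ^ 2) t < v x t := by
    have := hmax' _ hmem0
    simp only at this
    linarith
  obtain ⟨hxR, htm⟩ := hmem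
  simp only at hxR htm
  have hxR' : ‖x - c‖ ≤ R := by rw [← dist_eq_norm]; exact hxR
  have h2 : ‖x - c‖ < R := lt_of_le_of_ne hxR' (fun h => by linarith [houter x h t htm])
  have h3 : ta < t := lt_of_le_of_ne htm.1 (fun h => by
    have := hinit x hxR'; rw [h] at this; linarith)
  obtain ⟨F1, F2, Wt, d1, d2, d3, hle, hnd⟩ := hmid x t h2 h3 htm.2
  obtain ⟨a, vt, f, hg⟩ := hgood x hxR t htm
  have hf : 0 < f := by
    have hv : 0 < v x t := (hW0 x t htm).trans_lt hlt
    exact (mul_pos hm (plusPowQ_pos hv)).trans_le hg.f_lo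
  have hloc : IsLocalMax (fun y => v y t - W (‖y - c‖ ^ 2) t) x := by
    have e2 : ∀ᶠ y in 𝓝 x, ‖y - c‖ < R := by
      have : Continuous fun y : Euc N => ‖y - c‖ := by fun_prop
      exact (this.tendsto x).eventually_lt_const h2
    filter_upwards [e2] with y g2
    exact hmax' (y, t) ⟨by rw [mem_closedBall, dist_eq_norm]; exact g2.le, htm⟩
  obtain ⟨ha, hE⟩ := touch_above hp hg c (fun r => W r t) F1 F2 d1 d2 hloc
  have han : ‖a‖ = 2 * |F1 (‖x - c‖ ^ 2)| * ‖x - c‖ := by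
    rw [ha, norm_smul, Real.norm_eq_abs, abs_mul, abs_two]
  have hder := deriv_nonneg_of_left_max (hg.ht.sub d3) h3 (by
    intro s hs
    have := hmax' (x, s) ⟨hxR, hs.1.le, hs.2.le.trans htm.2⟩
    simp only at this
    simp only [Pi.sub_apply]
    linarith)
  rw [han] at hE
  by_cases hc : a ≠ 0 ∨ p = 2
  · have := hE hc
    linarith
  · push Not at hc
    rcases hnd with h | h | ⟨C, κ, hκ, hev⟩
    · exact hc.2 h
    · have hxc : x - c ≠ 0 := sub_ne_zero.2 h.1
      have := hc.1
      rw [ha] at this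
      simp [h.2, hxc] at this
    · have := hg.dg hc.1 C κ hκ (by
        filter_upwards [hev, hloc] with y g1 g2
        linarith)
      linarith [hg.vt_nonneg]

set_option maxHeartbeats 1000000 in
theorem S2_gt {N : ℕ} (hN : 1 ≤ N) {p q m M : ℝ} (hp : 2 < p) (hm : 0 < m) (C : ℝ) (hC : 1 ≤ C) :
    ∃ L : ℝ, 1 ≤ L ∧ ∀ (v : Euc N → ℝ → ℝ) (x1 : Euc N), Reg N p q m M v (closedBall x1 L) →
      (∀ x ∈ closedBall x1 L, ∀ τ ∈ Ioc (0:ℝ) 1, v x (-τ) ≤ C * τ ^ (-1 / (p - 2))) →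
      v x1 0 ≤ C := by
  have hN' : (1 : ℝ) ≤ N := by exact_mod_cast hN
  obtain ⟨j, hj⟩ := exists_nat_ge (p / (p - 2))
  set k : ℕ := j + 2 with hk
  have hkr : (k : ℝ) = j + 2 := by rw [hk]; push_cast; ring
  have hkp : 2 ≤ (2 * k - 1) * (p - 2) := by
    rw [div_le_iff₀ (by linarith)] at hj
    rw [hkr]
    have : (0:ℝ) ≤ j := by positivity
    nlinarith
  have hk0 : (0:ℝ) < k := by rw [hkr]; positivity
  set D : ℝ := 4 * (k * (j + 1)) * (p - 1) + 2 * k * (N + p - 2) with hD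
  have hD0 : 0 < D := by
    have : 0 < p - 1 := by linarith
    have : 0 < N + p - 2 := by linarith
    positivity
  set β : ℝ := 1 / (p - 2) with hβ
  have hβ0 : 0 < β := by
    have : 0 < p - 2 := by linarith
    positivity
  set L : ℝ := max 1 ((2 * k * C) ^ (p - 2) * D / β) with hL
  have hL1 : 1 ≤ L := le_max_left _ _
  have hL0 : 0 < L := by linarith
  have hLb : (2 * k * C) ^ (p - 2) * D ≤ β * L ^ p := by
    have h1 : (2 * k * C) ^ (p - 2) * D / β ≤ L := le_max_right _ _
    rw [div_le_iff₀ hβ0] at h1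
    have h2 : L ≤ L ^ p := by
      calc L = L ^ (1:ℝ) := (Real.rpow_one L).symm
        _ ≤ L ^ p := Real.rpow_le_rpow_of_exponent_le hL1 (by linarith)
    nlinarith
  have hβe : -1 / (p - 2) = -β := by rw [hβ]; ring
  rw [hβe]
  refine ⟨L, hL1, ?_⟩
  intro v x1 hreg hbd
  have key : ∀ ε, 0 < ε → ε ≤ 1 → v x1 (-ε) ≤ C := by
    intro ε hε hε1
    have hI : Icc (-1) (-ε) ⊆ Icc (-1 : ℝ) 0 := Icc_subset_Icc_right (by linarith)
    have := compare_above hp.le hm (v := v) (c := x1) (R := L) (ta := -1) (tb := -ε)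
      (fun r t => C + C * (-t) ^ (-β) * (r / L ^ 2) ^ k)
      (fun x hx t ht => hreg.good x hx t (hI ht)) (hreg.cont.mono (prod_mono subset_rfl hI))
      (by
        apply ContinuousOn.add continuousOn_const
        apply ContinuousOn.mul
        · apply ContinuousOn.mul continuousOn_const
          apply ContinuousOn.rpow_const (by fun_prop)
          intro z hz
          left
          have := hz.2.2
          linarith
        · fun_prop)
      (by
        intro x t ht
        have : 0 < -t := by linarith [ht.2]
        positivity)
      (by
        intro x hx
        have := hbd x (by rw [mem_closedBall, dist_eq_norm]; exact hx) 1 ⟨by norm_num, le_rfl⟩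
        rw [Real.one_rpow, mul_one] at this
        have h2 : 0 ≤ C * (- -1) ^ (-β) * (‖x - x1‖ ^ 2 / L ^ 2) ^ k := by
          rw [neg_neg, Real.one_rpow]; positivity
        linarith)
      (by
        intro x hx t ht
        have := hbd x (by rw [mem_closedBall, dist_eq_norm]; exact hx.le) (-t)
          ⟨by linarith [ht.2], by linarith [ht.1]⟩
        rw [neg_neg] at this
        rw [hx, div_self (by positivity), one_pow, mul_one]
        linarith)
      (by
        intro x t hx ht1 ht2
        have hτ : 0 < -t := by linarith
        set τ := -t with hτd
        set s := ‖x - x1‖ with hs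
        have hs0 : 0 ≤ s := norm_nonneg _
        refine ⟨fun r => C * τ ^ (-β) * (k * (r / L ^ 2) ^ (j + 1) / L ^ 2),
          C * τ ^ (-β) * (k * ((j + 1) * (s ^ 2 / L ^ 2) ^ j / L ^ 2) / L ^ 2),
          C * (β * τ ^ (-β - 1)) * (s ^ 2 / L ^ 2) ^ k, ?_, ?_, ?_, ?_, ?_⟩
        · refine Eventually.of_forall (fun r => ?_)
          have h1 := (((hasDerivAt_id r).div_const (L ^ 2)).pow k).const_mul (C * τ ^ (-β))
          refine (h1.const_add C).congr_deriv ?_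
          simp only [hk, id, show j + 2 - 1 = j + 1 by omega]
          ring
        · have h1 := (((hasDerivAt_id (s ^ 2)).div_const (L ^ 2)).pow (j + 1))
          refine (((h1.const_mul (k:ℝ)).div_const (L ^ 2)).const_mul (C * τ ^ (-β))).congr_deriv ?_
          simp only [id, Nat.add_sub_cancel]
          push_cast
          ring
        · have h1 : HasDerivAt (fun s : ℝ => (-s) ^ (-β)) (β * τ ^ (-β - 1)) t := by
            have := (hasDerivAt_id t).neg.rpow_const (p := -β) (Or.inl (by simp only [Pi.neg_apply, id]; linarith))
            refine this.congr_deriv ?_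
            simp only [Pi.neg_apply, id]
            rw [← hτd]; ring
          exact ((h1.const_mul C).mul_const _).const_add C
        · set σ := s / L with hσ
          have hσ0 : 0 ≤ σ := by positivity
          have hσ1 : σ ≤ 1 := by rw [hσ, div_le_one hL0]; exact hx.le
          set A := C * τ ^ (-β) with hA
          have hA0 : 0 < A := by positivity
          have e0 : s ^ 2 / L ^ 2 = σ ^ 2 := by rw [hσ, div_pow]
          have hsL : s = σ * L := by rw [hσ]; field_simp
          beta_reduce
          rw [e0]
          have e1 : 2 * |A * (k * (σ ^ 2) ^ (j + 1) / L ^ 2)| * s =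
              (2 * k * C / L) * τ ^ (-β) * σ ^ (2 * k - 1 : ℝ) := by
            rw [abs_of_nonneg (by positivity)]
            have : σ ^ (2 * k - 1 : ℝ) = (σ ^ 2) ^ (j + 1) * σ := by
              rw [← pow_mul, ← pow_succ, ← Real.rpow_natCast]
              congr 1
              push_cast
              rw [hkr]; ring
            rw [this, hsL, hA]
            field_simp
          have e2 : (2 * |A * (k * (σ ^ 2) ^ (j + 1) / L ^ 2)| * s) ^ (p - 2) ≤
              (2 * k * C / L) ^ (p - 2) * τ ^ (-1 : ℝ) * σ ^ 2 := by
            have hβp : -β * (p - 2) = -1 := by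
              rw [hβ]; field_simp [show p - 2 ≠ 0 by linarith]
            rw [e1, Real.mul_rpow (by positivity) (by positivity),
              Real.mul_rpow (by positivity) (by positivity), ← Real.rpow_mul hτ.le, hβp,
              ← Real.rpow_mul hσ0]
            apply mul_le_mul_of_nonneg_left _ (by positivity)
            rw [← Real.rpow_natCast σ 2]
            push_cast
            exact Real.rpow_le_rpow_of_exponent_ge_of_imp hσ0 hσ1 hkp (by
              intro h1 h2; exfalso; linarith)
          have e3 : 4 * (A * (k * ((j + 1) * (σ ^ 2) ^ j / L ^ 2) / L ^ 2)) * s ^ 2 * (p - 1) +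
              2 * (A * (k * (σ ^ 2) ^ (j + 1) / L ^ 2)) * (N + p - 2) =
              A * (σ ^ 2) ^ (j + 1) * D / L ^ 2 := by
            rw [hsL, hD]; field_simp; ring
          rw [e3]
          calc _ ≤ ((2 * k * C / L) ^ (p - 2) * τ ^ (-1 : ℝ) * σ ^ 2) *
                (A * (σ ^ 2) ^ (j + 1) * D / L ^ 2) :=
                mul_le_mul_of_nonneg_right e2 (by positivity)
            _ = ((2 * k * C) ^ (p - 2) * D) / L ^ p * (C * τ ^ (-β - 1) * (σ ^ 2) ^ k) := by
                rw [hA, Real.div_rpow (by positivity) hL0.le, sub_eq_add_neg (-β), Real.rpow_add hτ,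
                  hk, Real.rpow_sub hL0, show L ^ (2:ℝ) = L ^ 2 by norm_cast]
                field_simp
                ring
            _ ≤ β * (C * τ ^ (-β - 1) * (σ ^ 2) ^ k) := by
                apply mul_le_mul_of_nonneg_right _ (by positivity)
                rw [div_le_iff₀ (by positivity)]
                exact hLb
            _ = _ := by ring
        · right
          by_cases hxx : x = x1
          · right
            refine ⟨C * τ ^ (-β) / (L ^ 2) ^ k, 2 * k, ?_, ?_⟩
            · have : p / (p - 1) < 2 := by
                rw [div_lt_iff₀ (by linarith)]; linarith
              rw [hkr]
              have : (0:ℝ) ≤ j := by positivity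
              linarith
            · refine Eventually.of_forall (fun y => ?_)
              have e : ‖y - x‖ ^ (2 * k : ℝ) = (‖y - x‖ ^ 2) ^ k := by
                rw [← pow_mul, ← Real.rpow_natCast]; push_cast; rfl
              have e2 : s = 0 := by rw [hs, hxx]; simp
              rw [e, e2, hxx]
              simp only [hk]
              rw [div_pow]
              apply le_of_eq
              simp only [ne_eq, OfNat.ofNat_ne_zero, not_false_eq_true, zero_pow, zero_div]
              simp
              ring
          · left
            refine ⟨hxx, ?_⟩
            have : 0 < s := norm_pos_iff.2 (sub_ne_zero.2 hxx)
            positivity)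
      x1 (-ε) (by simp; linarith) ⟨by linarith, le_rfl⟩
    simp only [sub_self, norm_zero] at this
    rw [show ((0:ℝ) ^ 2 / L ^ 2) ^ k = 0 by rw [hk]; simp] at this
    linarith
  have hc : ContinuousWithinAt (fun s => v x1 s) (Icc (-1) 0) 0 := by
    have h1 : ContinuousOn (fun s : ℝ => (x1, s)) (Icc (-1) 0) := by fun_prop
    exact (hreg.cont.comp h1 (fun s hs => ⟨mem_closedBall_self hL0.le, hs⟩)) 0 ⟨by norm_num, le_rfl⟩
  have hc2 : Tendsto (fun s => v x1 s) (𝓝[<] 0) (𝓝 (v x1 0)) := by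
    refine hc.tendsto.mono_left ?_
    apply nhdsWithin_le_of_mem
    filter_upwards [Ioo_mem_nhdsLT (show (-1:ℝ) < 0 by norm_num)] with s hs
    exact ⟨hs.1.le, hs.2.le⟩
  refine le_of_tendsto hc2 ?_
  filter_upwards [Ioo_mem_nhdsLT (show (-1:ℝ) < 0 by norm_num)] with s hs
  have := key (-s) (by linarith [hs.2]) (by linarith [hs.1])
  rwa [neg_neg] at this


set_option maxHeartbeats 1000000 in
theorem S2_two {N : ℕ} (hN : 1 ≤ N) {q m M : ℝ} (hm : 0 < m) (C : ℝ) (hC : 1 ≤ C) :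
    ∃ L : ℝ, 1 ≤ L ∧ ∀ (v : Euc N → ℝ → ℝ) (x1 : Euc N), Reg N 2 q m M v (closedBall x1 L) →
      (∀ x ∈ closedBall x1 L, ∀ τ ∈ Ioc (0:ℝ) (1 / (N + 1)), v x (-τ) ≤ C * Real.exp (3 / τ)) →
      v x1 0 ≤ C * Real.exp (3 / (1 / (N + 1))) + C := by
  have hN' : (1 : ℝ) ≤ N := by exact_mod_cast hN
  set L : ℝ := 4 * 14 ^ 2 + 2 * N * 14 with hL
  have hL1 : 1 ≤ L := by rw [hL]; linarith
  have hL0 : 0 < L := by linarith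
  have hLL : 4 * 14 ^ 2 + 2 * N * 14 ≤ L ^ 2 := by nlinarith
  set τ0 : ℝ := 1 / (N + 1) with hτ0
  have hτ0p : 0 < τ0 := by positivity
  have hτ01 : τ0 ≤ 1 := by
    rw [hτ0, div_le_one (by positivity)]; linarith
  refine ⟨L, hL1, ?_⟩
  intro v x1 hreg hbd
  have hI : Icc (-τ0) 0 ⊆ Icc (-1 : ℝ) 0 := Icc_subset_Icc_left (by linarith)
  obtain ⟨S, hS⟩ : ∃ S, ∀ z ∈ closedBall x1 L ×ˢ Icc (-1:ℝ) 0, v z.1 z.2 ≤ S := by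
    obtain ⟨S, hS⟩ := ((isCompact_closedBall x1 L).prod isCompact_Icc).bddAbove_image hreg.cont
    exact ⟨S, fun z hz => hS ⟨z, hz, rfl⟩⟩
  obtain ⟨J, hJ⟩ := exists_nat_ge (max 1 S)
  have hJ1r : (1:ℝ) ≤ J := (le_max_left _ _).trans hJ
  have hJ1 : 1 ≤ J := by exact_mod_cast hJ1r
  have hJS : S ≤ J := (le_max_right _ _).trans hJ
  set T : ℕ → ℝ → ℝ → ℝ := fun j r t => C * Real.exp (2 * j ^ 2 * t + j * 14 * (r / L ^ 2 - 1 / 2)) with hT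
  have hTpos : ∀ j r t, 0 < T j r t := fun j r t => by simp only [hT]; positivity
  set C0 := C * Real.exp (3 / τ0) with hC0
  have hC00 : 0 < C0 := by positivity
  have hsingle : ∀ j ∈ Finset.Icc 1 J, ∀ r t, T j r t ≤ ∑ i ∈ Finset.Icc 1 J, T i r t := by
    intro j hj r t
    exact Finset.single_le_sum (f := fun i => T i r t) (fun i _ => (hTpos i r t).le) hj
  have := compare_above le_rfl hm (v := v) (c := x1) (R := L) (ta := -τ0) (tb := 0)
    (fun r t => C0 + ∑ j ∈ Finset.Icc 1 J, T j r t)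
    (fun x hx t ht => hreg.good x hx t (hI ht)) (hreg.cont.mono (prod_mono subset_rfl hI))
    (by
      apply Continuous.continuousOn
      apply continuous_const.add
      apply continuous_finsetSum
      intro j hj
      simp only [hT]
      fun_prop)
    (by
      intro x t ht
      exact add_nonneg hC00.le (Finset.sum_nonneg fun i _ => (hTpos _ _ _).le))
    (by
      intro x hx
      have h1 := hbd x (by rw [mem_closedBall, dist_eq_norm]; exact hx) τ0 ⟨hτ0p, le_rfl⟩
      have h2 : 0 ≤ ∑ j ∈ Finset.Icc 1 J, T j (‖x - x1‖ ^ 2) (-τ0) :=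
        Finset.sum_nonneg fun i _ => (hTpos _ _ _).le
      linarith)
    (by
      intro x hx t ht
      have hxm : x ∈ closedBall x1 L := by rw [mem_closedBall, dist_eq_norm]; exact hx.le
      rw [hx]
      have hTb : ∀ j : ℕ, j * (-t) ≤ 2 → C * Real.exp (3 * j) ≤ T j (L ^ 2) t := by
        intro j hj
        simp only [hT]
        apply mul_le_mul_of_nonneg_left _ (by linarith)
        apply Real.exp_le_exp.2
        rw [div_self (by positivity)]
        have : (0:ℝ) ≤ j := by positivity
        nlinarith
      by_cases hc : J * (-t) ≤ 2
      · have h1 := hTb J hc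
        have h2 := hsingle J (Finset.mem_Icc.2 ⟨hJ1, le_rfl⟩) (L ^ 2) t
        have h3 : v x t ≤ S := hS (x, t) ⟨hxm, hI ht⟩
        have h4 : (J:ℝ) ≤ C * Real.exp (3 * J) := by
          have := Real.add_one_le_exp (3 * (J:ℝ))
          nlinarith
        linarith
      · push Not at hc
        have htp : 0 < -t := by
          by_contra hneg
          push Not at hneg
          nlinarith
        set j := ⌈1 / (-t)⌉₊ with hj
        have hj1 : 1 / (-t) ≤ j := Nat.le_ceil _
        have hj2 : (j:ℝ) < 1 / (-t) + 1 := Nat.ceil_lt_add_one (by positivity)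
        have ht1 : -t ≤ 1 := by linarith [ht.1]
        have hj3 : j * (-t) ≤ 2 := by
          have h5 : (j:ℝ) * (-t) ≤ (1 / (-t) + 1) * (-t) := mul_le_mul_of_nonneg_right hj2.le htp.le
          have h6 : (1 / (-t) + 1) * (-t) = 1 + (-t) := by
            rw [add_mul, one_div, inv_mul_cancel₀ htp.ne', one_mul]
          linarith
        have hj4 : 1 ≤ j := Nat.one_le_iff_ne_zero.2 (by
          rw [hj, ← Nat.pos_iff_ne_zero, Nat.ceil_pos]; positivity)
        have hj5 : j ≤ J := by
          have : (j:ℝ) * (-t) < J * (-t) := by linarith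
          have := lt_of_mul_lt_mul_right this htp.le
          exact_mod_cast this.le
        have h1 := hTb j hj3
        have h2 := hsingle j (Finset.mem_Icc.2 ⟨hj4, hj5⟩) (L ^ 2) t
        have h3 := hbd x hxm (-t) ⟨htp, by linarith [ht.1]⟩
        rw [neg_neg] at h3
        have h4 : C * Real.exp (3 / (-t)) ≤ C * Real.exp (3 * j) := by
          apply mul_le_mul_of_nonneg_left _ (by linarith)
          apply Real.exp_le_exp.2
          have : 3 / (-t) = 3 * (1 / (-t)) := by ring
          rw [this]; linarith
        linarith)
    (by
      intro x t hx ht1 ht2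
      set s := ‖x - x1‖ with hs
      have hs0 : 0 ≤ s := norm_nonneg _
      have hT1 : ∀ (j : ℕ) r, HasDerivAt (fun r => T j r t) (j * 14 / L ^ 2 * T j r t) r := by
        intro j r
        have h1 := (((((hasDerivAt_id r).div_const (L ^ 2)).sub_const (1/2)).const_mul ((j:ℝ) * 14)).const_add
          (2 * j ^ 2 * t)).exp.const_mul C
        refine h1.congr_deriv ?_
        simp only [hT, id]
        ring
      refine ⟨fun r => ∑ j ∈ Finset.Icc 1 J, (j * 14 / L ^ 2 * T j r t),
        ∑ j ∈ Finset.Icc 1 J, (j * 14 / L ^ 2 * (j * 14 / L ^ 2 * T j (s ^ 2) t)),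
        ∑ j ∈ Finset.Icc 1 J, (2 * j ^ 2 * T j (s ^ 2) t), ?_, ?_, ?_, ?_, Or.inl rfl⟩
      · refine Eventually.of_forall (fun r => ?_)
        exact (HasDerivAt.fun_sum (fun j _ => hT1 j r)).const_add C0
      · exact HasDerivAt.fun_sum (fun j _ => (hT1 j (s ^ 2)).const_mul _)
      · refine (HasDerivAt.fun_sum (fun j _ => ?_)).const_add C0
        have h1 := ((((hasDerivAt_id t).const_mul (2 * (j:ℝ) ^ 2)).add_const
          (j * 14 * (s ^ 2 / L ^ 2 - 1 / 2))).exp.const_mul C)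
        refine h1.congr_deriv ?_
        simp only [hT, id]
        ring
      · rw [sub_self, Real.rpow_zero, one_mul]
        beta_reduce
        rw [Finset.mul_sum, Finset.sum_mul, Finset.sum_mul, Finset.mul_sum, Finset.sum_mul,
          ← Finset.sum_add_distrib]
        apply Finset.sum_le_sum
        intro j hj
        have hj1 : (1:ℝ) ≤ j := by exact_mod_cast (Finset.mem_Icc.1 hj).1
        have e : 4 * (j * 14 / L ^ 2 * (j * 14 / L ^ 2 * T j (s ^ 2) t)) * s ^ 2 * (2 - 1) +
            2 * (j * 14 / L ^ 2 * T j (s ^ 2) t) * (N + 2 - 2) =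
            ((4 * 14 ^ 2 * j ^ 2 * (s ^ 2 / L ^ 2) + 2 * N * 14 * j) / L ^ 2) * T j (s ^ 2) t := by
          field_simp; ring
        rw [e]
        apply mul_le_mul_of_nonneg_right _ (hTpos _ _ _).le
        rw [div_le_iff₀ (by positivity)]
        have g1 : s ^ 2 / L ^ 2 ≤ 1 := by
          rw [div_le_one (by positivity)]
          exact pow_le_pow_left₀ hs0 hx.le 2
        have g2 : (j:ℝ) ≤ j ^ 2 := by nlinarith
        calc 4 * 14 ^ 2 * (j:ℝ) ^ 2 * (s ^ 2 / L ^ 2) + 2 * N * 14 * j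
            ≤ 4 * 14 ^ 2 * (j:ℝ) ^ 2 * 1 + 2 * N * 14 * j ^ 2 := by gcongr
          _ = (j:ℝ) ^ 2 * (4 * 14 ^ 2 + 2 * N * 14) := by ring
          _ ≤ (j:ℝ) ^ 2 * L ^ 2 := by gcongr
          _ ≤ 2 * (j:ℝ) ^ 2 * L ^ 2 := by nlinarith [mul_nonneg (sq_nonneg (j:ℝ)) (sq_nonneg L)])
    x1 0 (by simp; linarith) ⟨by linarith, le_rfl⟩
  refine this.trans ?_
  simp only [sub_self, norm_zero]
  gcongr
  have hg : ∀ n : ℕ, ∑ j ∈ Finset.Icc 1 n, T j (0 ^ 2) 0 ≤ C * (1 - (1/2) ^ n) := by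
    intro n
    induction n with
    | zero => simp
    | succ n ih =>
      rw [Finset.sum_Icc_succ_top (by omega)]
      have h1 : T (n + 1) (0 ^ 2) 0 ≤ C * (1/2) ^ (n + 1) := by
        simp only [hT]
        apply mul_le_mul_of_nonneg_left _ (by linarith)
        have e : 2 * ((n + 1 : ℕ):ℝ) ^ 2 * 0 + ((n + 1 : ℕ):ℝ) * 14 * (0 ^ 2 / L ^ 2 - 1 / 2) =
          ((n + 1 : ℕ) : ℝ) * (-7) := by ring
        rw [e, Real.exp_nat_mul]
        apply pow_le_pow_left₀ (Real.exp_pos _).le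
        rw [Real.exp_neg, one_div]
        apply inv_anti₀ (by norm_num)
        have := Real.add_one_le_exp (7:ℝ)
        linarith
      calc _ ≤ C * (1 - (1/2) ^ n) + C * (1/2) ^ (n + 1) := add_le_add ih h1
        _ = _ := by ring
  refine (hg J).trans ?_
  have : (0:ℝ) ≤ (1/2) ^ J := by positivity
  nlinarith

/-- both steps combined. -/
theorem S12 {N : ℕ} (hN : 1 ≤ N) {p q m M : ℝ} (hp : 2 ≤ p) (hq : 0 ≤ q) (hq1 : q < 1) (hm : 0 < m)
    (hmM : m ≤ M) : ∃ C L : ℝ, 1 ≤ C ∧ 1 ≤ L ∧ ∀ (v : Euc N → ℝ → ℝ) (x1 : Euc N),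
      Reg N p q m M v (closedBall x1 (L + 3)) →
      (∀ x ∈ closedBall x1 (L + 1), ∃ y ∈ ball x 1, v y 0 = 0) → v x1 0 ≤ C := by
  have hs3 : ∀ (x1 x : Euc N) (L : ℝ), x ∈ closedBall x1 L → closedBall x 3 ⊆ closedBall x1 (L + 3) := by
    intro x1 x L hx
    apply closedBall_subset_closedBall'
    rw [mem_closedBall] at hx; linarith
  have hs1 : ∀ (x1 x : Euc N) (L : ℝ), x ∈ closedBall x1 L → closedBall x 1 ⊆ closedBall x1 (L + 1) := by
    intro x1 x L hx
    apply closedBall_subset_closedBall'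
    rw [mem_closedBall] at hx; linarith
  rcases hp.eq_or_lt with h2 | h2
  · subst h2
    obtain ⟨C, hC, H⟩ := S1_two hN hq hq1 hm hmM
    obtain ⟨L, hL, H2⟩ := S2_two hN (q := q) (m := m) (M := M) hm C hC
    refine ⟨_, L, ?_, hL, fun v x1 hreg hh => H2 v x1 (hreg.subset (closedBall_subset_closedBall (by linarith)))
      (fun x hx => H v x (hreg.subset (hs3 x1 x L hx)) (fun y hy => hh y (hs1 x1 x L hx hy)))⟩
    have : 0 < Real.exp (3 / (1 / (N + 1))) := Real.exp_pos _
    nlinarith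
  · obtain ⟨C, hC, H⟩ := S1_gt hN h2 hq hq1 hm hmM
    obtain ⟨L, hL, H2⟩ := S2_gt hN (q := q) (m := m) (M := M) h2 hm C hC
    exact ⟨C, L, hC, hL, fun v x1 hreg hh => H2 v x1 (hreg.subset (closedBall_subset_closedBall (by linarith)))
      (fun x hx => H v x (hreg.subset (hs3 x1 x L hx)) (fun y hy => hh y (hs1 x1 x L hx hy)))⟩


set_option maxHeartbeats 1000000 in
/-- nondegeneracy. -/
theorem nondeg {N : ℕ} (hN : 1 ≤ N) {p q m M : ℝ} (hp : 2 ≤ p) (hq : 0 ≤ q) (hq1 : q < 1) (hm : 0 < m) :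
    ∃ c : ℝ, 0 < c ∧ ∀ (v : Euc N → ℝ → ℝ) (x1 : Euc N) (t1 ρ : ℝ), 0 < ρ →
      (∀ x ∈ closedBall x1 ρ, ∃ a vt f, GoodPt N p q m M v x t1 a vt f) →
      ContinuousOn (fun x => v x t1) (closedBall x1 ρ) → 0 < v x1 t1 →
      ∃ y ∈ closedBall x1 ρ, c * ρ ^ (p / (p - 1 - q)) ≤ v y t1 := by
  have hN' : (1 : ℝ) ≤ N := by exact_mod_cast hN
  have hpq : 0 < p - 1 - q := by linarith
  obtain ⟨j, hj⟩ := exists_nat_ge (p / (p - 1 - q))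
  set k : ℕ := j + 2 with hk
  have hkr : (k : ℝ) = j + 2 := by rw [hk]; push_cast; ring
  have hj0 : (0:ℝ) ≤ j := by positivity
  have hkp : p ≤ 2 * k * (p - 1 - q) := by
    rw [div_le_iff₀ hpq] at hj
    rw [hkr]
    nlinarith
  have hk0 : (0:ℝ) < k := by rw [hkr]; positivity
  set D : ℝ := 4 * (k * (j + 1)) * (p - 1) + 2 * k * (N + p - 2) with hD
  have hD0 : 0 < D := by
    have : 0 < p - 1 := by linarith
    have : 0 < N + p - 2 := by linarith
    positivity
  set B : ℝ := (2 * k) ^ (p - 2) * D with hB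
  have hB0 : 0 < B := by positivity
  set c : ℝ := (m / (2 * B)) ^ (1 / (p - 1 - q)) with hc
  have hc0 : 0 < c := by positivity
  have hcB : B * c ^ (p - 1 - q) < m := by
    rw [hc, ← Real.rpow_mul (by positivity), one_div_mul_cancel hpq.ne', Real.rpow_one]
    have : B * (m / (2 * B)) = m / 2 := by field_simp
    rw [this]; linarith
  refine ⟨c, hc0, ?_⟩
  intro v x1 t1 ρ hρ hgood hcont hpos
  by_contra hneg
  push Not at hneg
  set H := c * ρ ^ (p / (p - 1 - q)) with hH
  have hH0 : 0 < H := by positivity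
  have hHp : H ^ (p - 1 - q) = c ^ (p - 1 - q) * ρ ^ p := by
    rw [hH, Real.mul_rpow hc0.le (by positivity), ← Real.rpow_mul hρ.le, div_mul_cancel₀ _ hpq.ne']
  set φ : ℝ → ℝ := fun r => H * (r / ρ ^ 2) ^ k with hφ
  have hcS : ContinuousOn (fun x => v x t1 - φ (‖x - x1‖ ^ 2)) (closedBall x1 ρ) := by
    apply hcont.sub
    simp only [hφ]
    fun_prop
  have hmem0 : x1 ∈ closedBall x1 ρ := mem_closedBall_self hρ.le
  obtain ⟨x, hmem, hmax⟩ := (isCompact_closedBall x1 ρ).exists_isMaxOn ⟨_, hmem0⟩ hcS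
  have hmax' : ∀ z ∈ closedBall x1 ρ, v z t1 - φ (‖z - x1‖ ^ 2) ≤ v x t1 - φ (‖x - x1‖ ^ 2) := hmax
  have hφ0 : φ (‖x1 - x1‖ ^ 2) = 0 := by simp [hφ, hk]
  have hlt : φ (‖x - x1‖ ^ 2) < v x t1 := by
    have := hmax' _ hmem0
    rw [hφ0] at this
    linarith
  have hφn : 0 ≤ φ (‖x - x1‖ ^ 2) := by simp only [hφ]; positivity
  have hxR' : ‖x - x1‖ ≤ ρ := by rw [← dist_eq_norm]; exact hmem
  have h2 : ‖x - x1‖ < ρ := lt_of_le_of_ne hxR' (fun h => by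
    have h1 := hneg x hmem
    have h3 : φ (‖x - x1‖ ^ 2) = H := by
      simp only [hφ]; rw [h, div_self (by positivity), one_pow, mul_one]
    linarith)
  obtain ⟨a, vt, f, hg⟩ := hgood x hmem
  have hvp : 0 < v x t1 := hφn.trans_lt hlt
  have hflo := hg.f_lo
  rw [plusPowQ_eq hvp] at hflo
  have hf : 0 < f := lt_of_lt_of_le (by positivity) hflo
  have hloc : IsLocalMax (fun y => v y t1 - φ (‖y - x1‖ ^ 2)) x := by
    have e2 : ∀ᶠ y in 𝓝 x, ‖y - x1‖ < ρ := by
      have : Continuous fun y : Euc N => ‖y - x1‖ := by fun_prop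
      exact (this.tendsto x).eventually_lt_const h2
    filter_upwards [e2] with y g2
    exact hmax' y (by rw [mem_closedBall, dist_eq_norm]; exact g2.le)
  set s := ‖x - x1‖ with hs
  have hs0 : 0 ≤ s := norm_nonneg _
  obtain ⟨ha, hE⟩ := touch_above hp hg x1 φ (fun r => H * (k * (r / ρ ^ 2) ^ (j + 1) / ρ ^ 2))
    (H * (k * ((j + 1) * (s ^ 2 / ρ ^ 2) ^ j / ρ ^ 2) / ρ ^ 2))
    (by
      refine Eventually.of_forall (fun r => ?_)
      have h1 := (((hasDerivAt_id r).div_const (ρ ^ 2)).pow k).const_mul H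
      refine h1.congr_deriv ?_
      simp only [hk, id, show j + 2 - 1 = j + 1 by omega]
      ring)
    (by
      have h1 := (((hasDerivAt_id (s ^ 2)).div_const (ρ ^ 2)).pow (j + 1))
      refine (((h1.const_mul (k:ℝ)).div_const (ρ ^ 2)).const_mul H).congr_deriv ?_
      simp only [id, Nat.add_sub_cancel]
      push_cast
      ring) hloc
  by_cases hxx : x = x1
  · have ha0 : a = 0 := by rw [ha, hxx]; simp
    have := hg.dg ha0 (H / (ρ ^ 2) ^ k) (2 * k) (by
        have : p / (p - 1) ≤ 2 := by
          rw [div_le_iff₀ (by linarith)]; linarith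
        rw [hkr]
        linarith) (by
      filter_upwards [hloc] with y hy
      have e : ‖y - x‖ ^ (2 * k : ℝ) = (‖y - x‖ ^ 2) ^ k := by
        rw [← pow_mul, ← Real.rpow_natCast]; push_cast; rfl
      have e2 : φ (s ^ 2) = 0 := by rw [hs, hxx]; exact hφ0
      have e3 : φ (‖y - x1‖ ^ 2) = H / (ρ ^ 2) ^ k * (‖y - x‖ ^ 2) ^ k := by
        simp only [hφ]; rw [hxx, div_pow]; ring
      rw [e, ← e3]
      change v y t1 - φ (‖y - x1‖ ^ 2) ≤ v x t1 - φ (‖x - x1‖ ^ 2) at hy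
      linarith)
    linarith [hg.vt_nonneg]
  · have hsp : 0 < s := norm_pos_iff.2 (sub_ne_zero.2 hxx)
    beta_reduce at ha hE
    set σ := s / ρ with hσ
    have hσ0 : 0 < σ := by positivity
    have hσ1 : σ ≤ 1 := by rw [hσ, div_le_one hρ]; exact h2.le
    have e0 : s ^ 2 / ρ ^ 2 = σ ^ 2 := by rw [hσ, div_pow]
    have hsL : s = σ * ρ := by rw [hσ]; field_simp
    rw [e0] at ha hE
    have hap : 0 < 2 * (H * (k * (σ ^ 2) ^ (j + 1) / ρ ^ 2)) := by positivity
    have hane : a ≠ 0 := by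
      rw [ha]; exact smul_ne_zero hap.ne' (sub_ne_zero.2 hxx)
    have han : ‖a‖ = (2 * k) * (H / ρ) * σ ^ (2 * k - 1 : ℝ) := by
      rw [ha, norm_smul, Real.norm_of_nonneg hap.le, ← hs]
      have : σ ^ (2 * k - 1 : ℝ) = (σ ^ 2) ^ (j + 1) * σ := by
        rw [← pow_mul, ← pow_succ, ← Real.rpow_natCast]
        congr 1
        push_cast
        rw [hkr]; ring
      rw [this, hsL]
      field_simp
    have e3 : 4 * (H * (k * ((j + 1) * (σ ^ 2) ^ j / ρ ^ 2) / ρ ^ 2)) * s ^ 2 * (p - 1) +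
        2 * (H * (k * (σ ^ 2) ^ (j + 1) / ρ ^ 2)) * (N + p - 2) =
        D * (H / ρ ^ 2) * σ ^ (2 * k - 2 : ℝ) := by
      have : σ ^ (2 * k - 2 : ℝ) = (σ ^ 2) ^ (j + 1) := by
        rw [← pow_mul, ← Real.rpow_natCast]
        congr 1
        push_cast
        rw [hkr]; ring
      rw [this, hsL, hD]; field_simp; ring
    have hE' := hE (Or.inl hane)
    rw [e3, han, Real.mul_rpow (by positivity) (by positivity),
      Real.mul_rpow (by positivity) (by positivity), Real.div_rpow hH0.le hρ.le,
      ← Real.rpow_mul hσ0.le] at hE'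
    have e4 : (2 * k) ^ (p - 2) * (H ^ (p - 2) / ρ ^ (p - 2)) * σ ^ ((2 * k - 1) * (p - 2) : ℝ) *
        (D * (H / ρ ^ 2) * σ ^ (2 * k - 2 : ℝ)) =
        (B * c ^ (p - 1 - q)) * (H ^ q * σ ^ ((2 * k - 1) * (p - 2) + (2 * k - 2) : ℝ)) := by
      have g1 : H ^ (p - 2) * H = c ^ (p - 1 - q) * ρ ^ p * H ^ q := by
        rw [← Real.rpow_add_one hH0.ne', ← hHp, ← Real.rpow_add hH0]
        congr 1; ring
      have g2 : ρ ^ (p - 2) * ρ ^ 2 = ρ ^ p := by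
        rw [← Real.rpow_natCast ρ 2, ← Real.rpow_add hρ]
        congr 1; push_cast; ring
      rw [Real.rpow_add hσ0]
      calc _ = (2 * k) ^ (p - 2) * D * (H ^ (p - 2) * H) / (ρ ^ (p - 2) * ρ ^ 2) *
            (σ ^ ((2 * k - 1) * (p - 2) : ℝ) * σ ^ (2 * k - 2 : ℝ)) := by field_simp
        _ = _ := by rw [g1, g2, hB]; field_simp
    rw [e4] at hE'
    have e5 : H ^ q * σ ^ ((2 * k - 1) * (p - 2) + (2 * k - 2) : ℝ) ≤ v x t1 ^ q := by
      calc _ ≤ H ^ q * σ ^ (2 * k * q : ℝ) := by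
            apply mul_le_mul_of_nonneg_left _ (by positivity)
            apply Real.rpow_le_rpow_of_exponent_ge hσ0 hσ1
            nlinarith
        _ = (φ (s ^ 2)) ^ q := by
            simp only [hφ]
            rw [e0, Real.mul_rpow hH0.le (by positivity), Real.rpow_mul hσ0.le, ← pow_mul, ← Real.rpow_natCast]
            push_cast; rfl
        _ ≤ _ := Real.rpow_le_rpow hφn hlt.le hq
    have e6 : (B * c ^ (p - 1 - q)) * (H ^ q * σ ^ ((2 * k - 1) * (p - 2) + (2 * k - 2) : ℝ)) <
        m * v x t1 ^ q := by
      have : 0 < v x t1 ^ q := by positivity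
      calc _ ≤ (B * c ^ (p - 1 - q)) * v x t1 ^ q := mul_le_mul_of_nonneg_left e5 (by positivity)
        _ < _ := mul_lt_mul_of_pos_right hcB this
    linarith [hg.vt_nonneg]


/-- inverse of `a ↦ ‖a‖^(p-2) • a`. -/
theorem psi_theta {N : ℕ} {p : ℝ} (hp : 2 ≤ p) (a : Euc N) :
    ‖‖a‖ ^ (p - 2) • a‖ ^ (-(p - 2) / (p - 1)) • (‖a‖ ^ (p - 2) • a) = a := by
  by_cases ha : a = 0
  · simp [ha]
  · have hn : 0 < ‖a‖ := norm_pos_iff.2 ha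
    have h1 : ‖‖a‖ ^ (p - 2) • a‖ = ‖a‖ ^ (p - 1) := by
      rw [norm_smul, Real.norm_of_nonneg (by positivity), ← Real.rpow_add_one hn.ne']
      congr 1; ring
    rw [h1, ← Real.rpow_mul hn.le, mul_div_cancel₀ _ (by linarith : p - 1 ≠ 0), smul_smul,
      ← Real.rpow_add hn]
    simp

theorem grad_line {N : ℕ} {g : Euc N → ℝ} {x ξ : Euc N} {s : ℝ}
    (h : DifferentiableAt ℝ g (x + s • ξ)) :
    HasDerivAt (fun s : ℝ => g (x + s • ξ)) ⟪gradient g (x + s • ξ), ξ⟫ s := by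
  have h1 := (hasGradientAt_iff_hasFDerivAt.1 h.hasGradientAt)
  have h2 : HasDerivAt (fun s : ℝ => x + s • ξ) ξ s := by
    have := ((hasDerivAt_id s).smul_const ξ).const_add x
    simpa using this
  exact (h1.comp_hasDerivAt s h2).congr_deriv (InnerProductSpace.toDual_apply_apply ..)

theorem tendsto_line {N : ℕ} (x ξ : Euc N) : Tendsto (fun s : ℝ => x + s • ξ) (𝓝 0) (𝓝 x) := by
  have : Continuous (fun s : ℝ => x + s • ξ) := by fun_prop
  simpa using this.tendsto 0

theorem sol_nd {N : ℕ} {p : ℝ} (hp : 2 ≤ p) {g : Euc N → ℝ} {x : Euc N}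
    (hV : DifferentiableAt ℝ (fun y => ‖gradient g y‖ ^ (p - 2) • gradient g y) x)
    (h0 : gradient g x ≠ 0 ∨ p = 2) :
    ∃ X : Euc N →L[ℝ] Euc N, HasFDerivAt (gradient g) X x ∧
      ‖gradient g x‖ ^ (p - 2) * (LinearMap.trace ℝ (Euc N) X.toLinearMap +
        (p - 2) * ⟪X (‖gradient g x‖⁻¹ • gradient g x), ‖gradient g x‖⁻¹ • gradient g x⟫) =
      LinearMap.trace ℝ (Euc N)
        (fderiv ℝ (fun y => ‖gradient g y‖ ^ (p - 2) • gradient g y) x).toLinearMap := by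
  by_cases h2 : p = 2
  · subst h2
    simp only [sub_self, Real.rpow_zero, one_smul, zero_mul, add_zero, one_mul] at hV ⊢
    exact ⟨_, hV.hasFDerivAt, rfl⟩
  · have ha : gradient g x ≠ 0 := h0.resolve_right h2
    have hn : 0 < ‖gradient g x‖ := norm_pos_iff.2 ha
    set V : Euc N → Euc N := fun y => ‖gradient g y‖ ^ (p - 2) • gradient g y with hVd
    have hVx : V x ≠ 0 := smul_ne_zero (by positivity) ha
    have hG : gradient g = fun y => ‖V y‖ ^ (-(p - 2) / (p - 1)) • V y := by
      funext y
      exact (psi_theta hp _).symm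
    have hGd : DifferentiableAt ℝ (gradient g) x := by
      rw [hG]
      exact ((hV.norm ℝ hVx).rpow_const (Or.inl (norm_pos_iff.2 hVx).ne')).smul hV
    refine ⟨fderiv ℝ (gradient g) x, hGd.hasFDerivAt, ?_⟩
    have hX := hGd.hasFDerivAt
    set X := fderiv ℝ (gradient g) x with hXd
    set a := gradient g x with had
    have h1 := (hX.norm_sq.rpow_const (p := (p - 2) / 2) (Or.inl (by positivity))).smul hX
    have h2' := HasFDerivAt.congr_of_eventuallyEq (f₁ := V) h1 (by
      refine Eventually.of_forall (fun y => ?_)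
      simp only [hVd]
      change _ = ((‖gradient g y‖ ^ 2) ^ ((p - 2) / 2)) • gradient g y
      rw [← Real.rpow_natCast, ← Real.rpow_mul (norm_nonneg _)]
      congr 2
      push_cast; ring)
    rw [h2'.fderiv]
    have e1 : (‖a‖ ^ 2) ^ ((p - 2) / 2) = ‖a‖ ^ (p - 2) := by
      rw [← Real.rpow_natCast, ← Real.rpow_mul (norm_nonneg _)]
      congr 1
      push_cast; ring
    have e2 : (‖a‖ ^ 2) ^ ((p - 2) / 2 - 1) = ‖a‖ ^ (p - 2) * (‖a‖⁻¹ * ‖a‖⁻¹) := by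
      rw [Real.rpow_sub_one (by positivity), e1]
      field_simp
    have b := EuclideanSpace.basisFun (Fin N) ℝ
    rw [LinearMap.trace_eq_sum_inner _ b, LinearMap.trace_eq_sum_inner _ b]
    have e3 : ⟪X (‖a‖⁻¹ • a), ‖a‖⁻¹ • a⟫ = ‖a‖⁻¹ * ‖a‖⁻¹ * ∑ i, ⟪a, X (b i)⟫ * ⟪b i, a⟫ := by
      rw [map_smul, inner_smul_left, inner_smul_right]
      have : X a = ∑ i, ⟪b i, a⟫ • X (b i) := by
        conv_lhs => rw [← b.sum_repr' a]
        simp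
      conv_lhs => rw [this]
      rw [sum_inner]
      simp only [inner_smul_left, RCLike.conj_to_real]
      rw [← mul_assoc]
      congr 1
      refine Finset.sum_congr rfl fun i _ => ?_
      rw [real_inner_comm (a) (X (b i)), mul_comm, real_inner_comm]
    rw [e3]
    have e4 : ∀ i, ⟪b i, ((‖a‖ ^ 2) ^ ((p - 2) / 2) • X + (((p - 2) / 2 * (‖a‖ ^ 2) ^ ((p - 2) / 2 - 1)) •
        (2 • (innerSL ℝ a).comp X)).smulRight a) (b i)⟫ =
        ‖a‖ ^ (p - 2) * ⟪b i, X (b i)⟫ + ‖a‖ ^ (p - 2) * (p - 2) * (‖a‖⁻¹ * ‖a‖⁻¹) * (⟪a, X (b i)⟫ * ⟪b i, a⟫) := by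
      intro i
      rw [e1, e2]
      simp [inner_add_right, inner_smul_right]
      ring
    symm
    calc _ = ∑ i, (‖a‖ ^ (p - 2) * ⟪b i, X (b i)⟫ +
          ‖a‖ ^ (p - 2) * (p - 2) * (‖a‖⁻¹ * ‖a‖⁻¹) * (⟪a, X (b i)⟫ * ⟪b i, a⟫)) :=
          Finset.sum_congr rfl fun i _ => e4 i
      _ = _ := by
          rw [Finset.sum_add_distrib, ← Finset.mul_sum, ← Finset.mul_sum]
          simp only [ContinuousLinearMap.coe_coe]
          ring

theorem sol_dg {N : ℕ} {p : ℝ} (hp : 2 ≤ p) {g : Euc N → ℝ} {x : Euc N}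
    (hg : ∀ᶠ y in 𝓝 x, DifferentiableAt ℝ g y)
    (hV : DifferentiableAt ℝ (fun y => ‖gradient g y‖ ^ (p - 2) • gradient g y) x)
    (h0 : gradient g x = 0) (C κ : ℝ) (hκ : p / (p - 1) < κ)
    (hle : ∀ᶠ y in 𝓝 x, g y ≤ g x + C * ‖y - x‖ ^ κ) :
    LinearMap.trace ℝ (Euc N)
        (fderiv ℝ (fun y => ‖gradient g y‖ ^ (p - 2) • gradient g y) x).toLinearMap ≤ 0 := by
  by_contra hneg
  push Not at hneg
  have b := EuclideanSpace.basisFun (Fin N) ℝ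
  rw [LinearMap.trace_eq_sum_inner _ b] at hneg
  obtain ⟨i, -, hi⟩ := Finset.exists_lt_of_sum_lt (s := Finset.univ) (f := fun _ : Fin N => (0:ℝ))
    (lt_of_eq_of_lt (by simp) hneg)
  set V : Euc N → Euc N := fun y => ‖gradient g y‖ ^ (p - 2) • gradient g y with hVd
  set Y := fderiv ℝ V x with hY
  have hVY : HasFDerivAt V Y x := hV.hasFDerivAt
  set e := b i with he
  have hen : ‖e‖ = 1 := b.norm_eq_one i
  set μ := ⟪e, Y e⟫ with hμ
  have hμ0 : 0 < μ := hi
  have hVx : V x = 0 := by simp [hVd, h0]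
  have hG : ∀ y, gradient g y = ‖V y‖ ^ (-(p - 2) / (p - 1)) • V y := fun y => (psi_theta hp _).symm
  have hp1 : 0 < p - 1 := by linarith
  have hline : HasDerivAt (fun s : ℝ => V (x + s • e)) (Y e) 0 := by
    have h2 : HasDerivAt (fun s : ℝ => x + s • e) e 0 := by
      have := ((hasDerivAt_id (0:ℝ)).smul_const e).const_add x
      simpa using this
    have h3 : HasFDerivAt V Y (x + (0:ℝ) • e) := by simpa using hVY
    exact h3.comp_hasDerivAt 0 h2
  -- small s estimates
  have hlo := hline.isLittleO
  simp only [zero_smul, add_zero, hVx, sub_zero] at hlo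
  set ε := min (μ / 2) 1 with hε
  have hε0 : 0 < ε := by positivity
  have hsm := hlo.def hε0
  set A := ‖Y‖ + 1 with hA
  have hA0 : 0 < A := by positivity
  set γ := p / (p - 1) with hγ
  have hγ1 : 1 < γ := by rw [hγ, one_lt_div hp1]; linarith
  set c := A ^ (-(p - 2) / (p - 1)) * (μ / 2) with hc
  have hc0 : 0 < c := by positivity
  have hev := (hsm.and ((tendsto_line x e).eventually hg)).and ((tendsto_line x e).eventually hle)
  obtain ⟨s0, hs0, hball⟩ := Metric.eventually_nhds_iff.1 hev
  have hder : ∀ s, |s| < s0 → HasDerivAt (fun s : ℝ => g (x + s • e)) ⟪gradient g (x + s • e), e⟫ s := by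
    intro s hs
    exact grad_line (hball (by simpa using hs)).1.2
  have hlow : ∀ s, 0 < s → s < s0 → c * s ^ (γ - 1) ≤ ⟪gradient g (x + s • e), e⟫ := by
    intro s hs hs'
    have h1 := (hball (y := s) (by simpa [abs_of_pos hs] using hs')).1.1
    rw [Real.norm_of_nonneg hs.le] at h1
    have h2 : ‖V (x + s • e)‖ ≤ A * s := by
      have : V (x + s • e) = (V (x + s • e) - s • Y e) + s • Y e := by abel
      rw [this]
      refine (norm_add_le _ _).trans ?_
      have h3 : ‖s • Y e‖ ≤ s * ‖Y‖ := by
        rw [norm_smul, Real.norm_of_nonneg hs.le]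
        have := Y.le_opNorm e
        rw [hen, mul_one] at this
        exact mul_le_mul_of_nonneg_left this hs.le
      have h4 : ε * s ≤ 1 * s := mul_le_mul_of_nonneg_right (min_le_right _ _) hs.le
      rw [hA]; linarith
    have h3 : μ / 2 * s ≤ ⟪V (x + s • e), e⟫ := by
      have h4 : ⟪V (x + s • e), e⟫ = ⟪V (x + s • e) - s • Y e, e⟫ + s * μ := by
        rw [inner_sub_left, real_inner_smul_left (Y e) e s, hμ, real_inner_comm e (Y e)]
        ring
      have h5 := abs_real_inner_le_norm (V (x + s • e) - s • Y e) e
      rw [hen, mul_one] at h5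
      have h6 := (abs_le.1 (h5.trans h1)).1
      have h7 : ε * s ≤ μ / 2 * s := mul_le_mul_of_nonneg_right (min_le_left _ _) hs.le
      rw [h4]; linarith
    have hVp : 0 < ‖V (x + s • e)‖ := by
      have h8 := real_inner_le_norm (V (x + s • e)) e
      rw [hen, mul_one] at h8
      have : 0 < μ / 2 * s := by positivity
      linarith
    rw [hG, inner_smul_left, RCLike.conj_to_real]
    have h9 : (A * s) ^ (-(p - 2) / (p - 1)) ≤ ‖V (x + s • e)‖ ^ (-(p - 2) / (p - 1)) :=
      Real.rpow_le_rpow_of_nonpos hVp h2 (div_nonpos_of_nonpos_of_nonneg (by linarith) hp1.le)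
    calc c * s ^ (γ - 1) = (A * s) ^ (-(p - 2) / (p - 1)) * (μ / 2 * s) := by
          rw [Real.mul_rpow hA0.le hs.le, hc]
          have : s ^ (γ - 1) = s ^ (-(p - 2) / (p - 1)) * s := by
            rw [← Real.rpow_add_one hs.ne']
            congr 1
            rw [hγ]; field_simp; ring
          rw [this]; ring
      _ ≤ _ := mul_le_mul h9 h3 (by positivity) (by positivity)
  have hgrow : ∀ s, 0 < s → s < s0 → c / γ * s ^ γ ≤ C * s ^ κ := by
    intro s hs hs'
    have hmono : MonotoneOn (fun s : ℝ => g (x + s • e) - c / γ * s ^ γ) (Icc 0 s) := by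
      have hd : ∀ r ∈ Icc 0 s, HasDerivAt (fun s : ℝ => g (x + s • e) - c / γ * s ^ γ)
          (⟪gradient g (x + r • e), e⟫ - c * r ^ (γ - 1)) r := by
        intro r hr
        have h1 := hder r (by rw [abs_of_nonneg hr.1]; linarith [hr.2])
        have h2 := (Real.hasDerivAt_rpow_const (x := r) (p := γ) (Or.inr hγ1.le)).const_mul (c / γ)
        refine (h1.sub h2).congr_deriv ?_
        field_simp
      refine monotoneOn_of_deriv_nonneg (convex_Icc 0 s)
        (fun r hr => (hd r hr).continuousAt.continuousWithinAt)
        (fun r hr => (hd r (interior_subset hr)).differentiableAt.differentiableWithinAt) ?_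
      intro r hr
      rw [interior_Icc] at hr
      rw [(hd r ⟨hr.1.le, hr.2.le⟩).deriv]
      linarith [hlow r hr.1 (hr.2.trans hs')]
    have h1 := hmono (left_mem_Icc.2 hs.le) (right_mem_Icc.2 hs.le) hs.le
    simp only [zero_smul, add_zero] at h1
    rw [Real.zero_rpow (by linarith)] at h1
    have h2 := (hball (y := s) (by simpa [abs_of_pos hs] using hs')).2
    have h3 : ‖x + s • e - x‖ = s := by
      rw [add_sub_cancel_left, norm_smul, hen, mul_one, Real.norm_of_nonneg hs.le]
    rw [h3] at h2
    linarith
  have hlim : Tendsto (fun s : ℝ => C * s ^ (κ - γ)) (𝓝[>] 0) (𝓝 0) := by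
    have h1 : ContinuousAt (fun s : ℝ => C * s ^ (κ - γ)) 0 :=
      (Real.continuousAt_rpow_const 0 (κ - γ) (Or.inr (by linarith))).const_mul C
    have h2 := h1.tendsto
    rw [Real.zero_rpow (by linarith), mul_zero] at h2
    exact h2.mono_left nhdsWithin_le_nhds
  have hcon : c / γ ≤ 0 := by
    refine ge_of_tendsto hlim ?_
    filter_upwards [Ioo_mem_nhdsGT hs0] with s hs
    have h1 := hgrow s hs.1 hs.2
    have h2 : s ^ κ = s ^ (κ - γ) * s ^ γ := by
      rw [← Real.rpow_add hs.1]; congr 1; ring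
    rw [h2, ← mul_assoc] at h1
    exact le_of_mul_le_mul_right h1 (Real.rpow_pos_of_pos hs.1 _)
  have : 0 < c / γ := by positivity
  linarith

/-- classical solutions are good at every interior point. -/
theorem good_of_sol {N : ℕ} {p q m M : ℝ} (hp : 2 ≤ p) {lam u : Euc N × ℝ → ℝ} {D : Set (Euc N × ℝ)}
    (hD : IsOpen D) (hlam : ∀ z ∈ D, m ≤ lam z ∧ lam z ≤ M) (hsol : IsDCSol N p q lam u D)
    (hnn : ∀ z ∈ D, 0 ≤ u z) (htd : ∀ z ∈ D, 0 ≤ timeDeriv N u z) (x : Euc N) (t : ℝ) (hz : (x, t) ∈ D) :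
    GoodPt N p q m M (fun x t => u (x, t)) x t (spatialGrad N u (x, t)) (timeDeriv N u (x, t))
      (lam (x, t) * plusPowQ q (u (x, t))) := by
  obtain ⟨h1, h2, h3, h4⟩ := hsol.2 _ hz
  have hev : ∀ᶠ y in 𝓝 x, DifferentiableAt ℝ (fun y => u (y, t)) y := by
    have hc : ContinuousAt (fun y : Euc N => (y, t)) x := by fun_prop
    filter_upwards [hc (hD.mem_nhds hz)] with y hy
    exact (hsol.2 _ hy).1
  have htr : LinearMap.trace ℝ (Euc N) (fderiv ℝ (fun y => ‖gradient (fun y => u (y, t)) y‖ ^ (p - 2) •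
      gradient (fun y => u (y, t)) y) x).toLinearMap =
      timeDeriv N u (x, t) + lam (x, t) * plusPowQ q (u (x, t)) := by
    have : pLap N p u (x, t) = timeDeriv N u (x, t) + lam (x, t) * plusPowQ q (u (x, t)) := by linarith
    exact this
  refine ⟨hnn _ hz, htd _ hz, ?_, ?_, h2.hasDerivAt, ?_, ?_, ?_⟩
  · exact mul_le_mul_of_nonneg_right (hlam _ hz).1 plusPowQ_nonneg
  · exact mul_le_mul_of_nonneg_right (hlam _ hz).2 plusPowQ_nonneg
  · intro ξ
    have := grad_line (g := fun y => u (y, t)) (x := x) (ξ := ξ) (s := 0) (by simpa using h1)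
    simp only [zero_smul, add_zero] at this
    exact this
  · intro ha
    obtain ⟨X, hX, hE⟩ := sol_nd hp (g := fun y => u (y, t)) (x := x) h3 ha
    rw [htr] at hE
    refine ⟨X, fun ξ => ?_, hE⟩
    refine ⟨fun s => ⟪gradient (fun y => u (y, t)) (x + s • ξ), ξ⟫, ?_, ?_, ?_⟩
    · filter_upwards [(tendsto_line x ξ).eventually hev] with s hs
      exact grad_line hs
    · simp only [zero_smul, add_zero]; rfl
    · have h5 : HasDerivAt (fun s : ℝ => x + s • ξ) ξ 0 := by
        have := ((hasDerivAt_id (0:ℝ)).smul_const ξ).const_add x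
        simpa using this
      have h6 : HasFDerivAt (gradient fun y => u (y, t)) X (x + (0:ℝ) • ξ) := by simpa using hX
      have h7 := (h6.comp_hasDerivAt 0 h5).inner ℝ (hasDerivAt_const (0:ℝ) ξ)
      simpa using h7
  · intro ha C κ hκ hle
    rw [← htr]
    exact sol_dg hp (g := fun y => u (y, t)) hev h3 ha C κ hκ hle


theorem SecondData.scale {g : ℝ → ℝ} {b c : ℝ} (h : SecondData g b c) (η : ℝ) (k : ℝ) :
    SecondData (fun s => g (η * s) / k) (η * b / k) (η ^ 2 * c / k) := by
  obtain ⟨g', h1, h2, h3⟩ := h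
  have hl : ∀ s : ℝ, HasDerivAt (fun s : ℝ => η * s) η s := fun s => by
    simpa using (hasDerivAt_id s).const_mul η
  have ht : Tendsto (fun s : ℝ => η * s) (𝓝 0) (𝓝 0) := by
    have : Continuous (fun s : ℝ => η * s) := by fun_prop
    simpa using this.tendsto 0
  refine ⟨fun s => η * g' (η * s) / k, ?_, ?_, ?_⟩
  · filter_upwards [ht.eventually h1] with s hs
    have := (hs.comp s (hl s)).div_const k
    refine this.congr_deriv ?_
    ring
  · simp [h2]
  · have h4 : HasDerivAt g' c (η * 0) := by simpa using h3
    have := ((h4.comp 0 (hl 0)).const_mul η).div_const k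
    refine this.congr_deriv ?_
    ring

theorem GoodPt.scale {N : ℕ} {p q m M : ℝ} {v : Euc N → ℝ → ℝ} {x0 x a : Euc N} {t0 t vt f η ζ k : ℝ}
    (hη : 0 < η) (hk : 0 < k) (hζ : ζ = k ^ (1 - q)) (hηp : η ^ p = ζ * k ^ (p - 2))
    (h : GoodPt N p q m M v (x0 + η • x) (t0 + ζ * t) a vt f) :
    GoodPt N p q m M (fun x t => v (x0 + η • x) (t0 + ζ * t) / k) x t ((η / k) • a) (ζ / k * vt)
      (ζ / k * f) := by
  have hζ0 : 0 < ζ := by rw [hζ]; positivity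
  have hpp : plusPowQ q (v (x0 + η • x) (t0 + ζ * t) / k) =
      ζ / k * plusPowQ q (v (x0 + η • x) (t0 + ζ * t)) := by
    by_cases hv : 0 < v (x0 + η • x) (t0 + ζ * t)
    · rw [plusPowQ_eq hv, plusPowQ_eq (by positivity), Real.div_rpow hv.le hk.le, hζ,
        Real.rpow_sub hk, Real.rpow_one]
      field_simp
    · have hv2 : ¬ 0 < v (x0 + η • x) (t0 + ζ * t) / k := by
        push Not at hv ⊢
        exact div_nonpos_of_nonpos_of_nonneg hv hk.le
      simp only [plusPowQ, if_neg hv, if_neg hv2, mul_zero]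
  have hline : ∀ (ξ : Euc N) (s : ℝ), x0 + η • (x + s • ξ) = x0 + η • x + (η * s) • ξ := by
    intro ξ s
    rw [smul_add, smul_smul, add_assoc]
  have hζk : 0 < ζ / k := by positivity
  refine ⟨div_nonneg h.nonneg hk.le, mul_nonneg hζk.le h.vt_nonneg, ?_, ?_, ?_, ?_, ?_, ?_⟩
  · rw [hpp]
    have := mul_le_mul_of_nonneg_left h.f_lo hζk.le
    linarith
  · rw [hpp]
    have := mul_le_mul_of_nonneg_left h.f_hi hζk.le
    linarith
  · have hl : HasDerivAt (fun s : ℝ => t0 + ζ * s) ζ t := by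
      simpa using ((hasDerivAt_id t).const_mul ζ).const_add t0
    refine ((h.ht.comp t hl).div_const k).congr_deriv ?_
    ring
  · intro ξ
    simp only [hline]
    have hl : HasDerivAt (fun s : ℝ => η * s) η 0 := by
      simpa using (hasDerivAt_id (0:ℝ)).const_mul η
    have h1 : HasDerivAt (fun s : ℝ => v (x0 + η • x + s • ξ) (t0 + ζ * t)) ⟪a, ξ⟫ (η * 0) := by
      rw [mul_zero]; exact h.hx ξ
    refine ((h1.comp 0 hl).div_const k).congr_deriv ?_
    rw [real_inner_smul_left]; ring
  · intro ha
    have ha' : a ≠ 0 ∨ p = 2 := by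
      rcases ha with ha | ha
      · left
        rintro rfl
        simp at ha
      · exact Or.inr ha
    obtain ⟨X, hX, hE⟩ := h.nd ha'
    refine ⟨(η ^ 2 / k) • X, fun ξ => ?_, ?_⟩
    · simp only [hline]
      have := (hX ξ).scale η k
      have e1 : ⟪(η / k) • a, ξ⟫ = η * ⟪a, ξ⟫ / k := by rw [real_inner_smul_left]; ring
      have e2 : ⟪((η ^ 2 / k) • X) ξ, ξ⟫ = η ^ 2 * ⟪X ξ, ξ⟫ / k := by
        rw [smul_apply, real_inner_smul_left]; ring
      rw [e1, e2]
      exact this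
    · have hr : 0 < η / k := by positivity
      have e0 : ‖(η / k) • a‖ = η / k * ‖a‖ := by rw [norm_smul, Real.norm_of_nonneg hr.le]
      have e1 : ‖(η / k) • a‖⁻¹ • (η / k) • a = ‖a‖⁻¹ • a := by
        rw [e0, smul_smul]
        congr 1
        rw [mul_inv]; field_simp
      have e2 : LinearMap.trace ℝ (Euc N) ((η ^ 2 / k) • X).toLinearMap =
          η ^ 2 / k * LinearMap.trace ℝ (Euc N) X.toLinearMap := by
        rw [ContinuousLinearMap.toLinearMap_smul, map_smul, smul_eq_mul]
      rw [e1, e2, e0, Real.mul_rpow hr.le (norm_nonneg _), smul_apply,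
        real_inner_smul_left, ← mul_add, ← hE]
      have e3 : (η / k) ^ (p - 2) * (η ^ 2 / k) = ζ / k := by
        rw [Real.div_rpow hη.le hk.le]
        have : η ^ (p - 2) * η ^ 2 = η ^ p := by
          rw [← Real.rpow_natCast η 2, ← Real.rpow_add hη]
          congr 1; push_cast; ring
        calc _ = (η ^ (p - 2) * η ^ 2) / (k ^ (p - 2) * k) := by field_simp
          _ = _ := by rw [this, hηp]; field_simp
      rw [← e3]
      ring
  · intro ha C κ hκ hev
    have ha' : a = 0 := by
      have hr : η / k ≠ 0 := by positivity
      simpa [hr] using ha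
    have := h.dg ha' (k * C * η⁻¹ ^ κ) κ hκ (by
      have hc : Tendsto (fun Y : Euc N => η⁻¹ • (Y - x0)) (𝓝 (x0 + η • x)) (𝓝 x) := by
        have h1 : Continuous (fun Y : Euc N => η⁻¹ • (Y - x0)) := by fun_prop
        have h2 := h1.tendsto (x0 + η • x)
        rwa [add_sub_cancel_left, smul_smul, inv_mul_cancel₀ hη.ne', one_smul] at h2
      filter_upwards [hc.eventually hev] with Y hY
      rw [smul_smul, mul_inv_cancel₀ hη.ne', one_smul, add_sub_cancel] at hY
      have e : ‖η⁻¹ • (Y - x0) - x‖ = η⁻¹ * ‖Y - (x0 + η • x)‖ := by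
        rw [← Real.norm_of_nonneg (inv_pos.2 hη).le, ← norm_smul, Real.norm_of_nonneg (inv_pos.2 hη).le]
        congr 1
        rw [← sub_sub, smul_sub η⁻¹ (Y - x0), smul_smul, inv_mul_cancel₀ hη.ne', one_smul]
      rw [e, Real.mul_rpow (inv_pos.2 hη).le (norm_nonneg _), div_le_iff₀ hk] at hY
      refine hY.trans (le_of_eq ?_)
      field_simp)
    rw [← mul_add]
    exact mul_nonpos_of_nonneg_of_nonpos hζk.le this

theorem reg_of_good {N : ℕ} {p q m M : ℝ} {v : Euc N → ℝ → ℝ} {S : Set (Euc N)}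
    (hgood : ∀ x ∈ S, ∀ t ∈ Icc (-1 : ℝ) 0, ∃ a vt f, GoodPt N p q m M v x t a vt f)
    (hcont : ContinuousOn (fun z : Euc N × ℝ => v z.1 z.2) (S ×ˢ Icc (-1 : ℝ) 0)) :
    Reg N p q m M v S := by
  refine ⟨hgood, hcont, ?_⟩
  intro x hx
  have hmono : MonotoneOn (fun t => v x t) (Icc (-1 : ℝ) 0) := by
    refine monotoneOn_of_deriv_nonneg (convex_Icc _ _) ?_ ?_ ?_
    · intro t ht
      obtain ⟨a, vt, f, h⟩ := hgood x hx t ht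
      exact h.ht.continuousAt.continuousWithinAt
    · intro t ht
      obtain ⟨a, vt, f, h⟩ := hgood x hx t (interior_subset ht)
      exact h.ht.differentiableAt.differentiableWithinAt
    · intro t ht
      obtain ⟨a, vt, f, h⟩ := hgood x hx t (interior_subset ht)
      rw [h.ht.deriv]
      exact h.vt_nonneg
  intro s hs t ht hst
  exact hmono hs ht hst

/-- nondegeneracy at points of the closure of the positivity set. -/
theorem nondeg_closure {N : ℕ} {p q m M c : ℝ}
    (hnd : ∀ (v : Euc N → ℝ → ℝ) (x1 : Euc N) (t1 ρ : ℝ), 0 < ρ →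
      (∀ x ∈ closedBall x1 ρ, ∃ a vt f, GoodPt N p q m M v x t1 a vt f) →
      ContinuousOn (fun x => v x t1) (closedBall x1 ρ) → 0 < v x1 t1 →
      ∃ y ∈ closedBall x1 ρ, c * ρ ^ (p / (p - 1 - q)) ≤ v y t1)
    {u : Euc N × ℝ → ℝ} {U : Set (Euc N)} {I : Set ℝ} (hI : IsOpen I) (hU : IsOpen U)
    (hcont : ContinuousOn u (U ×ˢ I))
    (hgood : ∀ x ∈ U, ∀ t ∈ I, ∃ a vt f, GoodPt N p q m M (fun x t => u (x, t)) x t a vt f)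
    {x0 : Euc N} {t0 ρ : ℝ} (hρ : 0 < ρ) (hball : closedBall x0 (2 * ρ) ⊆ U) (ht0 : t0 ∈ I)
    (hcl : (x0, t0) ∈ closure {z ∈ U ×ˢ I | 0 < u z}) :
    ∃ y ∈ closedBall x0 (2 * ρ), c * ρ ^ (p / (p - 1 - q)) ≤ u (y, t0) := by
  by_contra hneg
  push Not at hneg
  have htube : ∀ᶠ t in 𝓝 t0, ∀ y ∈ closedBall x0 (2 * ρ), u (y, t) < c * ρ ^ (p / (p - 1 - q)) := by
    refine (isCompact_closedBall x0 (2 * ρ)).eventually_forall_of_forall_eventually ?_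
    intro y hy
    have h1 : ContinuousAt u (y, t0) :=
      hcont.continuousAt ((hU.prod hI).mem_nhds ⟨hball hy, ht0⟩)
    have h2 : ContinuousAt (fun z : ℝ × Euc N => (z.2, z.1)) (t0, y) := by fun_prop
    have h3 : Tendsto (fun z : ℝ × Euc N => u (z.2, z.1)) (𝓝 (t0, y)) (𝓝 (u (y, t0))) :=
      Tendsto.comp (g := u) h1 h2
    exact h3.eventually_lt_const (hneg y hy)
  have h1 : ∀ᶠ z : Euc N × ℝ in 𝓝 (x0, t0), z.1 ∈ ball x0 ρ ∧
      ∀ y ∈ closedBall x0 (2 * ρ), u (y, z.2) < c * ρ ^ (p / (p - 1 - q)) := by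
    refine Eventually.and ?_ ?_
    · exact continuousAt_fst.eventually (ball_mem_nhds x0 hρ)
    · exact (continuous_snd.tendsto (x0, t0)).eventually htube
  obtain ⟨⟨x', t'⟩, hz, hpos⟩ := (mem_closure_iff_frequently.1 hcl).and_eventually h1 |>.exists
  obtain ⟨⟨hx'U, ht'⟩, hu⟩ := hz
  obtain ⟨hx', hlt⟩ := hpos
  simp only at hx'U ht' hx' hlt
  have hsub : closedBall x' ρ ⊆ closedBall x0 (2 * ρ) := by
    apply closedBall_subset_closedBall'
    rw [mem_ball] at hx'; linarith
  obtain ⟨y, hy, hge⟩ := hnd (fun x t => u (x, t)) x' t' ρ hρ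
    (fun x hx => hgood x (hball (hsub hx)) t' ht')
    (by
      have h2 : ContinuousOn (fun x : Euc N => (x, t')) (closedBall x' ρ) := by fun_prop
      exact hcont.comp h2 (fun x hx => ⟨hball (hsub hx), ht'⟩)) hu
  have := hlt y (hsub hy)
  linarith

set_option maxHeartbeats 1000000 in
/-- **Corollary 4.3 (Porosity of the time-slices of the free boundary).** -/
theorem free_boundary_slices_porous
    (N : ℕ) (hN : 1 ≤ N) (p q m M : ℝ)
    (hp : 2 ≤ p) (hq0 : 0 ≤ q) (hq1 : q < 1) (hm : 0 < m) (hmM : m ≤ M) :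
    ∃ δ : ℝ, 0 < δ ∧ δ ≤ 1 ∧
      ∀ u : Euc N × ℝ → ℝ, memJ N p q m M u →
      ∀ t0 ∈ Ioc (-((1 / 2 : ℝ) ^ thetaV p q)) ((1 / 2 : ℝ) ^ thetaV p q),
      ∀ E : Set (Euc N),
        E = {x : Euc N | (x, t0) ∈ frontier {z ∈ cylQ N (thetaV p q) 1 (0, 0) | 0 < u z} ∩
              closure (cylQ N (thetaV p q) (1 / 2) (0, 0))} →
        ∃ R : ℝ, 0 < R ∧
          ∀ x0 ∈ E, ∀ r : ℝ, 0 < r → r < R →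
            ∃ x' : Euc N, ball x' (δ * r) ⊆ ball x0 r \ E := by

  have hpq : 0 < p - 1 - q := by linarith
  obtain ⟨C, L1, hC, hL1, HS⟩ := S12 hN hp hq0 hq1 hm hmM
  obtain ⟨c, hc, hnd⟩ := nondeg hN (M := M) hp hq0 hq1 hm
  set α := p / (p - 1 - q) with hα
  have hα0 : 0 < α := by positivity
  obtain ⟨C3, hC3⟩ := exists_large (b := (C + 1) / c) hα0
  set L := max (2 * L1 + 8) (4 * C3) with hL
  have hLa : 2 * L1 + 8 ≤ L := le_max_left _ _
  have hLb : 4 * C3 ≤ L := le_max_right _ _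
  have hL0 : 0 < L := by linarith
  set θ := thetaV p q with hθ
  have hθ0 : 0 < θ := by
    rw [hθ, thetaV]
    have : 0 < 1 - q := by linarith
    positivity
  have hθα : θ = α * (1 - q) := by rw [hθ, thetaV, hα]; ring
  have hhalf : (1 / 2 : ℝ) ^ θ < 1 := Real.rpow_lt_one (by norm_num) (by norm_num) hθ0
  have hgap : 0 < 1 - (1 / 2 : ℝ) ^ θ := by linarith
  refine ⟨1 / L, by positivity, ?_, ?_⟩
  · rw [div_le_one hL0]; linarith
  intro u hu t0 ht0 E hE
  obtain ⟨lam, hlam, hsol, hb, htd, -⟩ := hu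
  have hQ : cylQ N θ 1 (0, 0) = ball (0 : Euc N) 1 ×ˢ Ioo (-1 : ℝ) 1 := by
    simp [cylQ]
  rw [hQ] at hlam hsol hb htd hE
  have hDo : IsOpen (ball (0 : Euc N) 1 ×ˢ Ioo (-1 : ℝ) 1) := isOpen_ball.prod isOpen_Ioo
  have hgood : ∀ x ∈ ball (0 : Euc N) 1, ∀ t ∈ Ioo (-1 : ℝ) 1, ∃ a vt f,
      GoodPt N p q m M (fun x t => u (x, t)) x t a vt f := by
    intro x hx t ht
    exact ⟨_, _, _, good_of_sol hp hDo hlam hsol (fun z hz => (hb z hz).1) htd x t ⟨hx, ht⟩⟩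
  have ht01 : t0 ∈ Ioo (-1 : ℝ) 1 := ⟨by linarith [ht0.1], by linarith [ht0.2]⟩
  have hEhalf : ∀ x ∈ E, ‖x‖ ≤ 1 / 2 := by
    intro x hx
    rw [hE] at hx
    have h1 := hx.2
    rw [cylQ, closure_prod_eq] at h1
    have h2 := closure_ball_subset_closedBall h1.1
    simpa using h2
  have hEball : ∀ x ∈ E, x ∈ ball (0 : Euc N) 1 := by
    intro x hx
    rw [mem_ball_zero_iff]
    linarith [hEhalf x hx]
  have hEzero : ∀ x ∈ E, u (x, t0) = 0 := by
    intro x hx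
    have hxD : (x, t0) ∈ ball (0 : Euc N) 1 ×ˢ Ioo (-1 : ℝ) 1 := ⟨hEball x hx, ht01⟩
    refine le_antisymm ?_ (hb _ hxD).1
    by_contra hpos
    push Not at hpos
    rw [hE] at hx
    have hop : IsOpen {z ∈ ball (0 : Euc N) 1 ×ˢ Ioo (-1 : ℝ) 1 | 0 < u z} :=
      hsol.1.isOpen_inter_preimage hDo isOpen_Ioi
    have h1 := hx.1
    rw [hop.frontier_eq] at h1
    exact h1.2 ⟨hxD, hpos⟩
  refine ⟨min (1 / 4) ((1 - (1 / 2 : ℝ) ^ θ) ^ (1 / θ)), by positivity, ?_⟩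
  intro x0 hx0 r hr hrR
  have hr4 : r < 1 / 4 := hrR.trans_le (min_le_left _ _)
  have hrθ : r ^ θ < 1 - (1 / 2 : ℝ) ^ θ := by
    have h1 : r < (1 - (1 / 2 : ℝ) ^ θ) ^ (1 / θ) := hrR.trans_le (min_le_right _ _)
    have h2 := Real.rpow_lt_rpow hr.le h1 hθ0
    rwa [← Real.rpow_mul hgap.le, one_div_mul_cancel hθ0.ne', Real.rpow_one] at h2
  by_contra hneg
  push Not at hneg
  set η := 1 / L * r with hη
  have hη0 : 0 < η := by positivity
  have hηL : η * L = r := by rw [hη]; field_simp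
  have hηr : η ≤ r := by nlinarith
  set k := η ^ α with hk
  have hk0 : 0 < k := by positivity
  set ζ := k ^ (1 - q) with hζ
  have hζθ : ζ = η ^ θ := by rw [hζ, hk, ← Real.rpow_mul hη0.le, ← hθα]
  have hηp : η ^ p = ζ * k ^ (p - 2) := by
    rw [hζ, ← Real.rpow_add hk0, hk, ← Real.rpow_mul hη0.le]
    congr 1
    rw [hα]; field_simp; ring
  have hζ0 : 0 < ζ := by positivity
  have hζr : ζ < 1 - (1 / 2 : ℝ) ^ θ := by
    rw [hζθ]
    exact (Real.rpow_le_rpow hη0.le hηr hθ0.le).trans_lt hrθ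
  -- the rescaled function
  set w : Euc N → ℝ → ℝ := fun x t => u (x0 + η • x, t0 + ζ * t) / k with hw
  have hmemU : ∀ x : Euc N, ‖x‖ ≤ L → x0 + η • x ∈ ball (0 : Euc N) 1 := by
    intro x hx
    rw [mem_ball_zero_iff]
    have h1 : ‖η • x‖ ≤ r := by
      rw [norm_smul, Real.norm_of_nonneg hη0.le, ← hηL]
      exact mul_le_mul_of_nonneg_left hx hη0.le
    have := norm_add_le x0 (η • x)
    linarith [hEhalf x0 hx0]
  have hmemI : ∀ t ∈ Icc (-1 : ℝ) 0, t0 + ζ * t ∈ Ioo (-1 : ℝ) 1 := by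
    intro t ht
    have h1 : ζ * (-1) ≤ ζ * t := mul_le_mul_of_nonneg_left ht.1 hζ0.le
    have h2 : ζ * t ≤ ζ * 0 := mul_le_mul_of_nonneg_left ht.2 hζ0.le
    constructor
    · linarith [ht0.1]
    · linarith [ht01.2]
  have hreg : Reg N p q m M w (closedBall 0 L) := by
    apply reg_of_good
    · intro x hx t ht
      obtain ⟨a, vt, f, h⟩ := hgood _ (hmemU x (by simpa using hx)) _ (hmemI t ht)
      exact ⟨_, _, _, h.scale hη0 hk0 hζ hηp⟩
    · simp only [hw]
      apply ContinuousOn.div_const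
      have h1 : ContinuousOn (fun z : Euc N × ℝ => (x0 + η • z.1, t0 + ζ * z.2))
          (closedBall 0 L ×ˢ Icc (-1 : ℝ) 0) := by fun_prop
      exact hsol.1.comp h1 (fun z hz => ⟨hmemU z.1 (by simpa using hz.1), hmemI z.2 hz.2⟩)
  have hholes : ∀ x : Euc N, ‖x‖ ≤ L - 1 → ∃ y ∈ ball x 1, w y 0 = 0 := by
    intro x hx
    have h1 := hneg (x0 + η • x)
    rw [not_subset] at h1
    obtain ⟨z, hz, hzn⟩ := h1
    have hzE : z ∈ E := by
      by_contra hzE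
      apply hzn
      refine ⟨?_, hzE⟩
      rw [mem_ball, dist_eq_norm] at hz ⊢
      have h2 : z - x0 = (z - (x0 + η • x)) + η • x := by abel
      rw [h2]
      have h3 : ‖η • x‖ ≤ η * (L - 1) := by
        rw [norm_smul, Real.norm_of_nonneg hη0.le]
        exact mul_le_mul_of_nonneg_left hx hη0.le
      have := norm_add_le (z - (x0 + η • x)) (η • x)
      linarith
    refine ⟨η⁻¹ • (z - x0), ?_, ?_⟩
    · rw [mem_ball, dist_eq_norm] at hz ⊢
      have h2 : η⁻¹ • (z - x0) - x = η⁻¹ • (z - (x0 + η • x)) := by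
        rw [← sub_sub, smul_sub η⁻¹ (z - x0), smul_smul, inv_mul_cancel₀ hη0.ne', one_smul]
      rw [h2, norm_smul, Real.norm_of_nonneg (inv_pos.2 hη0).le, inv_mul_lt_iff₀ hη0, mul_one]
      exact hz
    · simp only [hw]
      rw [smul_smul, mul_inv_cancel₀ hη0.ne', one_smul, add_sub_cancel, mul_zero, add_zero,
        hEzero z hzE, zero_div]
  obtain ⟨y, hy, hge⟩ := nondeg_closure hnd isOpen_Ioo isOpen_ball hsol.1 hgood (x0 := x0) (t0 := t0)
    (ρ := r / 4) (by positivity)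
    (by
      intro x hx
      rw [mem_closedBall, dist_eq_norm] at hx
      rw [mem_ball_zero_iff]
      have h1 := norm_add_le x0 (x - x0)
      rw [add_sub_cancel] at h1
      linarith [hEhalf x0 hx0]) ht01
    (by
      have h1 := hx0
      rw [hE] at h1
      exact frontier_subset_closure h1.1)
  set x1 : Euc N := η⁻¹ • (y - x0) with hx1
  have hx1n : ‖x1‖ ≤ L / 2 := by
    rw [mem_closedBall, dist_eq_norm] at hy
    rw [hx1, norm_smul, Real.norm_of_nonneg (inv_pos.2 hη0).le, inv_mul_le_iff₀ hη0]
    linarith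
  have hw1 : w x1 0 = u (y, t0) / k := by
    simp only [hw]
    rw [hx1, smul_smul, mul_inv_cancel₀ hη0.ne', one_smul, add_sub_cancel, mul_zero, add_zero]
  have hle := HS w x1 (hreg.subset (by
      intro x hx
      rw [mem_closedBall, dist_eq_norm] at hx
      rw [mem_closedBall_zero_iff]
      have h1 := norm_add_le x1 (x - x1)
      rw [add_sub_cancel] at h1
      linarith)) (by
      intro x hx
      rw [mem_closedBall, dist_eq_norm] at hx
      apply hholes
      have h1 := norm_add_le x1 (x - x1)
      rw [add_sub_cancel] at h1
      linarith)
  rw [hw1, div_le_iff₀ hk0] at hle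
  have h1 : (r / 4) ^ α = (L / 4) ^ α * k := by
    rw [hk, ← Real.mul_rpow (by positivity) hη0.le]
    congr 1
    rw [← hηL]; ring
  rw [h1, ← mul_assoc] at hge
  have h2 := hC3 (L / 4) (by linarith)
  rw [div_le_iff₀ hc] at h2
  have h3 : c * (L / 4) ^ α ≤ C := le_of_mul_le_mul_right (hge.trans hle) hk0
  linarith
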